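/- Let P1 and P2 be n×n skew-symmetric matrix pencils such that orbᶜ(P1) covers orbᶜ(P2). Then there exist an integer p, p×(n−p) matrix pencils W1 and W2, and permutation matrices Q1 and Q2 such that Q_iᵀ P_i' Q_i = [[0, W_i], [−W_iᵀ, 0]] for skew-symmetric pencils P_i' congruent to P_i (i = 1, 2), and orbᵉ(W1) covers orbᵉ(W2). -/

import Mathlib

/-!
Basic framework: a complex `m × n` matrix pencil `A - λ B` is formalized as the
pair `(A, B)` of matrices.  We define strict equivalence, congruence,
skew-symmetry, orbits, direct sums, and the cover relations for the orbit
closure hierarchies (in the Euclidean topology).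
-/

open Matrix

noncomputable section

/-- An `m × n` complex matrix pencil `A - λ B`, formalized as the pair `(A, B)`. -/
abbrev Pencil (m n : ℕ) : Type :=
  Matrix (Fin m) (Fin n) ℂ × Matrix (Fin m) (Fin n) ℂ

namespace Pencil

/-- Strict equivalence of matrix pencils: `Q⁻¹ * A * R = C` and `Q⁻¹ * B * R = D`
for some invertible `Q`, `R`. -/
def StrictEquiv {m n : ℕ} (P Q : Pencil m n) : Prop :=
  ∃ (S : Matrix (Fin m) (Fin m) ℂ) (R : Matrix (Fin n) (Fin n) ℂ),
    IsUnit S ∧ IsUnit R ∧ S⁻¹ * P.1 * R = Q.1 ∧ S⁻¹ * P.2 * R = Q.2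

/-- The strict-equivalence orbit of a pencil. -/
def orbE {m n : ℕ} (P : Pencil m n) : Set (Pencil m n) :=
  {Q | StrictEquiv P Q}

/-- A pencil `A - λ B` is skew-symmetric if `Aᵀ = -A` and `Bᵀ = -B`. -/
def IsSkew {n : ℕ} (P : Pencil n n) : Prop :=
  P.1ᵀ = -P.1 ∧ P.2ᵀ = -P.2

/-- Congruence of (square) matrix pencils: `Sᵀ * A * S = C` and `Sᵀ * B * S = D`
for some invertible `S`. -/
def Congruent {n : ℕ} (P Q : Pencil n n) : Prop :=
  ∃ S : Matrix (Fin n) (Fin n) ℂ,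
    IsUnit S ∧ Sᵀ * P.1 * S = Q.1 ∧ Sᵀ * P.2 * S = Q.2

/-- The congruence orbit of a pencil. -/
def orbC {n : ℕ} (P : Pencil n n) : Set (Pencil n n) :=
  {Q | Congruent P Q}

/-- Direct (block-diagonal) sum of two pencils. -/
def dsum {m n p q : ℕ} (P : Pencil m n) (Q : Pencil p q) : Pencil (m + p) (n + q) :=
  ((fromBlocks P.1 0 0 Q.1).submatrix finSumFinEquiv.symm finSumFinEquiv.symm,
   (fromBlocks P.2 0 0 Q.2).submatrix finSumFinEquiv.symm finSumFinEquiv.symm)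

/-- Transport a pencil along equalities of its dimensions. -/
def cast {m n m' n' : ℕ} (hm : m = m') (hn : n = n') (P : Pencil m n) : Pencil m' n' :=
  (P.1.submatrix (finCongr hm.symm) (finCongr hn.symm),
   P.2.submatrix (finCongr hm.symm) (finCongr hn.symm))

/-- `orbE P1` covers `orbE P2` in the closure hierarchy of strict-equivalence
orbits: `P1` is not strictly equivalent to `P2`, `orbE P2 ⊆ closure (orbE P1)`,
and there is no intermediate orbit strictly between them. -/
def CoversE {m n : ℕ} (P1 P2 : Pencil m n) : Prop :=
  ¬ StrictEquiv P1 P2 ∧ orbE P2 ⊆ closure (orbE P1) ∧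
    ¬ ∃ P : Pencil m n, ¬ StrictEquiv P P1 ∧ ¬ StrictEquiv P P2 ∧
        orbE P ⊆ closure (orbE P1) ∧ orbE P2 ⊆ closure (orbE P)

/-- `orbC P1` covers `orbC P2` in the closure hierarchy of congruence orbits of
skew-symmetric pencils: `P1` is not congruent to `P2`,
`orbC P2 ⊆ closure (orbC P1)`, and there is no congruence orbit of a
skew-symmetric pencil strictly between them. -/
def CoversC {n : ℕ} (P1 P2 : Pencil n n) : Prop :=
  ¬ Congruent P1 P2 ∧ orbC P2 ⊆ closure (orbC P1) ∧
    ¬ ∃ P : Pencil n n, IsSkew P ∧ ¬ Congruent P P1 ∧ ¬ Congruent P P2 ∧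
        orbC P ⊆ closure (orbC P1) ∧ orbC P2 ⊆ closure (orbC P)

end Pencil

/-! Canonical building blocks. -/

/-- The `k × k` Jordan block `J_k(μ)`. -/
def Jmat (k : ℕ) (μ : ℂ) : Matrix (Fin k) (Fin k) ℂ :=
  Matrix.of fun i j => if (j : ℕ) = (i : ℕ) then μ else if (j : ℕ) = (i : ℕ) + 1 then 1 else 0

/-- The `k × (k+1)` matrix `F_k` with ones on the superdiagonal. -/
def Fmat (k : ℕ) : Matrix (Fin k) (Fin (k + 1)) ℂ :=
  Matrix.of fun i j => if (j : ℕ) = (i : ℕ) + 1 then 1 else 0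

/-- The `k × (k+1)` matrix `G_k` with ones on the diagonal. -/
def Gmat (k : ℕ) : Matrix (Fin k) (Fin (k + 1)) ℂ :=
  Matrix.of fun i j => if (j : ℕ) = (i : ℕ) then 1 else 0

/-- The Kronecker block `E_k(μ) = J_k(μ) - λ I_k`. -/
def Eblk (k : ℕ) (μ : ℂ) : Pencil k k := (Jmat k μ, 1)

/-- The Kronecker block `E_k(∞) = I_k - λ J_k(0)`. -/
def EInfblk (k : ℕ) : Pencil k k := (1, Jmat k 0)

/-- The Kronecker block `L_k = F_k - λ G_k`. -/
def Lblk (k : ℕ) : Pencil k (k + 1) := (Fmat k, Gmat k)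

/-- The Kronecker block `L_kᵀ = F_kᵀ - λ G_kᵀ`. -/
def LTblk (k : ℕ) : Pencil (k + 1) k := ((Fmat k)ᵀ, (Gmat k)ᵀ)

/-- The skew-symmetric matrix `[[0, X], [-Xᵀ, 0]]`. -/
def skewPair {p q : ℕ} (X : Matrix (Fin p) (Fin q) ℂ) :
    Matrix (Fin (p + q)) (Fin (p + q)) ℂ :=
  (fromBlocks 0 X (-Xᵀ) 0).submatrix finSumFinEquiv.symm finSumFinEquiv.symm

/-- The skew-symmetric canonical block `H_h(μ)` (size `2h × 2h`). -/
def Hblk (h : ℕ) (μ : ℂ) : Pencil (h + h) (h + h) :=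
  (skewPair (Jmat h μ), skewPair (1 : Matrix (Fin h) (Fin h) ℂ))

/-- The skew-symmetric canonical block `K_k = H_k(∞)` (size `2k × 2k`). -/
def Kblk (k : ℕ) : Pencil (k + k) (k + k) :=
  (skewPair (1 : Matrix (Fin k) (Fin k) ℂ), skewPair (Jmat k 0))

/-- The skew-symmetric canonical block `M_m` (size `(2m+1) × (2m+1)`). -/
def Mblk (m : ℕ) : Pencil (m + (m + 1)) (m + (m + 1)) :=
  (skewPair (Fmat m), skewPair (Gmat m))

/-- The permutation matrix of `σ`. -/
def permMatrix {n : ℕ} (σ : Equiv.Perm (Fin n)) : Matrix (Fin n) (Fin n) ℂ :=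
  Matrix.of fun i j => if σ i = j then 1 else 0

namespace Pencil

/-- A pair of linear maps with common source and target: a pencil without chosen bases. -/
abbrev LPair (V U : Type) [AddCommGroup V] [Module ℂ V] [AddCommGroup U] [Module ℂ U] : Type :=
  (V →ₗ[ℂ] U) × (V →ₗ[ℂ] U)

section LPair

variable {V U V' U' V'' U'' W Z : Type}
  [AddCommGroup V] [Module ℂ V] [AddCommGroup U] [Module ℂ U]
  [AddCommGroup V'] [Module ℂ V'] [AddCommGroup U'] [Module ℂ U']
  [AddCommGroup V''] [Module ℂ V''] [AddCommGroup U''] [Module ℂ U'']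
  [AddCommGroup W] [Module ℂ W] [AddCommGroup Z] [Module ℂ Z]

/-- Isomorphism of pairs of linear maps. -/
def LIso (f : LPair V U) (g : LPair V' U') : Prop :=
  ∃ (e : V ≃ₗ[ℂ] V') (e' : U ≃ₗ[ℂ] U'),
    (∀ x, e' (f.1 x) = g.1 (e x)) ∧ ∀ x, e' (f.2 x) = g.2 (e x)

/-- Direct sum of pairs of linear maps. -/
def LPair.sum (f : LPair V U) (g : LPair V' U') : LPair (V × V') (U × U') :=
  (f.1.prodMap g.1, f.2.prodMap g.2)

theorem LIso.refl (f : LPair V U) : LIso f f :=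
  ⟨.refl _ _, .refl _ _, fun _ => rfl, fun _ => rfl⟩

theorem LIso.symm {f : LPair V U} {g : LPair V' U'} (h : LIso f g) : LIso g f := by
  obtain ⟨e, e', h1, h2⟩ := h
  refine ⟨e.symm, e'.symm, fun x => ?_, fun x => ?_⟩
  · rw [LinearEquiv.symm_apply_eq, h1, LinearEquiv.apply_symm_apply]
  · rw [LinearEquiv.symm_apply_eq, h2, LinearEquiv.apply_symm_apply]

theorem LIso.trans {f : LPair V U} {g : LPair V' U'} {k : LPair V'' U''}
    (h : LIso f g) (h' : LIso g k) : LIso f k := by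
  obtain ⟨e, e', h1, h2⟩ := h
  obtain ⟨d, d', k1, k2⟩ := h'
  exact ⟨e.trans d, e'.trans d', fun x => by simp [h1, k1], fun x => by simp [h2, k2]⟩

theorem LIso.sum_congr {f : LPair V U} {g : LPair V' U'} {k : LPair V'' U''} {l : LPair W Z}
    (h : LIso f g) (h' : LIso k l) : LIso (f.sum k) (g.sum l) := by
  obtain ⟨e, e', h1, h2⟩ := h
  obtain ⟨d, d', k1, k2⟩ := h'
  exact ⟨e.prodCongr d, e'.prodCongr d', fun x => by simp [LPair.sum, h1, k1],
    fun x => by simp [LPair.sum, h2, k2]⟩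

theorem LIso.sum_comm (f : LPair V U) (g : LPair V' U') : LIso (f.sum g) (g.sum f) :=
  ⟨.prodComm _ _ _, .prodComm _ _ _, fun x => by simp [LPair.sum],
    fun x => by simp [LPair.sum]⟩

theorem LIso.sum_assoc (f : LPair V U) (g : LPair V' U') (k : LPair V'' U'') :
    LIso ((f.sum g).sum k) (f.sum (g.sum k)) :=
  ⟨.prodAssoc _ _ _ _, .prodAssoc _ _ _ _, fun x => by simp [LPair.sum],
    fun x => by simp [LPair.sum]⟩

theorem LIso.sum_left_comm (f : LPair V U) (g : LPair V' U') (k : LPair V'' U'') :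
    LIso (f.sum (g.sum k)) (g.sum (f.sum k)) :=
  (LIso.sum_assoc f g k).symm.trans
    (((LIso.sum_comm f g).sum_congr (.refl k)).trans (.sum_assoc g f k))

/-- Pairs on zero spaces are neutral for direct sums. -/
theorem LIso.sum_zero (f : LPair V U) (g : LPair V' U') [Subsingleton V'] [Subsingleton U'] :
    LIso (f.sum g) f := by
  have : Unique V' := ⟨⟨0⟩, fun _ => Subsingleton.elim _ _⟩
  have : Unique U' := ⟨⟨0⟩, fun _ => Subsingleton.elim _ _⟩
  exact ⟨.prodUnique, .prodUnique, fun x => by simp [LPair.sum],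
    fun x => by simp [LPair.sum]⟩

theorem LIso.of_subsingleton (f : LPair V U) (g : LPair V' U') [Subsingleton V] [Subsingleton U]
    [Subsingleton V'] [Subsingleton U'] : LIso f g :=
  ((LIso.sum_comm f g).trans (.sum_zero g f)).symm.trans (.sum_zero f g) |>.symm

end LPair

section Mat

variable {m n m' n' : Type} [Fintype n] [Fintype n']

/-- The pair of linear maps of a pair of matrices. -/
def lin (P : Matrix m n ℂ × Matrix m n ℂ) : LPair (n → ℂ) (m → ℂ) :=
  (P.1.mulVecLin, P.2.mulVecLin)

@[simp] theorem lin_fst_apply (P : Matrix m n ℂ × Matrix m n ℂ) (x : n → ℂ) :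
    (lin P).1 x = P.1 *ᵥ x := rfl

@[simp] theorem lin_snd_apply (P : Matrix m n ℂ × Matrix m n ℂ) (x : n → ℂ) :
    (lin P).2 x = P.2 *ᵥ x := rfl

variable [Fintype m] [Fintype m']

/-- Transpose of a pencil. -/
def tr (P : Matrix m n ℂ × Matrix m n ℂ) : Matrix n m ℂ × Matrix n m ℂ := (P.1ᵀ, P.2ᵀ)

theorem lIso_iff_matrix [DecidableEq m] [DecidableEq n] [DecidableEq m'] [DecidableEq n']
    {P : Matrix m n ℂ × Matrix m n ℂ} {Q : Matrix m' n' ℂ × Matrix m' n' ℂ} :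
    LIso (lin P) (lin Q) ↔
      ∃ (S : Matrix m' m ℂ) (S' : Matrix m m' ℂ) (R : Matrix n' n ℂ) (R' : Matrix n n' ℂ),
        S * S' = 1 ∧ S' * S = 1 ∧ R * R' = 1 ∧ R' * R = 1 ∧
        S * P.1 = Q.1 * R ∧ S * P.2 = Q.2 * R := by
  constructor
  · rintro ⟨e, e', h1, h2⟩
    refine ⟨LinearMap.toMatrix' e'.toLinearMap, LinearMap.toMatrix' e'.symm.toLinearMap,
      LinearMap.toMatrix' e.toLinearMap, LinearMap.toMatrix' e.symm.toLinearMap,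
      ?_, ?_, ?_, ?_, ?_, ?_⟩
    · rw [← LinearMap.toMatrix'_comp]; simp
    · rw [← LinearMap.toMatrix'_comp]; simp
    · rw [← LinearMap.toMatrix'_comp]; simp
    · rw [← LinearMap.toMatrix'_comp]; simp
    · apply Matrix.toLin'.injective
      exact LinearMap.ext fun x => by simpa [Matrix.toLin'_mul] using h1 x
    · apply Matrix.toLin'.injective
      exact LinearMap.ext fun x => by simpa [Matrix.toLin'_mul] using h2 x
  · rintro ⟨S, S', R, R', h1, h2, h3, h4, h5, h6⟩
    refine ⟨Matrix.toLin'OfInv h4 h3, Matrix.toLin'OfInv h2 h1,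
      fun x => ?_, fun x => ?_⟩
    · change S *ᵥ (P.1 *ᵥ x) = Q.1 *ᵥ (R *ᵥ x)
      rw [mulVec_mulVec, h5, mulVec_mulVec]
    · change S *ᵥ (P.2 *ᵥ x) = Q.2 *ᵥ (R *ᵥ x)
      rw [mulVec_mulVec, h6, mulVec_mulVec]

theorem LIso.tr [DecidableEq m] [DecidableEq n] [DecidableEq m'] [DecidableEq n']
    {P : Matrix m n ℂ × Matrix m n ℂ} {Q : Matrix m' n' ℂ × Matrix m' n' ℂ}
    (h : LIso (lin P) (lin Q)) : LIso (lin (Pencil.tr P)) (lin (Pencil.tr Q)) := by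
  apply LIso.symm
  rw [lIso_iff_matrix] at h ⊢
  obtain ⟨S, S', R, R', h1, h2, h3, h4, h5, h6⟩ := h
  refine ⟨Rᵀ, R'ᵀ, Sᵀ, S'ᵀ, ?_, ?_, ?_, ?_, ?_, ?_⟩
  · rw [← transpose_mul, h4, transpose_one]
  · rw [← transpose_mul, h3, transpose_one]
  · rw [← transpose_mul, h2, transpose_one]
  · rw [← transpose_mul, h1, transpose_one]
  · simp only [Pencil.tr]; rw [← transpose_mul, ← h5, transpose_mul]
  · simp only [Pencil.tr]; rw [← transpose_mul, ← h6, transpose_mul]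

end Mat

theorem strictEquiv_iff {m n : ℕ} {P Q : Pencil m n} :
    StrictEquiv P Q ↔ LIso (lin P) (lin Q) := by
  rw [lIso_iff_matrix]
  constructor
  · rintro ⟨S, R, hS, hR, h1, h2⟩
    rw [isUnit_iff_isUnit_det] at hS hR
    refine ⟨S⁻¹, S, R⁻¹, R, ?_, ?_, ?_, ?_, ?_, ?_⟩
    · exact nonsing_inv_mul S hS
    · exact mul_nonsing_inv S hS
    · exact nonsing_inv_mul R hR
    · exact mul_nonsing_inv R hR
    · rw [← h1, Matrix.mul_assoc, mul_nonsing_inv R hR, Matrix.mul_one]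
    · rw [← h2, Matrix.mul_assoc, mul_nonsing_inv R hR, Matrix.mul_one]
  · rintro ⟨S, S', R, R', h1, h2, h3, h4, h5, h6⟩
    refine ⟨S', R', ⟨⟨S', S, h2, h1⟩, rfl⟩, ⟨⟨R', R, h4, h3⟩, rfl⟩, ?_, ?_⟩
    · rw [inv_eq_left_inv h1, h5, Matrix.mul_assoc, h3, Matrix.mul_one]
    · rw [inv_eq_left_inv h1, h6, Matrix.mul_assoc, h3, Matrix.mul_one]

theorem LIso.exists_matrix {V U : Type} [AddCommGroup V] [Module ℂ V] [AddCommGroup U] [Module ℂ U]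
    [FiniteDimensional ℂ V] [FiniteDimensional ℂ U] (f : LPair V U) {m n : ℕ}
    (hm : Module.finrank ℂ U = m) (hn : Module.finrank ℂ V = n) :
    ∃ P : Pencil m n, LIso f (lin P) := by
  let b := Module.finBasisOfFinrankEq ℂ V hn
  let c := Module.finBasisOfFinrankEq ℂ U hm
  refine ⟨(LinearMap.toMatrix b c f.1, LinearMap.toMatrix b c f.2), b.equivFun, c.equivFun,
    fun x => ?_, fun x => ?_⟩
  · exact (LinearMap.toMatrix_mulVec_repr b c f.1 x).symm
  · exact (LinearMap.toMatrix_mulVec_repr b c f.2 x).symm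

theorem LIso.lin_dsum {m n p q : ℕ} (P : Pencil m n) (Q : Pencil p q) :
    LIso (lin (dsum P Q)) ((lin P).sum (lin Q)) := by
  let e (a b : ℕ) : (Fin (a + b) → ℂ) ≃ₗ[ℂ] (Fin a → ℂ) × (Fin b → ℂ) :=
    (LinearEquiv.funCongrLeft ℂ ℂ finSumFinEquiv).trans
      (LinearEquiv.sumArrowLequivProdArrow _ _ ℂ ℂ)
  refine ⟨e n q, e m p, fun x => ?_, fun x => ?_⟩ <;>
  · ext i
    all_goals
      simp [e, LPair.sum, dsum, Matrix.mulVec, dotProduct, LinearEquiv.funCongrLeft,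
        LinearMap.funLeft, ← finSumFinEquiv.sum_comp]

theorem LIso.lin_skewPair {p q : ℕ} (W : Pencil p q) :
    LIso (lin (skewPair W.1, skewPair W.2)) ((lin W).sum (lin (Pencil.tr W))) := by
  let e (a b : ℕ) : (Fin (a + b) → ℂ) ≃ₗ[ℂ] (Fin a → ℂ) × (Fin b → ℂ) :=
    (LinearEquiv.funCongrLeft ℂ ℂ finSumFinEquiv).trans
      (LinearEquiv.sumArrowLequivProdArrow _ _ ℂ ℂ)
  refine ⟨(e p q).trans ((LinearEquiv.prodComm ℂ _ _).trans
      ((LinearEquiv.refl ℂ _).prodCongr (LinearEquiv.neg ℂ))), e p q, fun x => ?_, fun x => ?_⟩ <;>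
  · ext i
    all_goals
      simp [e, LPair.sum, skewPair, Matrix.mulVec, dotProduct, LinearEquiv.funCongrLeft,
        LinearMap.funLeft, ← finSumFinEquiv.sum_comp, Pencil.tr]

section Sqrt
open Polynomial

/-- Modulo a polynomial without zero root, `X` is a square. -/
theorem exists_dvd_sq_sub_X (s : Multiset ℂ) (hs : (0 : ℂ) ∉ s) :
    ∃ f : ℂ[X], (s.map fun a => X - C a).prod ∣ f ^ 2 - X := by
  induction s using Multiset.induction with
  | empty => exact ⟨0, by simp⟩
  | cons a s ih =>
    rw [Multiset.mem_cons, not_or] at hs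
    obtain ⟨f, h, hf⟩ := ih hs.2
    set m : ℂ[X] := (s.map fun a => X - C a).prod
    obtain ⟨g, hg⟩ : ∃ g : ℂ, h.eval a + 2 * f.eval a * g + m.eval a * g ^ 2 = 0 := by
      by_cases hm : m.eval a = 0
      · have h1 : f.eval a ^ 2 = a := by
          have := congrArg (Polynomial.eval a) hf
          simp only [eval_sub, eval_pow, eval_X, eval_mul, hm, zero_mul] at this
          linear_combination this
        have h2 : f.eval a ≠ 0 := fun h0 => hs.1 (by rw [h0] at h1; simpa using h1)
        exact ⟨-h.eval a / (2 * f.eval a), by rw [hm]; field_simp; ring⟩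
      · obtain ⟨d, hd⟩ := IsAlgClosed.exists_pow_nat_eq
          (discrim (m.eval a) (2 * f.eval a) (h.eval a)) (n := 2) (by norm_num)
        obtain ⟨x, hx⟩ := exists_quadratic_eq_zero hm ⟨d, by rw [← hd, sq]⟩
        exact ⟨x, by linear_combination hx⟩
    have : X - C a ∣ h + 2 * f * C g + m * C g ^ 2 := by
      rw [dvd_iff_isRoot, IsRoot]
      simpa using hg
    obtain ⟨k, hk⟩ := this
    refine ⟨f + m * C g, k, ?_⟩
    rw [Multiset.map_cons, Multiset.prod_cons]
    linear_combination hf + m * hk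

/-- Invertible complex matrices have polynomial square roots. -/
theorem exists_aeval_sq_eq {n : ℕ} (T : Matrix (Fin n) (Fin n) ℂ) (hT : IsUnit T) :
    ∃ f : ℂ[X], (aeval T f) ^ 2 = T := by
  have h0 : (0 : ℂ) ∉ T.charpoly.roots := by
    intro h
    rw [mem_roots (Matrix.charpoly_monic T).ne_zero, IsRoot, Matrix.eval_charpoly] at h
    rw [isUnit_iff_isUnit_det, isUnit_iff_ne_zero] at hT
    apply hT
    simp only [map_zero, zero_sub, Matrix.det_neg] at h
    simpa using h
  obtain ⟨f, k, hf⟩ := exists_dvd_sq_sub_X _ h0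
  refine ⟨f, ?_⟩
  rw [← (IsAlgClosed.splits T.charpoly).eq_prod_roots_of_monic (Matrix.charpoly_monic T)] at hf
  have := congrArg (aeval T) hf
  rw [map_mul, Matrix.aeval_self_charpoly, zero_mul, map_sub, map_pow, aeval_X, sub_eq_zero] at this
  exact this

end Sqrt

theorem aeval_mul_comm_transpose {n : ℕ} {T P : Matrix (Fin n) (Fin n) ℂ} (h : T * P = P * Tᵀ)
    (f : Polynomial ℂ) :
    Polynomial.aeval T f * P = P * (Polynomial.aeval T f)ᵀ := by
  induction f using Polynomial.induction_on' with
  | add p q hp hq => rw [map_add, Matrix.add_mul, hp, hq, transpose_add, Matrix.mul_add]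
  | monomial k a =>
    rw [Polynomial.aeval_monomial, ← Algebra.smul_def, transpose_smul, transpose_pow,
      Matrix.smul_mul, Matrix.mul_smul]
    congr 1
    induction k with
    | zero => simp
    | succ k ih => rw [pow_succ, Matrix.mul_assoc, h, ← Matrix.mul_assoc, ih, Matrix.mul_assoc,
        pow_succ]

theorem Congruent.lIso {n : ℕ} {P Q : Pencil n n} (h : Congruent P Q) : LIso (lin P) (lin Q) := by
  obtain ⟨S, hS, h1, h2⟩ := h
  rw [← strictEquiv_iff]
  refine ⟨(Sᵀ)⁻¹, S, ?_, hS, ?_, ?_⟩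
  · rw [isUnit_iff_isUnit_det] at hS ⊢
    rw [isUnit_nonsing_inv_det_iff, det_transpose]
    exact hS
  all_goals
    rw [nonsing_inv_nonsing_inv]
    · assumption
    · rwa [det_transpose, ← isUnit_iff_isUnit_det]

/-- Strictly equivalent skew-symmetric pencils are congruent. -/
theorem congruent_of_lIso {n : ℕ} {P Q : Pencil n n} (hP : IsSkew P) (hQ : IsSkew Q)
    (h : LIso (lin P) (lin Q)) : Congruent P Q := by
  obtain ⟨S, R, hS, hR, h1, h2⟩ := strictEquiv_iff.2 h
  have hS' := (isUnit_iff_isUnit_det _).1 hS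
  have hR' := (isUnit_iff_isUnit_det _).1 hR
  have hRt : IsUnit (Rᵀ).det := by rwa [det_transpose]
  set T := (Rᵀ)⁻¹ * S⁻¹ with hT
  have hTu : IsUnit T := by
    rw [isUnit_iff_isUnit_det, hT, det_mul]
    exact (isUnit_nonsing_inv_det _ hRt).mul (isUnit_nonsing_inv_det _ hS')
  have key : ∀ A B : Matrix (Fin n) (Fin n) ℂ, Aᵀ = -A → Bᵀ = -B → S⁻¹ * A * R = B →
      T * A = A * Tᵀ ∧ Rᵀ * (T * A) * R = B := by
    intro A B hA hB hAB
    have e : T * A = (Rᵀ)⁻¹ * B * R⁻¹ := by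
      rw [← hAB, hT]
      simp only [Matrix.mul_assoc, mul_nonsing_inv R hR', Matrix.mul_one]
    constructor
    · have : (T * A)ᵀ = -(T * A) := by
        rw [e, transpose_mul, transpose_mul, hB, transpose_nonsing_inv, transpose_nonsing_inv,
          transpose_transpose]
        simp [Matrix.mul_assoc]
      rw [transpose_mul, hA, Matrix.neg_mul] at this
      exact (neg_injective this).symm
    · rw [e]
      simp only [Matrix.mul_assoc, nonsing_inv_mul R hR', Matrix.mul_one]
      rw [mul_nonsing_inv_cancel_left _ _ hRt]
  obtain ⟨f, hf⟩ := exists_aeval_sq_eq T hTu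
  set F := Polynomial.aeval T f
  have hFu : IsUnit F := (isUnit_pow_iff two_ne_zero).1 (by rwa [hf])
  have fin : ∀ A B : Matrix (Fin n) (Fin n) ℂ, Aᵀ = -A → Bᵀ = -B → S⁻¹ * A * R = B →
      (Fᵀ * R)ᵀ * A * (Fᵀ * R) = B := by
    intro A B hA hB hAB
    obtain ⟨k1, k2⟩ := key A B hA hB hAB
    have k3 := aeval_mul_comm_transpose k1 f
    rw [← k2]
    conv_rhs => rw [← hf, sq, Matrix.mul_assoc F F A, k3]
    rw [transpose_mul, transpose_transpose]
    simp only [Matrix.mul_assoc]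
    rfl
  refine ⟨Fᵀ * R, ?_, fin _ _ hP.1 hQ.1 h1, fin _ _ hP.2 hQ.2 h2⟩
  rw [isUnit_iff_isUnit_det, det_mul, det_transpose]
  exact ((isUnit_iff_isUnit_det _).1 hFu).mul hR'

section Invariants

variable {V U V' U' : Type}
  [AddCommGroup V] [Module ℂ V] [AddCommGroup U] [Module ℂ U]
  [AddCommGroup V'] [Module ℂ V'] [AddCommGroup U'] [Module ℂ U']

/-- The linear map whose kernel consists of the morphisms from the transposed test pencil
`X` to `f`, in coordinates. -/
def testMap {a b : ℕ} (X : Pencil a b) (f : LPair V U) : (Fin a → V) →ₗ[ℂ] (Fin b → U) :=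
  LinearMap.pi fun j => ∑ i, (X.2 i j • f.1 - X.1 i j • f.2) ∘ₗ LinearMap.proj i

theorem testMap_apply {a b : ℕ} (X : Pencil a b) (f : LPair V U) (x : Fin a → V) (j : Fin b) :
    testMap X f x j = ∑ i, (X.2 i j • f.1 (x i) - X.1 i j • f.2 (x i)) := by
  simp [testMap]

/-- The dimension of the space of morphisms tested by `X`. -/
def hdim {a b : ℕ} (X : Pencil a b) (f : LPair V U) : ℕ :=
  Module.finrank ℂ (LinearMap.ker (testMap X f))

theorem LIso.hdim_eq {f : LPair V U} {g : LPair V' U'} (h : LIso f g) {a b : ℕ}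
    (X : Pencil a b) : hdim X f = hdim X g := by
  obtain ⟨e, e', h1, h2⟩ := h
  have key : ∀ x, testMap X g (fun i => e (x i)) = fun j => e' (testMap X f x j) := by
    intro x
    ext j
    simp [testMap_apply, map_sum, h1, h2]
  let E : (Fin a → V) ≃ₗ[ℂ] (Fin a → V') := LinearEquiv.piCongrRight fun _ => e
  have hm : (LinearMap.ker (testMap X f)).map E.toLinearMap = LinearMap.ker (testMap X g) := by
    ext y
    rw [Submodule.mem_map_equiv, LinearMap.mem_ker, LinearMap.mem_ker]
    have h3 := key (E.symm y)
    have h4 : (fun i => e (E.symm y i)) = y := by ext i; simp [E]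
    rw [h4] at h3
    rw [h3, funext_iff, funext_iff]
    simp
  exact (E.submoduleMap _).finrank_eq.trans (by rw [hm]; rfl)

theorem hdim_sum [FiniteDimensional ℂ V] [FiniteDimensional ℂ V']
    {a b : ℕ} (X : Pencil a b) (f : LPair V U) (g : LPair V' U') :
    hdim X (f.sum g) = hdim X f + hdim X g := by
  have key : ∀ x j, testMap X (f.sum g) x j =
      (testMap X f (fun i => (x i).1) j, testMap X g (fun i => (x i).2) j) := by
    intro x j
    simp only [testMap_apply, LPair.sum]
    ext <;> simp [Prod.fst_sum, Prod.snd_sum]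
  unfold hdim
  rw [← Module.finrank_prod]
  refine LinearEquiv.finrank_eq
    { toFun := fun x => (⟨fun i => (x.1 i).1, ?_⟩, ⟨fun i => (x.1 i).2, ?_⟩)
      invFun := fun y => ⟨fun i => (y.1.1 i, y.2.1 i), ?_⟩
      map_add' := fun _ _ => rfl
      map_smul' := fun _ _ => rfl
      left_inv := fun _ => rfl
      right_inv := fun _ => rfl }
  · have := x.2
    rw [LinearMap.mem_ker] at this ⊢
    ext j
    have h3 := key x.1 j
    rw [this] at h3
    exact (congrArg Prod.fst h3).symm
  · have := x.2
    rw [LinearMap.mem_ker] at this ⊢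
    ext j
    have h3 := key x.1 j
    rw [this] at h3
    exact (congrArg Prod.snd h3).symm
  · have h1 := y.1.2
    have h2 := y.2.2
    rw [LinearMap.mem_ker] at h1 h2 ⊢
    ext j
    · rw [key]; exact congrFun h1 j
    · rw [key]; exact congrFun h2 j

theorem hdim_eq_zero_of_subsingleton [Subsingleton V] {a b : ℕ} (X : Pencil a b) (f : LPair V U) :
    hdim X f = 0 := Module.finrank_zero_of_subsingleton

theorem le_hdim [FiniteDimensional ℂ V] [FiniteDimensional ℂ U] {a b : ℕ} (X : Pencil a b)
    (f : LPair V U) : a * Module.finrank ℂ V ≤ hdim X f + b * Module.finrank ℂ U := by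
  have h1 := (testMap X f).finrank_range_add_finrank_ker
  have h2 := Submodule.finrank_le (LinearMap.range (testMap X f))
  rw [Module.finrank_pi_fintype] at h1 h2
  simp only [Finset.sum_const, Finset.card_univ, Fintype.card_fin, smul_eq_mul] at h1 h2
  unfold hdim
  omega

theorem mem_ker_testMap_Eblk {k : ℕ} {μ : ℂ} {f : LPair V U} {x : Fin k → V} :
    x ∈ LinearMap.ker (testMap (Eblk k μ) f) ↔
      (∀ h : 0 < k, f.1 (x ⟨0, h⟩) = μ • f.2 (x ⟨0, h⟩)) ∧
      ∀ j (h : j + 1 < k), f.1 (x ⟨j + 1, h⟩) = μ • f.2 (x ⟨j + 1, h⟩) +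
        f.2 (x ⟨j, Nat.lt_of_succ_lt h⟩) := by
  have key : ∀ j : Fin k, testMap (Eblk k μ) f x j =
      f.1 (x j) - μ • f.2 (x j) - ∑ i : Fin k, if (j : ℕ) = i + 1 then f.2 (x i) else 0 := by
    intro j
    rw [testMap_apply, Finset.sum_sub_distrib, sub_sub]
    congr 1
    · simp [Eblk, Matrix.one_apply]
    · rw [← Fintype.sum_ite_eq j fun i => μ • f.2 (x i), ← Finset.sum_add_distrib]
      refine Finset.sum_congr rfl fun i _ => ?_
      simp only [Eblk, Jmat, of_apply, Fin.ext_iff]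
      split_ifs with h1 h2
      · omega
      · simp
      · simp
      · simp
  rw [LinearMap.mem_ker]
  constructor
  · intro h
    constructor
    · intro h0
      have := congrFun h ⟨0, h0⟩
      rw [key] at this
      simpa [sub_eq_zero] using this
    · intro j hj
      have := congrFun h ⟨j + 1, hj⟩
      rw [key, Finset.sum_eq_single ⟨j, Nat.lt_of_succ_lt hj⟩] at this
      · rw [if_pos rfl, Pi.zero_apply, sub_eq_zero, sub_eq_iff_eq_add] at this
        rw [this, add_comm]
      · intro i _ hi
        rw [if_neg]
        intro h3
        exact hi (Fin.ext (Nat.succ_injective h3).symm)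
      · simp
  · rintro ⟨h1, h2⟩
    ext ⟨j, hj⟩
    rw [key]
    cases j with
    | zero => simp [h1 hj]
    | succ j =>
      rw [h2 j hj, Finset.sum_eq_single ⟨j, Nat.lt_of_succ_lt hj⟩]
      · simp
      · intro i _ hi
        rw [if_neg]
        intro h3
        exact hi (Fin.ext (Nat.succ_injective h3).symm)
      · simp

theorem mem_ker_testMap_Lblk {k : ℕ} {f : LPair V U} {x : Fin k → V} :
    x ∈ LinearMap.ker (testMap (Lblk k) f) ↔
      (∀ h : 0 < k, f.1 (x ⟨0, h⟩) = 0) ∧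
      (∀ j (h : j + 1 < k), f.1 (x ⟨j + 1, h⟩) = f.2 (x ⟨j, Nat.lt_of_succ_lt h⟩)) ∧
      ∀ j (h : j + 1 = k), f.2 (x ⟨j, by omega⟩) = 0 := by
  have key : ∀ j : Fin (k + 1), testMap (Lblk k) f x j =
      (∑ i : Fin k, if (j : ℕ) = i then f.1 (x i) else 0)
        - ∑ i : Fin k, if (j : ℕ) = i + 1 then f.2 (x i) else 0 := by
    intro j
    rw [testMap_apply, Finset.sum_sub_distrib]
    simp [Lblk, Fmat, Gmat]
  have key1 : ∀ (j : ℕ) (hj : j < k), (∑ i : Fin k, if j = i then f.1 (x i) else 0) =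
      f.1 (x ⟨j, hj⟩) := by
    intro j hj
    rw [Finset.sum_eq_single ⟨j, hj⟩]
    · simp
    · intro i _ hi
      rw [if_neg]
      intro h3
      exact hi (Fin.ext h3.symm)
    · simp
  have key2 : ∀ (j : ℕ) (hj : j < k), (∑ i : Fin k, if j + 1 = i + 1 then f.2 (x i) else 0) =
      f.2 (x ⟨j, hj⟩) := by
    intro j hj
    rw [Finset.sum_eq_single ⟨j, hj⟩]
    · simp
    · intro i _ hi
      rw [if_neg]
      intro h3
      exact hi (Fin.ext (Nat.succ_injective h3).symm)
    · simp
  have key3 : (∑ i : Fin k, if k = i then f.1 (x i) else 0) = 0 := by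
    refine Finset.sum_eq_zero fun i _ => ?_
    rw [if_neg]
    have := i.2
    omega
  rw [LinearMap.mem_ker]
  constructor
  · intro h
    refine ⟨fun h0 => ?_, fun j hj => ?_, fun j hj => ?_⟩
    · have := congrFun h ⟨0, by omega⟩
      rw [key] at this
      simp only [key1 0 h0] at this
      simpa using this
    · have := congrFun h ⟨j + 1, by omega⟩
      rw [key] at this
      simp only [key1 _ hj, key2 j (by omega)] at this
      exact sub_eq_zero.1 this
    · have := congrFun h ⟨j + 1, by omega⟩
      rw [key] at this
      simp only [key2 j (by omega)] at this
      subst hj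
      rw [key3] at this
      simpa using this
  · rintro ⟨h1, h2, h3⟩
    ext ⟨j, hj⟩
    rw [key]
    cases j with
    | zero =>
      rcases Nat.eq_zero_or_pos k with h | h
      · subst h; simp
      · simp only [key1 0 h, h1 h]; simp
    | succ j =>
      simp only [key2 j (by omega)]
      rcases Nat.lt_or_ge (j + 1) k with h | h
      · rw [key1 _ h, h2 j h, sub_self]; rfl
      · have h4 : j + 1 = k := by omega
        rw [h3 j h4]
        subst h4
        rw [key3, sub_self]; rfl

end Invariants

theorem isClosed_le_hdim {a b m n : ℕ} (X : Pencil a b) (c : ℕ) :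
    IsClosed {P : Pencil m n | c ≤ hdim X (lin P)} := by
  rw [← isOpen_compl_iff, isOpen_iff_mem_nhds]
  intro P hP
  simp only [Set.mem_compl_iff, Set.mem_ofPred_eq, not_le] at hP
  set r := Module.finrank ℂ (LinearMap.range (testMap X (lin P))) with hr
  let w := Module.finBasis ℂ (LinearMap.range (testMap X (lin P)))
  choose v hv using fun i => (w i).2
  have hli : LinearIndependent ℂ fun i => testMap X (lin P) (v i) := by
    have := w.linearIndependent.map' (Submodule.subtype _) (Submodule.ker_subtype _)
    rw [show (fun i => testMap X (lin P) (v i)) = Submodule.subtype _ ∘ w from funext hv]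
    exact this
  have hcont : Continuous fun Q : Pencil m n => fun i => testMap X (lin Q) (v i) := by
    refine continuous_pi fun i => continuous_pi fun j => ?_
    simp only [testMap_apply, lin_fst_apply, lin_snd_apply]
    fun_prop
  have hopen := (isOpen_setOfPred_linearIndependent (𝕜 := ℂ) (E := Fin b → Fin m → ℂ)
    (ι := Fin r)).preimage hcont
  refine Filter.mem_of_superset (hopen.mem_nhds hli) fun Q hQ => ?_
  simp only [Set.mem_compl_iff, Set.mem_ofPred_eq, not_le]
  have h1 : r ≤ Module.finrank ℂ (LinearMap.range (testMap X (lin Q))) := by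
    have h2 : LinearIndependent ℂ fun i : Fin r =>
        (⟨testMap X (lin Q) (v i), LinearMap.mem_range_self _ _⟩ :
          LinearMap.range (testMap X (lin Q))) := by
      apply LinearIndependent.of_comp (Submodule.subtype _)
      exact hQ
    simpa using h2.fintype_card_le_finrank
  have h3 := (testMap X (lin Q)).finrank_range_add_finrank_ker
  have h4 := (testMap X (lin P)).finrank_range_add_finrank_ker
  unfold hdim at hP ⊢
  omega

section Apply

theorem Lblk_fst_apply {m : ℕ} (x : Fin (m + 1) → ℂ) (i : Fin m) :
    ((Lblk m).1 *ᵥ x) i = x i.succ := by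
  simp only [Lblk, Fmat, Matrix.mulVec, dotProduct, of_apply]
  rw [Finset.sum_eq_single i.succ]
  · simp
  · intro j _ hj
    rw [if_neg (fun h => hj (Fin.ext (by simpa using h))), zero_mul]
  · simp

theorem Lblk_snd_apply {m : ℕ} (x : Fin (m + 1) → ℂ) (i : Fin m) :
    ((Lblk m).2 *ᵥ x) i = x i.castSucc := by
  simp only [Lblk, Gmat, Matrix.mulVec, dotProduct, of_apply]
  rw [Finset.sum_eq_single i.castSucc]
  · simp
  · intro j _ hj
    rw [if_neg (fun h => hj (Fin.ext (by simpa using h))), zero_mul]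
  · simp

theorem LTblk_fst_apply_succ {m : ℕ} (x : Fin m → ℂ) (i : Fin m) :
    ((LTblk m).1 *ᵥ x) i.succ = x i := by
  simp only [LTblk, Fmat, Matrix.mulVec, dotProduct, transpose_apply, of_apply]
  rw [Finset.sum_eq_single i]
  · simp
  · intro j _ hj
    rw [if_neg (fun h => hj (Fin.ext (by simpa using h.symm))), zero_mul]
  · simp

theorem LTblk_fst_apply_zero {m : ℕ} (x : Fin m → ℂ) : ((LTblk m).1 *ᵥ x) 0 = 0 := by
  simp [LTblk, Fmat, Matrix.mulVec, dotProduct]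

theorem LTblk_snd_apply_castSucc {m : ℕ} (x : Fin m → ℂ) (i : Fin m) :
    ((LTblk m).2 *ᵥ x) i.castSucc = x i := by
  simp only [LTblk, Gmat, Matrix.mulVec, dotProduct, transpose_apply, of_apply]
  rw [Finset.sum_eq_single i]
  · simp
  · intro j _ hj
    rw [if_neg (fun h => hj (Fin.ext (by simpa using h.symm))), zero_mul]
  · simp

theorem LTblk_snd_apply_last {m : ℕ} (x : Fin m → ℂ) : ((LTblk m).2 *ᵥ x) (Fin.last m) = 0 := by
  simp only [LTblk, Gmat, Matrix.mulVec, dotProduct, transpose_apply, of_apply]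
  refine Finset.sum_eq_zero fun j _ => ?_
  rw [if_neg (by have := j.2; simp; omega), zero_mul]

theorem Eblk_snd_apply {k : ℕ} {ν : ℂ} (x : Fin k → ℂ) : (Eblk k ν).2 *ᵥ x = x := by
  simp [Eblk]

theorem Eblk_fst_apply {k : ℕ} {ν : ℂ} (x : Fin k → ℂ) (i : Fin k) :
    ((Eblk k ν).1 *ᵥ x) i = ν * x i + if h : (i : ℕ) + 1 < k then x ⟨i + 1, h⟩ else 0 := by
  have : ∀ j : Fin k, Jmat k ν i j * x j =
      (if j = i then ν * x j else 0) + (if (j : ℕ) = i + 1 then x j else 0) := by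
    intro j
    simp only [Jmat, of_apply, Fin.ext_iff]
    split_ifs with h1 h2
    · omega
    · simp
    · simp
    · simp
  simp only [Eblk, Matrix.mulVec, dotProduct, this, Finset.sum_add_distrib,
    Finset.sum_ite_eq', Finset.mem_univ, if_true]
  congr 1
  split_ifs with h
  · rw [Finset.sum_eq_single ⟨i + 1, h⟩]
    · simp
    · intro j _ hj
      rw [if_neg (fun h => hj (Fin.ext h))]
    · simp
  · refine Finset.sum_eq_zero fun j _ => ?_
    rw [if_neg]
    have := j.2
    omega

end Apply

section Values

variable {V U : Type} [AddCommGroup V] [Module ℂ V] [AddCommGroup U] [Module ℂ U]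

/-- An upper bound for `hdim` from an injective linear evaluation. -/
theorem hdim_le_of_inj {a b : ℕ} {X : Pencil a b} {f : LPair V U} (r : ℕ)
    (ev : (Fin a → V) →ₗ[ℂ] (Fin r → ℂ))
    (h : ∀ x ∈ LinearMap.ker (testMap X f), ev x = 0 → x = 0) : hdim X f ≤ r := by
  have : Function.Injective (ev.domRestrict (LinearMap.ker (testMap X f))) := by
    rw [← LinearMap.ker_eq_bot, LinearMap.ker_eq_bot']
    rintro ⟨x, hx⟩ h0
    exact Subtype.ext (h x hx h0)
  simpa [hdim] using LinearMap.finrank_le_finrank_of_injective this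

/-- A lower bound for `hdim` from an injective linear parametrization. -/
theorem le_hdim_of_inj [FiniteDimensional ℂ V] {a b : ℕ} {X : Pencil a b} {f : LPair V U} (r : ℕ)
    (p : (Fin r → ℂ) →ₗ[ℂ] (Fin a → V))
    (h : ∀ q, p q ∈ LinearMap.ker (testMap X f)) (hp : ∀ q, p q = 0 → q = 0) : r ≤ hdim X f := by
  have : Function.Injective (p.codRestrict (LinearMap.ker (testMap X f)) h) := by
    rw [← LinearMap.ker_eq_bot, LinearMap.ker_eq_bot']
    intro q hq
    exact hp q (congrArg Subtype.val hq)
  simpa [hdim] using LinearMap.finrank_le_finrank_of_injective this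

theorem hdim_eq_zero_of_forall {a b : ℕ} {X : Pencil a b} {f : LPair V U}
    (h : ∀ x ∈ LinearMap.ker (testMap X f), x = 0) : hdim X f = 0 :=
  Nat.le_zero.1 (hdim_le_of_inj 0 0 fun x hx _ => h x hx)

end Values

theorem hdim_Eblk_Lblk (k m : ℕ) (μ : ℂ) : hdim (Eblk k μ) (lin (Lblk m)) = k := by
  apply le_antisymm
  · refine hdim_le_of_inj k (LinearMap.pi fun j => LinearMap.proj 0 ∘ₗ LinearMap.proj j)
      fun x hx h0 => ?_
    have h0' : ∀ j, x j 0 = 0 := fun j => congrFun h0 j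
    rw [mem_ker_testMap_Eblk] at hx
    obtain ⟨h1, h2⟩ := hx
    have key : ∀ i (hi : i < m + 1) j, x j ⟨i, hi⟩ = 0 := by
      intro i
      induction i with
      | zero => exact fun _ j => h0' j
      | succ i ih =>
        rintro hi ⟨j, hj⟩
        cases j with
        | zero =>
          have := congrFun (h1 hj) ⟨i, by omega⟩
          rw [lin_fst_apply, lin_snd_apply, Pi.smul_apply, Lblk_fst_apply, Lblk_snd_apply] at this
          exact this.trans (by rw [show Fin.castSucc ⟨i, _⟩ = ⟨i, _⟩ from rfl, ih]; simp)
        | succ j =>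
          have := congrFun (h2 j hj) ⟨i, by omega⟩
          rw [lin_fst_apply, lin_snd_apply, lin_snd_apply, Pi.add_apply, Pi.smul_apply,
            Lblk_fst_apply, Lblk_snd_apply, Lblk_snd_apply] at this
          exact this.trans (by rw [show Fin.castSucc ⟨i, _⟩ = ⟨i, _⟩ from rfl, ih, ih]; simp)
    ext j i
    exact key i.1 i.2 j
  · have := le_hdim (Eblk k μ) (lin (Lblk m))
    simp only [Module.finrank_fin_fun] at this
    nlinarith

theorem hdim_Eblk_LTblk (k m : ℕ) (μ : ℂ) : hdim (Eblk k μ) (lin (LTblk m)) = 0 := by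
  refine hdim_eq_zero_of_forall fun x hx => ?_
  rw [mem_ker_testMap_Eblk] at hx
  obtain ⟨h1, h2⟩ := hx
  have key : ∀ s i (hi : i < m) j, i + s + 1 = m → x j ⟨i, hi⟩ = 0 := by
    intro s
    induction s with
    | zero =>
      rintro i hi ⟨j, hj⟩ hs
      have hl : Fin.last m = Fin.succ ⟨i, hi⟩ := Fin.ext (by simp; omega)
      cases j with
      | zero =>
        have := congrFun (h1 hj) (Fin.last m)
        rw [lin_fst_apply, lin_snd_apply, Pi.smul_apply, LTblk_snd_apply_last, hl,
          LTblk_fst_apply_succ] at this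
        simpa using this
      | succ j =>
        have := congrFun (h2 j hj) (Fin.last m)
        rw [lin_fst_apply, lin_snd_apply, lin_snd_apply, Pi.add_apply, Pi.smul_apply,
          LTblk_snd_apply_last, LTblk_snd_apply_last, hl, LTblk_fst_apply_succ] at this
        simpa using this
    | succ s ih =>
      rintro i hi ⟨j, hj⟩ hs
      have hl : Fin.castSucc ⟨i + 1, (by omega : i + 1 < m)⟩ = Fin.succ ⟨i, hi⟩ := rfl
      cases j with
      | zero =>
        have := congrFun (h1 hj) (Fin.succ ⟨i, hi⟩)
        rw [lin_fst_apply, lin_snd_apply, Pi.smul_apply, LTblk_fst_apply_succ, ← hl,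
          LTblk_snd_apply_castSucc, ih (i + 1) (by omega) _ (by omega)] at this
        simpa using this
      | succ j =>
        have := congrFun (h2 j hj) (Fin.succ ⟨i, hi⟩)
        rw [lin_fst_apply, lin_snd_apply, lin_snd_apply, Pi.add_apply, Pi.smul_apply,
          LTblk_fst_apply_succ, ← hl, LTblk_snd_apply_castSucc, LTblk_snd_apply_castSucc,
          ih (i + 1) (by omega) _ (by omega), ih (i + 1) (by omega) _ (by omega)] at this
        simpa using this
  ext j i
  exact key (m - i - 1) i.1 i.2 j (by have := i.2; omega)

theorem hdim_Lblk_LTblk (k m : ℕ) : hdim (Lblk k) (lin (LTblk m)) = 0 := by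
  refine hdim_eq_zero_of_forall fun x hx => ?_
  rw [mem_ker_testMap_Lblk] at hx
  obtain ⟨h1, h2, h3⟩ := hx
  have key : ∀ s i (hi : i < m) j, i + s + 1 = m → x j ⟨i, hi⟩ = 0 := by
    intro s
    induction s with
    | zero =>
      rintro i hi ⟨j, hj⟩ hs
      have hl : Fin.last m = Fin.succ ⟨i, hi⟩ := Fin.ext (by simp; omega)
      cases j with
      | zero =>
        have := congrFun (h1 hj) (Fin.last m)
        rwa [lin_fst_apply, hl, LTblk_fst_apply_succ] at this
      | succ j =>
        have := congrFun (h2 j hj) (Fin.last m)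
        rwa [lin_fst_apply, lin_snd_apply, LTblk_snd_apply_last, hl,
          LTblk_fst_apply_succ] at this
    | succ s ih =>
      rintro i hi ⟨j, hj⟩ hs
      have hl : Fin.castSucc ⟨i + 1, (by omega : i + 1 < m)⟩ = Fin.succ ⟨i, hi⟩ := rfl
      cases j with
      | zero =>
        have := congrFun (h1 hj) (Fin.succ ⟨i, hi⟩)
        rwa [lin_fst_apply, LTblk_fst_apply_succ] at this
      | succ j =>
        have := congrFun (h2 j hj) (Fin.succ ⟨i, hi⟩)
        rwa [lin_fst_apply, lin_snd_apply, LTblk_fst_apply_succ, ← hl, LTblk_snd_apply_castSucc,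
          ih (i + 1) (by omega) _ (by omega)] at this
  ext j i
  exact key (m - i - 1) i.1 i.2 j (by have := i.2; omega)

theorem hdim_Lblk_Eblk (k m : ℕ) (ν : ℂ) : hdim (Lblk k) (lin (Eblk m ν)) = 0 := by
  refine hdim_eq_zero_of_forall fun x hx => ?_
  rw [mem_ker_testMap_Lblk] at hx
  obtain ⟨h1, h2, h3⟩ := hx
  simp only [lin_fst_apply, lin_snd_apply, Eblk_snd_apply] at h2 h3
  have key : ∀ s j (hj : j < k), j + s + 1 = k → x ⟨j, hj⟩ = 0 := by
    intro s
    induction s with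
    | zero => exact fun j hj hs => h3 j hs
    | succ s ih =>
      intro j hj hs
      rw [← h2 j (by omega), ih _ _ (by omega), Matrix.mulVec_zero]
  ext j : 1
  exact key (k - j - 1) j.1 j.2 (by have := j.2; omega)

theorem hdim_Lblk_Lblk (k m : ℕ) : hdim (Lblk k) (lin (Lblk m)) = k - m := by
  apply le_antisymm
  · refine hdim_le_of_inj (k - m) (LinearMap.pi fun j : Fin (k - m) => LinearMap.proj 0 ∘ₗ
      LinearMap.proj (⟨j, by omega⟩ : Fin k)) fun x hx h0 => ?_
    have h0' : ∀ j (hj : j < k) (_ : j < k - m), x ⟨j, hj⟩ 0 = 0 := fun j _ hj' =>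
      congrFun h0 ⟨j, hj'⟩
    rw [mem_ker_testMap_Lblk] at hx
    obtain ⟨h1, h2, h3⟩ := hx
    have e1 : ∀ h : 0 < k, ∀ i (hi : i < m), x ⟨0, h⟩ ⟨i + 1, by omega⟩ = 0 := by
      intro h i hi
      have := congrFun (h1 h) ⟨i, hi⟩
      rwa [lin_fst_apply, Lblk_fst_apply] at this
    have e2 : ∀ j (h : j + 1 < k) i (hi : i < m),
        x ⟨j + 1, h⟩ ⟨i + 1, by omega⟩ = x ⟨j, by omega⟩ ⟨i, by omega⟩ := by
      intro j h i hi
      have := congrFun (h2 j h) ⟨i, hi⟩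
      rwa [lin_fst_apply, Lblk_fst_apply, lin_snd_apply, Lblk_snd_apply] at this
    have e3 : ∀ j (h : j + 1 = k) i (hi : i < m), x ⟨j, by omega⟩ ⟨i, by omega⟩ = 0 := by
      intro j h i hi
      have := congrFun (h3 j h) ⟨i, hi⟩
      rwa [lin_snd_apply, Lblk_snd_apply] at this
    have key0 : ∀ s j (hj : j < k) i (hi : i < m), j + s + 1 = k → i + s < m →
        x ⟨j, hj⟩ ⟨i, by omega⟩ = 0 := by
      intro s
      induction s with
      | zero => exact fun j hj i hi hs _ => e3 j hs i hi
      | succ s ih =>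
        intro j hj i hi hs hs'
        rw [← e2 j (by omega) i hi]
        exact ih _ _ _ (by omega) (by omega) (by omega)
    have key : ∀ i (hi : i < m + 1) j (hj : j < k), x ⟨j, hj⟩ ⟨i, hi⟩ = 0 := by
      intro i
      induction i with
      | zero =>
        intro hi j hj
        rcases Nat.lt_or_ge j (k - m) with h | h
        · exact h0' j hj h
        · exact key0 (k - j - 1) j hj 0 (by omega) (by omega) (by omega)
      | succ i ih =>
        intro hi j hj
        cases j with
        | zero => exact e1 hj i (by omega)
        | succ j => rw [e2 j hj i (by omega)]; exact ih _ _ _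
    ext j i
    exact key _ _ _ _
  · have := le_hdim (Lblk k) (lin (Lblk m))
    simp only [Module.finrank_fin_fun] at this
    rw [tsub_le_iff_right]
    nlinarith

theorem hdim_Eblk_Eblk_ne (k m : ℕ) {μ ν : ℂ} (h : μ ≠ ν) :
    hdim (Eblk k μ) (lin (Eblk m ν)) = 0 := by
  refine hdim_eq_zero_of_forall fun x hx => ?_
  rw [mem_ker_testMap_Eblk] at hx
  obtain ⟨h1, h2⟩ := hx
  simp only [lin_fst_apply, lin_snd_apply, Eblk_snd_apply] at h1 h2
  have main : ∀ y : Fin m → ℂ, (Eblk m ν).1 *ᵥ y = μ • y → y = 0 := by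
    intro y hy
    have key : ∀ s i (hi : i < m), i + s + 1 = m → y ⟨i, hi⟩ = 0 := by
      intro s
      induction s with
      | zero =>
        intro i hi hs
        have := congrFun hy ⟨i, hi⟩
        rw [Eblk_fst_apply, dif_neg (by simp; omega), add_zero, Pi.smul_apply, smul_eq_mul,
          mul_eq_mul_right_iff] at this
        exact this.resolve_left h.symm
      | succ s ih =>
        intro i hi hs
        have := congrFun hy ⟨i, hi⟩
        rw [Eblk_fst_apply, dif_pos (by simp; omega), ih (i + 1) (by omega) (by omega), add_zero,
          Pi.smul_apply, smul_eq_mul, mul_eq_mul_right_iff] at this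
        exact this.resolve_left h.symm
    ext i
    exact key (m - i - 1) i.1 i.2 (by have := i.2; omega)
  have key : ∀ j (hj : j < k), x ⟨j, hj⟩ = 0 := by
    intro j
    induction j with
    | zero => exact fun hj => main _ (h1 hj)
    | succ j ih =>
      intro hj
      refine main _ ?_
      rw [h2 j hj, ih, add_zero]
  ext j : 1
  exact key _ _

theorem hdim_Eblk_Eblk_self (k m : ℕ) (μ : ℂ) :
    hdim (Eblk k μ) (lin (Eblk m μ)) = min m k := by
  have hsimp : ∀ x : Fin k → Fin m → ℂ, x ∈ LinearMap.ker (testMap (Eblk k μ) (lin (Eblk m μ))) ↔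
      (∀ h : 0 < k, ∀ i (hi : i + 1 < m), x ⟨0, h⟩ ⟨i + 1, hi⟩ = 0) ∧
      (∀ j (h : j + 1 < k), ∀ i (hi : i + 1 < m), x ⟨j + 1, h⟩ ⟨i + 1, hi⟩ =
        x ⟨j, by omega⟩ ⟨i, by omega⟩) ∧
      (∀ j (h : j + 1 < k), ∀ i (hi : i + 1 = m), x ⟨j, by omega⟩ ⟨i, by omega⟩ = 0) := by
    intro x
    rw [mem_ker_testMap_Eblk]
    simp only [lin_fst_apply, lin_snd_apply, Eblk_snd_apply]
    constructor
    · rintro ⟨h1, h2⟩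
      refine ⟨fun h i hi => ?_, fun j h i hi => ?_, fun j h i hi => ?_⟩
      · have := congrFun (h1 h) ⟨i, by omega⟩
        rw [Eblk_fst_apply, dif_pos hi] at this
        simpa using this
      · have := congrFun (h2 j h) ⟨i, by omega⟩
        rw [Eblk_fst_apply, dif_pos hi] at this
        simpa using this
      · have := congrFun (h2 j h) ⟨i, by omega⟩
        rw [Eblk_fst_apply, dif_neg (by simp; omega)] at this
        simpa using this.symm
    · rintro ⟨h1, h2, h3⟩
      refine ⟨fun h => ?_, fun j h => ?_⟩
      · ext ⟨i, hi⟩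
        rw [Eblk_fst_apply]
        split_ifs with h4
        · rw [h1 h i h4]; simp
        · simp
      · ext ⟨i, hi⟩
        rw [Eblk_fst_apply]
        split_ifs with h4
        · rw [h2 j h i h4]; simp
        · have h4' : i + 1 = m := by simp at h4; omega
          have := h3 j h i h4'
          simp [this]
  apply le_antisymm
  · refine hdim_le_of_inj (min m k) (LinearMap.pi fun t : Fin (min m k) =>
      if hm : 0 < m then LinearMap.proj (⟨0, hm⟩ : Fin m) ∘ₗ
      LinearMap.proj (⟨k - min m k + t, by omega⟩ : Fin k) else 0) fun x hx h0 => ?_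
    rcases Nat.eq_zero_or_pos m with rfl | hm
    · exact Subsingleton.elim _ _
    obtain ⟨h1, h2, h3⟩ := (hsimp x).1 hx
    have h0' : ∀ j (hj : j < k) (_ : k - min m k ≤ j), x ⟨j, hj⟩ ⟨0, hm⟩ = 0 := by
      intro j hj hj'
      have := congrFun h0 ⟨j - (k - min m k), by omega⟩
      simp only [hm, LinearMap.pi_apply, dif_pos, LinearMap.comp_apply, LinearMap.proj_apply,
        Pi.zero_apply] at this
      convert this using 3
      omega
    have key0 : ∀ s j (hj : j < k) i (hi : i < m), i + s + 1 = m → j + s + 1 < k →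
        x ⟨j, hj⟩ ⟨i, by omega⟩ = 0 := by
      intro s
      induction s with
      | zero => exact fun j hj i hi hs _ => h3 j (by omega) i hs
      | succ s ih =>
        intro j hj i hi hs hs'
        rw [← h2 j (by omega) i (by omega)]
        exact ih _ _ _ (by omega) (by omega) (by omega)
    have key : ∀ i (hi : i < m) j (hj : j < k), x ⟨j, hj⟩ ⟨i, hi⟩ = 0 := by
      intro i
      induction i with
      | zero =>
        intro hi j hj
        rcases Nat.lt_or_ge j (k - min m k) with h | h
        · exact key0 (m - 1) j hj 0 (by omega) (by omega) (by omega)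
        · exact h0' j hj h
      | succ i ih =>
        intro hi j hj
        cases j with
        | zero => exact h1 hj i (by omega)
        | succ j => rw [h2 j hj i (by omega)]; exact ih _ _ _
    ext j i
    exact key _ _ _ _
  · refine le_hdim_of_inj (min m k)
      { toFun := fun q j i => if h : k - min m k + i ≤ j then q ⟨j - i - (k - min m k), by omega⟩
          else 0
        map_add' := ?_
        map_smul' := ?_ } (fun q => ?_) fun q hq => ?_
    · intro q q'
      ext j i
      simp only [Pi.add_apply]
      split_ifs <;> simp
    · intro c q
      ext j i
      simp only [Pi.smul_apply, RingHom.id_apply]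
      split_ifs <;> simp
    · rw [hsimp]
      simp only [LinearMap.coe_mk, AddHom.coe_mk]
      refine ⟨fun h i hi => ?_, fun j h i hi => ?_, fun j h i hi => ?_⟩
      · rw [dif_neg (by omega)]
      · split_ifs with h1 h2 h2
        · congr 2; omega
        · omega
        · omega
        · rfl
      · rw [dif_neg (by omega)]
    · ext ⟨t, ht⟩
      have := congrFun (congrFun hq ⟨k - min m k + t, by omega⟩) ⟨0, by omega⟩
      simp only [LinearMap.coe_mk, AddHom.coe_mk] at this
      rw [dif_pos (by omega)] at this
      simpa using this

/-- Labels of Kronecker blocks without infinite eigenvalue; `E k μ` has size `k + 1`. -/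
inductive Blk
  | L (m : ℕ)
  | T (m : ℕ)
  | E (k : ℕ) (μ : ℂ)

namespace Blk

/-- Number of rows of a block. -/
def rows : Blk → ℕ
  | L m => m
  | T m => m + 1
  | E k _ => k + 1

/-- Number of columns of a block. -/
def cols : Blk → ℕ
  | L m => m + 1
  | T m => m
  | E k _ => k + 1

/-- The pencil of a block. -/
def pencil : (b : Blk) → Pencil b.rows b.cols
  | L m => Lblk m
  | T m => LTblk m
  | E k μ => Eblk (k + 1) μ

/-- The label of the transposed block. -/
def dual : Blk → Blk
  | L m => T m
  | T m => L m
  | E k μ => E k μ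

/-- Value of `hdim (Lblk k)` on a block. -/
def hL (k : ℕ) : Blk → ℕ
  | L m => k - m
  | T _ => 0
  | E _ _ => 0

open Classical in
/-- Value of `hdim (Eblk k μ)` on a block. -/
def hE (k : ℕ) (μ : ℂ) : Blk → ℕ
  | L _ => k
  | T _ => 0
  | E j ν => if μ = ν then min (j + 1) k else 0

theorem hdim_Lblk (k : ℕ) (b : Blk) : hdim (Lblk k) (lin b.pencil) = b.hL k := by
  cases b with
  | L m => exact hdim_Lblk_Lblk k m
  | T m => exact hdim_Lblk_LTblk k m
  | E j ν => exact hdim_Lblk_Eblk k _ ν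

theorem hdim_Eblk (k : ℕ) (μ : ℂ) (b : Blk) : hdim (Eblk k μ) (lin b.pencil) = b.hE k μ := by
  cases b with
  | L m => exact hdim_Eblk_Lblk k m μ
  | T m => exact hdim_Eblk_LTblk k m μ
  | E j ν =>
    by_cases h : μ = ν
    · subst h
      exact (hdim_Eblk_Eblk_self k (j + 1) μ).trans (if_pos rfl).symm
    · exact (hdim_Eblk_Eblk_ne k (j + 1) h).trans (if_neg h).symm

end Blk

/-- Total number of rows of a list of blocks. -/
def rowsSum : List Blk → ℕ
  | [] => 0
  | b :: l => b.rows + rowsSum l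

/-- Total number of columns of a list of blocks. -/
def colsSum : List Blk → ℕ
  | [] => 0
  | b :: l => b.cols + colsSum l

/-- The Kronecker canonical pencil of a list of blocks. -/
def kcf : (l : List Blk) → Pencil (rowsSum l) (colsSum l)
  | [] => 0
  | b :: l => dsum b.pencil (kcf l)

theorem kcf_cons (b : Blk) (l : List Blk) :
    LIso (lin (kcf (b :: l))) ((lin b.pencil).sum (lin (kcf l))) :=
  LIso.lin_dsum _ _

theorem kcf_append (l l' : List Blk) :
    LIso (lin (kcf (l ++ l'))) ((lin (kcf l)).sum (lin (kcf l'))) := by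
  induction l with
  | nil =>
    have : Subsingleton (Fin (colsSum []) → ℂ) := inferInstanceAs (Subsingleton (Fin 0 → ℂ))
    have : Subsingleton (Fin (rowsSum []) → ℂ) := inferInstanceAs (Subsingleton (Fin 0 → ℂ))
    exact ((LIso.sum_comm _ _).trans (.sum_zero _ _)).symm
  | cons b l ih =>
    exact (kcf_cons b (l ++ l')).trans (((LIso.refl _).sum_congr ih).trans
      ((LIso.sum_assoc _ _ _).symm.trans ((kcf_cons b l).symm.sum_congr (.refl _))))

theorem kcf_perm {l l' : List Blk} (h : l.Perm l') : LIso (lin (kcf l)) (lin (kcf l')) := by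
  induction h with
  | nil => exact .refl _
  | cons b _ ih =>
    exact (kcf_cons _ _).trans (((LIso.refl _).sum_congr ih).trans (kcf_cons _ _).symm)
  | swap a b l =>
    exact (kcf_cons _ _).trans (((LIso.refl _).sum_congr (kcf_cons _ _)).trans
      ((LIso.sum_left_comm _ _ _).trans (((LIso.refl _).sum_congr (kcf_cons _ _).symm).trans
        (kcf_cons _ _).symm)))
  | trans _ _ h1 h2 => exact h1.trans h2

theorem hdim_kcf {a b : ℕ} (X : Pencil a b) (l : List Blk) :
    hdim X (lin (kcf l)) = (l.map fun c => hdim X (lin c.pencil)).sum := by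
  induction l with
  | nil =>
    have : Subsingleton (Fin (colsSum []) → ℂ) := inferInstanceAs (Subsingleton (Fin 0 → ℂ))
    exact hdim_eq_zero_of_subsingleton _ _
  | cons c l ih =>
    rw [(kcf_cons c l).hdim_eq, hdim_sum, ih, List.map_cons, List.sum_cons]

theorem hdim_Lblk_kcf (k : ℕ) (l : List Blk) :
    hdim (Lblk k) (lin (kcf l)) = (l.map (Blk.hL k)).sum := by
  rw [hdim_kcf]; congr 1; exact List.map_congr_left fun c _ => Blk.hdim_Lblk k c

theorem hdim_Eblk_kcf (k : ℕ) (μ : ℂ) (l : List Blk) :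
    hdim (Eblk k μ) (lin (kcf l)) = (l.map (Blk.hE k μ)).sum := by
  rw [hdim_kcf]; congr 1; exact List.map_congr_left fun c _ => Blk.hdim_Eblk k μ c

theorem tr_dsum {m n p q : ℕ} (P : Pencil m n) (Q : Pencil p q) :
    tr (dsum P Q) = dsum (tr P) (tr Q) := by
  simp [tr, dsum, fromBlocks_transpose]

theorem lin_tr_Eblk (k : ℕ) (μ : ℂ) : LIso (lin (tr (Eblk k μ))) (lin (Eblk k μ)) := by
  rw [lIso_iff_matrix]
  let R : Matrix (Fin k) (Fin k) ℂ := (Fin.revPerm : Equiv.Perm (Fin k)).toPEquiv.toMatrix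
  have hR : R * R = 1 := by
    rw [← PEquiv.toMatrix_trans, ← Equiv.toPEquiv_trans]
    convert PEquiv.toMatrix_refl using 2
    ext i; simp [Equiv.toPEquiv_apply]
  refine ⟨R, R, R, R, hR, hR, hR, hR, ?_, ?_⟩
  · simp only [R]
    rw [PEquiv.toMatrix_toPEquiv_mul, PEquiv.mul_toMatrix_toPEquiv]
    ext i j
    have hi := i.2
    have hj := j.2
    simp only [tr, Eblk, Jmat, submatrix_apply, transpose_apply, of_apply, id,
      Fin.revPerm_apply, Fin.revPerm_symm, Fin.val_rev]
    congr 1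
    · simp only [eq_iff_iff]; omega
    · congr 1
      simp only [eq_iff_iff]; omega
  · simp [tr, Eblk]

theorem lin_tr_blk (b : Blk) : LIso (lin (tr b.pencil)) (lin b.dual.pencil) := by
  cases b with
  | L m => exact .refl _
  | T m => exact .refl _
  | E k μ => exact lin_tr_Eblk _ _

theorem lin_tr_kcf (l : List Blk) : LIso (lin (tr (kcf l))) (lin (kcf (l.map Blk.dual))) := by
  induction l with
  | nil =>
    have : Subsingleton (Fin (colsSum []) → ℂ) := inferInstanceAs (Subsingleton (Fin 0 → ℂ))
    have : Subsingleton (Fin (rowsSum []) → ℂ) := inferInstanceAs (Subsingleton (Fin 0 → ℂ))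
    exact LIso.of_subsingleton (lin (tr (kcf []))) (lin (kcf []))
  | cons b l ih =>
    refine .trans ?_ (kcf_cons _ _).symm
    change LIso (lin (tr (dsum b.pencil (kcf l)))) _
    rw [tr_dsum]
    exact (LIso.lin_dsum _ _).trans ((lin_tr_blk b).sum_congr ih)

/-- No infinite elementary divisors. -/
def FinReg {V U : Type} [AddCommGroup V] [Module ℂ V] [AddCommGroup U] [Module ℂ U]
    (f : LPair V U) : Prop :=
  ∀ᶠ μ in Filter.cofinite, hdim (EInfblk 1) f ≤ hdim (Eblk 1 μ) f

theorem LIso.finReg {V U V' U' : Type} [AddCommGroup V] [Module ℂ V] [AddCommGroup U] [Module ℂ U]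
    [AddCommGroup V'] [Module ℂ V'] [AddCommGroup U'] [Module ℂ U']
    {f : LPair V U} {g : LPair V' U'} (h : LIso f g) (hf : FinReg f) : FinReg g := by
  unfold FinReg at *
  simpa only [h.hdim_eq] using hf

theorem Blk.le_hdim_EInfblk (b : Blk) :
    ∀ᶠ μ in Filter.cofinite, hdim (Eblk 1 μ) (lin b.pencil) ≤ hdim (EInfblk 1) (lin b.pencil) := by
  cases b with
  | L m =>
    refine .of_forall fun μ => ?_
    rw [Blk.hdim_Eblk, Blk.hE]
    have : 1 * Module.finrank ℂ (Fin (m + 1) → ℂ) ≤ hdim (EInfblk 1) (lin (Lblk m)) +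
        1 * Module.finrank ℂ (Fin m → ℂ) := le_hdim (EInfblk 1) (lin (Lblk m))
    rw [Module.finrank_fin_fun, Module.finrank_fin_fun] at this
    change 1 ≤ hdim (EInfblk 1) (lin (Lblk m))
    omega
  | T m => exact .of_forall fun μ => by rw [Blk.hdim_Eblk, Blk.hE]; exact Nat.zero_le _
  | E k ν =>
    filter_upwards [(Set.finite_singleton ν).compl_mem_cofinite] with μ hμ
    rw [Blk.hdim_Eblk, Blk.hE, if_neg (fun h : μ = ν => hμ h)]
    exact Nat.zero_le _

theorem FinReg.of_sum {V U : Type} [AddCommGroup V] [Module ℂ V] [AddCommGroup U] [Module ℂ U]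
    [FiniteDimensional ℂ V] {b : Blk} {g : LPair V U} (h : FinReg ((lin b.pencil).sum g)) :
    FinReg g := by
  unfold FinReg at *
  filter_upwards [h, b.le_hdim_EInfblk] with μ h1 h2
  rw [hdim_sum, hdim_sum] at h1
  omega

theorem hdim_add_rank {m n : ℕ} (X : Pencil 1 1) (P : Pencil m n) :
    hdim X (lin P) + (X.2 0 0 • P.1 - X.1 0 0 • P.2).rank = n := by
  have h1 := (X.2 0 0 • P.1 - X.1 0 0 • P.2).mulVecLin.finrank_range_add_finrank_ker
  rw [Module.finrank_fin_fun] at h1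
  unfold Matrix.rank hdim
  rw [add_comm]
  convert h1 using 2
  refine LinearEquiv.finrank_eq
    { toFun := fun x => ⟨x.1 0, ?_⟩
      invFun := fun y => ⟨fun _ => y.1, ?_⟩
      map_add' := fun _ _ => rfl
      map_smul' := fun _ _ => rfl
      left_inv := fun x => by ext i; rw [Subsingleton.elim i 0]
      right_inv := fun _ => rfl }
  · have := congrFun x.2 0
    rw [testMap_apply] at this
    rw [LinearMap.mem_ker]
    simpa [sub_mulVec, smul_mulVec] using this
  · have := y.2
    rw [LinearMap.mem_ker] at this ⊢
    ext1 j
    rw [testMap_apply, Subsingleton.elim j 0]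
    simpa [sub_mulVec, smul_mulVec] using this

section Split

variable {V U V' U' : Type}
  [AddCommGroup V] [Module ℂ V] [AddCommGroup U] [Module ℂ U]
  [AddCommGroup V'] [Module ℂ V'] [AddCommGroup U'] [Module ℂ U']

/-- If `ψ ∘ φ` is bijective then the source splits as `V' × ker ψ`. -/
theorem exists_equiv_prod_ker (φ : V' →ₗ[ℂ] V) (ψ : V →ₗ[ℂ] V')
    (h : Function.Bijective (ψ ∘ₗ φ)) :
    ∃ e : (V' × LinearMap.ker ψ) ≃ₗ[ℂ] V, ∀ x, e x = φ x.1 + x.2 := by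
  let F : (V' × LinearMap.ker ψ) →ₗ[ℂ] V := φ.coprod (Submodule.subtype _)
  have hF : ∀ x, F x = φ x.1 + x.2 := fun x => by simp [F]
  refine ⟨LinearEquiv.ofBijective F ⟨?_, fun v => ?_⟩, hF⟩
  · rw [← LinearMap.ker_eq_bot, LinearMap.ker_eq_bot']
    rintro ⟨x, y, hy⟩ hxy
    rw [hF] at hxy
    simp only at hxy
    have h1 : (ψ ∘ₗ φ) x = 0 := by
      have := congrArg ψ hxy
      rwa [map_add, LinearMap.mem_ker.1 hy, add_zero, map_zero] at this
    have hx : x = 0 := h.1 (h1.trans (map_zero _).symm)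
    subst hx
    simpa using hxy
  · obtain ⟨x, hx⟩ := h.2 (ψ v)
    refine ⟨(x, ⟨v - φ x, ?_⟩), by rw [hF]; simp⟩
    rw [LinearMap.mem_ker, map_sub, ← hx]
    exact sub_self _

/-- A retract of a pair of linear maps is a direct summand. -/
theorem LIso.of_retract {f : LPair V U} {b : LPair V' U'} (φ : V' →ₗ[ℂ] V) (φ' : U' →ₗ[ℂ] U)
    (ψ : V →ₗ[ℂ] V') (ψ' : U →ₗ[ℂ] U')
    (h1 : ∀ x, f.1 (φ x) = φ' (b.1 x)) (h2 : ∀ x, f.2 (φ x) = φ' (b.2 x))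
    (h3 : ∀ x, b.1 (ψ x) = ψ' (f.1 x)) (h4 : ∀ x, b.2 (ψ x) = ψ' (f.2 x))
    (h5 : Function.Bijective (ψ ∘ₗ φ)) (h6 : Function.Bijective (ψ' ∘ₗ φ')) :
    ∃ g : LPair (LinearMap.ker ψ) (LinearMap.ker ψ'), LIso (b.sum g) f := by
  obtain ⟨e, he⟩ := exists_equiv_prod_ker φ ψ h5
  obtain ⟨e', he'⟩ := exists_equiv_prod_ker φ' ψ' h6
  refine ⟨(f.1.restrict fun x hx => ?_, f.2.restrict fun x hx => ?_), e, e',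
    fun x => ?_, fun x => ?_⟩
  · rw [LinearMap.mem_ker] at hx ⊢
    rw [← h3, hx, map_zero]
  · rw [LinearMap.mem_ker] at hx ⊢
    rw [← h4, hx, map_zero]
  · rw [he, he', map_add, h1]
    simp [LPair.sum]
  · rw [he, he', map_add, h2]
    simp [LPair.sum]

theorem exists_matrix_of_retract {m n p q : ℕ} {P : Pencil m n} {b : Pencil p q}
    (φ : (Fin q → ℂ) →ₗ[ℂ] (Fin n → ℂ)) (φ' : (Fin p → ℂ) →ₗ[ℂ] (Fin m → ℂ))
    (ψ : (Fin n → ℂ) →ₗ[ℂ] (Fin q → ℂ)) (ψ' : (Fin m → ℂ) →ₗ[ℂ] (Fin p → ℂ))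
    (h1 : ∀ x, P.1 *ᵥ (φ x) = φ' (b.1 *ᵥ x)) (h2 : ∀ x, P.2 *ᵥ (φ x) = φ' (b.2 *ᵥ x))
    (h3 : ∀ x, b.1 *ᵥ (ψ x) = ψ' (P.1 *ᵥ x)) (h4 : ∀ x, b.2 *ᵥ (ψ x) = ψ' (P.2 *ᵥ x))
    (h5 : Function.Injective (ψ ∘ₗ φ)) (h6 : Function.Injective (ψ' ∘ₗ φ')) :
    ∃ (m' n' : ℕ) (Q : Pencil m' n'), LIso (lin P) ((lin b).sum (lin Q)) := by
  obtain ⟨g, hg⟩ := LIso.of_retract (f := lin P) (b := lin b) φ φ' ψ ψ' h1 h2 h3 h4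
    ⟨h5, LinearMap.injective_iff_surjective.1 h5⟩ ⟨h6, LinearMap.injective_iff_surjective.1 h6⟩
  obtain ⟨Q, hQ⟩ := LIso.exists_matrix g rfl rfl
  exact ⟨_, _, Q, hg.symm.trans ((LIso.refl _).sum_congr hQ)⟩

end Split

theorem testMap_Lblk_cons {V U : Type} [AddCommGroup V] [Module ℂ V] [AddCommGroup U] [Module ℂ U]
    {k : ℕ} (f : LPair V U) (x : V) (v : Fin k → V) (j : Fin (k + 1)) :
    testMap (Lblk (k + 1)) f (Fin.cons x v : Fin (k + 1) → V) j.succ =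
      testMap (Lblk k) f v j - if j = 0 then f.2 x else 0 := by
  rw [testMap_apply, testMap_apply, Fin.sum_univ_succ, add_comm, sub_eq_add_neg _ (ite _ _ _)]
  congr 1
  · simp [Lblk, Fmat, Gmat]
  · rcases Fin.eq_zero_or_eq_succ j with rfl | ⟨j, rfl⟩
    · simp [Lblk, Fmat, Gmat]
    · simp [Lblk, Fmat, Gmat]

theorem testMap_Lblk_single {V U : Type} [AddCommGroup V] [Module ℂ V] [AddCommGroup U]
    [Module ℂ U] {k : ℕ} (f : LPair V U) (i : Fin k) (a : V) :
    testMap (Lblk k) f (Pi.single i a) =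
      Pi.single i.castSucc (f.1 a) - Pi.single i.succ (f.2 a) := by
  ext j
  rw [testMap_apply, Finset.sum_eq_single i]
  · simp [Lblk, Fmat, Gmat, Pi.single_apply, Fin.ext_iff]
  · intro l _ hl
    simp [hl]
  · simp

/-- A pencil with a singular chain has a summand `Lblk ε`. -/
theorem exists_split_Lblk {m n : ℕ} (P : Pencil m n) (h : ∃ k, hdim (Lblk k) (lin P) ≠ 0) :
    ∃ (ε m' n' : ℕ) (Q : Pencil m' n'), LIso (lin P) ((lin (Lblk ε)).sum (lin Q)) := by
  classical
  have hmin : ∀ k, k < Nat.find h → hdim (Lblk k) (lin P) = 0 := fun k hk =>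
    not_not.1 (Nat.find_min h hk)
  have hk := Nat.find_spec h
  obtain ⟨ε, hε⟩ : ∃ ε, Nat.find h = ε + 1 := by
    refine Nat.exists_eq_succ_of_ne_zero fun h0 => hk ?_
    rw [h0]
    exact Module.finrank_zero_of_subsingleton
  rw [hε] at hk
  have hbot : LinearMap.ker (testMap (Lblk ε) (lin P)) = ⊥ := by
    exact Submodule.finrank_eq_zero.1 (hmin ε (by omega))
  have hne : LinearMap.ker (testMap (Lblk (ε + 1)) (lin P)) ≠ ⊥ := fun h0 =>
    hk (by unfold hdim; rw [h0]; exact finrank_bot _ _)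
  obtain ⟨x, hx, hx0⟩ := Submodule.exists_mem_ne_zero_of_ne_bot hne
  rw [mem_ker_testMap_Lblk] at hx
  obtain ⟨c1, c2, c3⟩ := hx
  simp only [lin_fst_apply, lin_snd_apply] at c1 c2 c3
  have c1 := c1 (by omega)
  have c3 := c3 ε rfl
  have hx00 : x ⟨0, by omega⟩ ≠ 0 := by
    intro h0
    have : (fun j : Fin ε => x j.succ) ∈ LinearMap.ker (testMap (Lblk ε) (lin P)) := by
      rw [mem_ker_testMap_Lblk]
      simp only [lin_fst_apply, lin_snd_apply]
      refine ⟨fun hp => ?_, fun j hj => c2 (j + 1) (by omega), fun j hj => ?_⟩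
      · refine (c2 0 (by omega)).trans ?_
        rw [h0, mulVec_zero]
      · subst hj
        exact c3
    rw [hbot, Submodule.mem_bot] at this
    apply hx0
    ext1 ⟨j, hj⟩
    cases j with
    | zero => exact h0
    | succ j => exact congrFun this ⟨j, by omega⟩
  obtain ⟨w, z, hz1, hz2, hz0⟩ : ∃ (w : Fin ε → (Fin m → ℂ) →ₗ[ℂ] ℂ)
      (z : Fin (ε + 1) → (Fin n → ℂ) →ₗ[ℂ] ℂ), (∀ j v, z j.succ v = w j (P.1 *ᵥ v)) ∧
      (∀ j v, z j.castSucc v = w j (P.2 *ᵥ v)) ∧ z 0 (x 0) ≠ 0 := by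
    cases ε with
    | zero =>
      obtain ⟨f, hf, -⟩ := Submodule.exists_le_ker_of_notMem (p := (⊥ : Submodule ℂ (Fin n → ℂ)))
        (v := x 0) (by simpa using hx00)
      exact ⟨0, fun _ => f, fun j => j.elim0, fun j => j.elim0, hf⟩
    | succ δ =>
      have hnot : Pi.single 0 (P.2 *ᵥ x 0) ∉ LinearMap.range (testMap (Lblk δ) (lin P)) := by
        rintro ⟨v, hv⟩
        have : (Fin.cons (x 0) v : Fin (δ + 1) → _) ∈
            LinearMap.ker (testMap (Lblk (δ + 1)) (lin P)) := by
          rw [LinearMap.mem_ker]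
          ext1 j
          rcases Fin.eq_zero_or_eq_succ j with rfl | ⟨j, rfl⟩
          · rw [testMap_apply, Fin.sum_univ_succ]
            simpa [Lblk, Fmat, Gmat] using c1
          · rw [testMap_Lblk_cons, hv]
            simp [Pi.single_apply]
        rw [hbot, Submodule.mem_bot] at this
        exact hx00 (congrFun this 0)
      obtain ⟨Ω, hΩ, hΩ'⟩ := Submodule.exists_le_ker_of_notMem hnot
      have hrel : ∀ (i : Fin δ) a, Ω (Pi.single i.castSucc (P.1 *ᵥ a)) =
          Ω (Pi.single i.succ (P.2 *ᵥ a)) := by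
        intro i a
        have := hΩ' (LinearMap.mem_range_self _ (Pi.single i a))
        rwa [testMap_Lblk_single, LinearMap.mem_ker, map_sub, sub_eq_zero] at this
      let w (i : Fin (δ + 1)) : (Fin m → ℂ) →ₗ[ℂ] ℂ := Ω ∘ₗ
        LinearMap.single ℂ (fun _ : Fin (δ + 1) => Fin m → ℂ) i
      refine ⟨w, (Fin.cons (w 0 ∘ₗ (lin P).2) fun j => w j ∘ₗ (lin P).1 :
        Fin (δ + 1 + 1) → (Fin n → ℂ) →ₗ[ℂ] ℂ), fun j v => rfl,
        fun j v => ?_, hΩ⟩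
      rcases Fin.eq_zero_or_eq_succ j with rfl | ⟨j, rfl⟩
      · rfl
      · exact hrel j v
  set c := z 0 (x 0) with hc
  have diag : ∀ j (hj : j < ε + 1), z ⟨j, hj⟩ (x ⟨j, hj⟩) = c := by
    intro j
    induction j with
    | zero => exact fun _ => rfl
    | succ j ih =>
      intro hj
      rw [← ih (by omega)]
      exact (hz1 ⟨j, by omega⟩ _).trans ((congrArg _ (c2 j hj)).trans (hz2 ⟨j, by omega⟩ _).symm)
  have low : ∀ i (hi : i < ε + 1) j (hj : j < ε + 1), i < j → z ⟨j, hj⟩ (x ⟨i, hi⟩) = 0 := by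
    intro i
    induction i with
    | zero =>
      intro hi j hj hij
      obtain ⟨j, rfl⟩ : ∃ k, j = k + 1 := ⟨j - 1, by omega⟩
      exact (hz1 ⟨j, by omega⟩ _).trans ((congrArg _ c1).trans (map_zero _))
    | succ i ih =>
      intro hi j hj hij
      obtain ⟨j, rfl⟩ : ∃ k, j = k + 1 := ⟨j - 1, by omega⟩
      rw [← ih (by omega) j (by omega) (by omega)]
      exact (hz1 ⟨j, by omega⟩ _).trans ((congrArg _ (c2 i hi)).trans (hz2 ⟨j, by omega⟩ _).symm)
  have upp : ∀ s i (hi : i < ε + 1) j (hj : j < ε + 1), i + s = ε → j < i →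
      z ⟨j, hj⟩ (x ⟨i, hi⟩) = 0 := by
    intro s
    induction s with
    | zero =>
      intro i hi j hj hs hij
      obtain rfl : i = ε := hs
      exact (hz2 ⟨j, by omega⟩ _).trans ((congrArg _ c3).trans (map_zero _))
    | succ s ih =>
      intro i hi j hj hs hij
      rw [← ih (i + 1) (by omega) (j + 1) (by omega) (by omega) (by omega)]
      exact ((hz1 ⟨j, by omega⟩ _).trans ((congrArg _ (c2 i (by omega))).trans
        (hz2 ⟨j, by omega⟩ _).symm)).symm
  have key : ∀ j i, z j (x i) = if i = j then c else 0 := by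
    rintro ⟨j, hj⟩ ⟨i, hi⟩
    rcases lt_trichotomy i j with h | h | h
    · rw [low i hi j hj h, if_neg (fun h' => h.ne (Fin.ext_iff.1 h'))]
    · subst h
      rw [diag i hi, if_pos rfl]
    · rw [upp (ε - i) i hi j hj (by omega) h, if_neg (fun h' => h.ne' (Fin.ext_iff.1 h'))]
  refine ⟨ε, exists_matrix_of_retract (Fintype.linearCombination ℂ x)
    (Fintype.linearCombination ℂ fun i : Fin ε => P.2 *ᵥ x i.castSucc)
    (LinearMap.pi z) (LinearMap.pi w) (fun y => ?_) (fun y => ?_) (fun v => ?_) (fun v => ?_) ?_ ?_⟩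
  · simp only [Fintype.linearCombination_apply, Fin.sum_univ_succ (n := ε), mulVec_add,
      mulVec_sum, mulVec_smul, Lblk_fst_apply]
    rw [show P.1 *ᵥ x 0 = 0 from c1, smul_zero, zero_add]
    exact Finset.sum_congr rfl fun i _ => congrArg _ (c2 i.1 (by omega))
  · simp only [Fintype.linearCombination_apply, Fin.sum_univ_castSucc (n := ε), mulVec_add,
      mulVec_sum, mulVec_smul, Lblk_snd_apply]
    rw [show P.2 *ᵥ x (Fin.last ε) = 0 from c3, smul_zero, add_zero]
  · ext j
    rw [Lblk_fst_apply]
    exact hz1 j v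
  · ext j
    rw [Lblk_snd_apply]
    exact hz2 j v
  · rw [← LinearMap.ker_eq_bot, LinearMap.ker_eq_bot']
    intro y hy
    ext j
    have := congrFun hy j
    simp only [LinearMap.comp_apply, Fintype.linearCombination_apply, LinearMap.pi_apply, map_sum,
      map_smul, key, smul_eq_mul, mul_ite, mul_zero, Finset.sum_ite_eq', Finset.mem_univ,
      if_true, Pi.zero_apply, mul_eq_zero] at this
    exact this.resolve_right hz0
  · rw [← LinearMap.ker_eq_bot, LinearMap.ker_eq_bot']
    intro y hy
    ext j
    have := congrFun hy j
    simp only [LinearMap.comp_apply, Fintype.linearCombination_apply, LinearMap.pi_apply, map_sum,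
      map_smul, ← hz2, key, smul_eq_mul, mul_ite, mul_zero, Fin.castSucc_inj, Finset.sum_ite_eq',
      Finset.mem_univ, if_true, Pi.zero_apply, mul_eq_zero] at this
    exact this.resolve_right hz0

/-- An endomorphism of a nonzero space splits off a Jordan block. -/
theorem exists_split_Eblk {n : ℕ} (hn : n ≠ 0) (A : Matrix (Fin n) (Fin n) ℂ) :
    ∃ (k : ℕ) (μ : ℂ) (m' n' : ℕ) (Q : Pencil m' n'),
      LIso (lin (A, (1 : Matrix (Fin n) (Fin n) ℂ))) ((lin (Eblk (k + 1) μ)).sum (lin Q)) := by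
  classical
  have : Nonempty (Fin n) := ⟨⟨0, Nat.pos_of_ne_zero hn⟩⟩
  obtain ⟨μ, hμ⟩ := Module.End.exists_eigenvalue A.toLin'
  obtain ⟨v, hv⟩ := hμ.exists_hasEigenvector
  set N : Module.End ℂ (Fin n → ℂ) := A.toLin' - algebraMap ℂ _ μ with hN
  have hex : ∃ k, ∀ y, (N ^ (k + 1)) y = 0 → (N ^ k) y = 0 := by
    refine ⟨Module.finrank ℂ (Fin n → ℂ), fun y hy => ?_⟩
    have := Module.End.ker_pow_eq_ker_pow_finrank_of_le (f := N)
      (m := Module.finrank ℂ (Fin n → ℂ) + 1) (Nat.le_succ _)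
    rw [← LinearMap.mem_ker, ← this]
    exact hy
  obtain ⟨κ, hκ⟩ : ∃ κ, Nat.find hex = κ + 1 := by
    refine Nat.exists_eq_succ_of_ne_zero fun h0 => hv.2 ?_
    have := Nat.find_spec hex
    rw [h0] at this
    refine this v ?_
    have := hv.apply_eq_smul
    simp [hN, this, Module.algebraMap_end_apply, -Matrix.toLin'_apply]
  have hspec := Nat.find_spec hex
  rw [hκ] at hspec
  have hmin := Nat.find_min hex (m := κ) (by omega)
  push Not at hmin
  obtain ⟨x, hx1, hx0⟩ := hmin
  have hnot : (N ^ κ) x ∉ LinearMap.range (N ^ (κ + 1)) := by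
    rintro ⟨y, hy⟩
    apply hx0
    rw [← hy]
    apply hspec
    rw [pow_succ', Module.End.mul_apply, hy, ← Module.End.mul_apply, ← pow_succ', hx1]
  obtain ⟨l, hl0, hl⟩ := Submodule.exists_le_ker_of_notMem hnot
  have hl : ∀ s y, κ < s → l ((N ^ s) y) = 0 := by
    intro s y hs
    obtain ⟨t, rfl⟩ := Nat.exists_eq_add_of_lt hs
    have := hl (LinearMap.mem_range_self _ ((N ^ t) y))
    rw [LinearMap.mem_ker, ← Module.End.mul_apply, ← pow_add] at this
    rw [← this]
    congr 3
    omega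
  have hA : ∀ y, A *ᵥ y = μ • y + N y := by
    intro y
    simp [hN, Module.algebraMap_end_apply]
  have hinj : ∀ y : Fin (κ + 1) → ℂ,
      (∀ j : Fin (κ + 1), ∑ i, y i * l ((N ^ (j + (κ - i) : ℕ)) x) = 0) → y = 0 := by
    intro y hy
    have key : ∀ s i (hi : i < κ + 1), i + s = κ → y ⟨i, hi⟩ = 0 := by
      intro s
      induction s using Nat.strong_induction_on with
      | _ s ih =>
        intro i hi hs
        have := hy ⟨i, hi⟩
        rw [Finset.sum_eq_single ⟨i, hi⟩] at this
        · rw [show i + (κ - i) = κ by omega] at this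
          exact (mul_eq_zero.1 this).resolve_right hl0
        · rintro ⟨j, hj⟩ _ hji
          have hji : j ≠ i := fun h => hji (Fin.ext h)
          rcases lt_or_gt_of_ne hji with h | h
          · rw [hl _ _ (by simp only; omega), mul_zero]
          · rw [ih (κ - j) (by omega) j hj (by omega), zero_mul]
        · simp
    ext i
    exact key (κ - i) i i.2 (by omega)
  refine ⟨κ, μ, ?_⟩
  let φ : (Fin (κ + 1) → ℂ) →ₗ[ℂ] (Fin n → ℂ) :=
    Fintype.linearCombination ℂ fun i : Fin (κ + 1) => (N ^ (κ - i : ℕ)) x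
  let ψ : (Fin n → ℂ) →ₗ[ℂ] (Fin (κ + 1) → ℂ) := LinearMap.pi fun j => l ∘ₗ (N ^ (j : ℕ))
  have hφψ : Function.Injective (ψ ∘ₗ φ) := by
    rw [← LinearMap.ker_eq_bot, LinearMap.ker_eq_bot']
    intro y hy
    refine hinj y fun j => ?_
    have := congrFun hy j
    simp only [ψ, φ, LinearMap.comp_apply, Fintype.linearCombination_apply, LinearMap.pi_apply,
      map_sum, map_smul, ← Module.End.mul_apply, ← pow_add] at this
    exact this
  refine exists_matrix_of_retract φ φ ψ ψ (fun y => ?_) (fun y => ?_) (fun y => ?_) (fun y => ?_)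
    hφψ hφψ
  · simp only [φ, Fintype.linearCombination_apply, hA, Eblk_fst_apply, add_smul,
      Finset.sum_add_distrib]
    congr 1
    · rw [Finset.smul_sum]
      exact Finset.sum_congr rfl fun i _ => smul_smul _ _ _
    · rw [Fin.sum_univ_succ, Fin.sum_univ_castSucc (n := κ), map_add, map_sum, map_smul]
      rw [← Module.End.mul_apply, ← pow_succ']
      simp only [Fin.val_zero, Nat.sub_zero, hx1, smul_zero, zero_add, Fin.val_last, lt_irrefl,
        dite_false, zero_smul, add_zero]
      refine Finset.sum_congr rfl fun i _ => ?_
      rw [dif_pos (by simp), map_smul, ← Module.End.mul_apply, ← pow_succ']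
      congr 3
      simp
      omega
  · simp [Eblk_snd_apply]
  · ext j
    rw [Eblk_fst_apply]
    simp only [ψ, LinearMap.pi_apply, LinearMap.comp_apply, hA, map_add, map_smul, smul_eq_mul]
    congr 1
    rw [← Module.End.mul_apply, ← pow_succ]
    split_ifs with h
    · rfl
    · rw [hl _ _ (by omega)]
  · simp [Eblk_snd_apply]

theorem isUnit_of_rank_eq {n : ℕ} {A : Matrix (Fin n) (Fin n) ℂ} (h : A.rank = n) : IsUnit A := by
  rw [← linearIndependent_cols_iff_isUnit, linearIndependent_iff_card_eq_finrank_span,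
    Fintype.card_fin]
  exact h.symm.trans (rank_eq_finrank_span_cols A)

/-- Pencils without infinite elementary divisors have a Kronecker canonical form. -/
theorem exists_kcf {m n : ℕ} (P : Pencil m n) (hP : FinReg (lin P)) :
    ∃ l, LIso (lin P) (lin (kcf l)) := by
  classical
  obtain ⟨s, hs⟩ : ∃ s, m + n = s := ⟨_, rfl⟩
  induction s using Nat.strong_induction_on generalizing m n with
  | _ s ih =>
  have step : ∀ (b : Blk) (m' n' : ℕ) (Q : Pencil m' n'),
      LIso (lin P) ((lin b.pencil).sum (lin Q)) → ∃ l, LIso (lin P) (lin (kcf l)) := by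
    intro b m' n' Q h
    obtain ⟨e, e', -⟩ := id h
    have h1 := e.finrank_eq
    have h2 := e'.finrank_eq
    simp only [Module.finrank_prod, Module.finrank_fin_fun] at h1 h2
    have h3 : 0 < b.rows + b.cols := by cases b <;> simp [Blk.rows, Blk.cols]
    obtain ⟨l, hl⟩ := ih (m' + n') (by omega) Q (h.finReg hP).of_sum rfl
    exact ⟨b :: l, h.trans (((LIso.refl _).sum_congr hl).trans (kcf_cons _ _).symm)⟩
  by_cases hR : ∃ k, hdim (Lblk k) (lin P) ≠ 0
  · obtain ⟨ε, m', n', Q, h⟩ := exists_split_Lblk P hR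
    exact step (.L ε) m' n' Q h
  by_cases hL : ∃ k, hdim (Lblk k) (lin (tr P)) ≠ 0
  · obtain ⟨ε, m', n', Q, h⟩ := exists_split_Lblk (tr P) hL
    have h' := (h.trans (LIso.lin_dsum _ _).symm).tr
    rw [tr_dsum] at h'
    exact step (.T ε) n' m' (tr Q) (h'.trans (LIso.lin_dsum _ _))
  push Not at hR hL
  have hmn : m = n := by
    have h1 := le_hdim (Lblk (m + 1)) (lin P)
    have h2 := le_hdim (Lblk (n + 1)) (lin (tr P))
    rw [hR, Module.finrank_fin_fun, Module.finrank_fin_fun] at h1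
    rw [hL, Module.finrank_fin_fun, Module.finrank_fin_fun] at h2
    apply le_antisymm <;> nlinarith
  subst hmn
  rcases Nat.eq_zero_or_pos m with rfl | hm
  · exact ⟨[], .of_subsingleton (lin P) (lin (0 : Pencil 0 0))⟩
  set D := P.1.map (Polynomial.C : ℂ → Polynomial ℂ) -
    (Polynomial.X : Polynomial ℂ) • P.2.map (Polynomial.C : ℂ → Polynomial ℂ) with hD
  have hdet : D.det ≠ 0 := by
    intro h0
    obtain ⟨v, hv0, hv⟩ := Matrix.exists_mulVec_eq_zero_iff.2 h0
    have hrow : ∀ i, ∑ j, Polynomial.C (P.1 i j) * v j =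
        Polynomial.X * ∑ j, Polynomial.C (P.2 i j) * v j := by
      intro i
      have := congrFun hv i
      simp only [hD, mulVec, dotProduct, Matrix.sub_apply, Matrix.smul_apply, map_apply,
        smul_eq_mul, sub_mul,
        Finset.sum_sub_distrib, Pi.zero_apply, sub_eq_zero] at this
      rw [this, Finset.mul_sum]
      exact Finset.sum_congr rfl fun j _ => mul_assoc _ _ _
    let x : ℕ → Fin m → ℂ := fun t j => (v j).coeff t
    have hx0 : P.1 *ᵥ x 0 = 0 := by
      ext i
      have := congrArg (Polynomial.coeff · 0) (hrow i)
      simpa [Polynomial.finsetSum_coeff, mulVec, dotProduct, x] using this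
    have hxs : ∀ t, P.1 *ᵥ x (t + 1) = P.2 *ᵥ x t := by
      intro t
      ext i
      have := congrArg (Polynomial.coeff · (t + 1)) (hrow i)
      simp only [Polynomial.finsetSum_coeff, Polynomial.coeff_C_mul,
        Polynomial.coeff_X_mul] at this
      exact this
    let d := Finset.univ.sup fun j => (v j).natDegree
    have hxd : x (d + 1) = 0 := by
      ext j
      exact Polynomial.coeff_eq_zero_of_natDegree_lt
        (Nat.lt_succ_of_le (Finset.le_sup (f := fun j => (v j).natDegree) (Finset.mem_univ j)))
    have hmem : (fun t : Fin (d + 1) => x t) ∈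
        LinearMap.ker (testMap (Lblk (d + 1)) (lin P)) := by
      rw [mem_ker_testMap_Lblk]
      refine ⟨fun _ => hx0, fun j _ => hxs j, fun j hj => ?_⟩
      obtain rfl : j = d := by omega
      exact (hxs d).symm.trans (by rw [hxd, mulVec_zero])
    rw [Submodule.finrank_eq_zero.1 (hR (d + 1)), Submodule.mem_bot] at hmem
    apply hv0
    ext1 j
    ext t
    by_cases ht : t < d + 1
    · exact congrFun (congrFun hmem ⟨t, ht⟩) j
    · exact Polynomial.coeff_eq_zero_of_natDegree_lt (lt_of_le_of_lt
        (Finset.le_sup (f := fun j => (v j).natDegree) (Finset.mem_univ j)) (by omega))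
  obtain ⟨μ, hμ1, hμ2⟩ : ∃ μ : ℂ, hdim (EInfblk 1) (lin P) ≤ hdim (Eblk 1 μ) (lin P) ∧
      D.det.eval μ ≠ 0 := by
    have h1 : ∀ᶠ μ in Filter.cofinite, D.det.eval μ ≠ 0 := by
      rw [Filter.eventually_cofinite]
      exact (Polynomial.finite_setOfPred_isRoot hdet).subset fun μ h => not_not.1 h
    exact (hP.and h1).exists
  have hunit : IsUnit P.2 := by
    have hE : (P.1 - μ • P.2).rank = m := by
      have : IsUnit (P.1 - μ • P.2) := by
        rw [isUnit_iff_isUnit_det, isUnit_iff_ne_zero]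
        convert hμ2 using 1
        rw [← Polynomial.coe_evalRingHom, RingHom.map_det]
        congr 1
        ext i j
        simp [hD, mul_comm μ]
      rw [rank_of_isUnit _ this, Fintype.card_fin]
    have h1 := hdim_add_rank (Eblk 1 μ) P
    have h2 := hdim_add_rank (EInfblk 1) P
    simp only [Eblk, EInfblk, Jmat, of_apply, one_apply_eq, one_smul, if_true, zero_smul,
      zero_sub] at h1 h2 hμ1
    have h3 : (-P.2).rank = m := by omega
    rw [← neg_neg P.2]
    exact (isUnit_of_rank_eq h3).neg
  obtain ⟨k, μ, m', n', Q, h⟩ := exists_split_Eblk hm.ne' (P.2⁻¹ * P.1)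
  refine step (.E k μ) m' n' Q (LIso.trans ?_ h)
  refine strictEquiv_iff.1 ⟨P.2, 1, hunit, isUnit_one, mul_one _, ?_⟩
  rw [mul_one, nonsing_inv_mul _ ((isUnit_iff_isUnit_det _).1 hunit)]

/-- A skew-symmetric complex matrix has even rank. -/
theorem even_rank_of_transpose_eq_neg {ι : Type} [Fintype ι] {A : Matrix ι ι ℂ} (h : Aᵀ = -A) :
    Even A.rank := by
  classical
  obtain ⟨W, hW⟩ := Submodule.exists_isCompl (LinearMap.ker A.mulVecLin)
  have hr : Module.finrank ℂ W = A.rank := by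
    have h1 := Submodule.finrank_add_eq_of_isCompl hW
    have h2 := A.mulVecLin.finrank_range_add_finrank_ker
    unfold Matrix.rank
    omega
  let b := Module.finBasis ℂ W
  let G : Matrix (Fin (Module.finrank ℂ W)) (Fin (Module.finrank ℂ W)) ℂ :=
    of fun i j => (b i : ι → ℂ) ⬝ᵥ A *ᵥ b j
  have hskew : ∀ u v, u ⬝ᵥ A *ᵥ v = -(v ⬝ᵥ A *ᵥ u) := by
    intro u v
    rw [dotProduct_mulVec, ← mulVec_transpose, h, neg_mulVec, neg_dotProduct, dotProduct_comm]
  have hG : Gᵀ = -G := by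
    ext i j
    exact hskew _ _
  have hdet : G.det ≠ 0 := by
    intro h0
    obtain ⟨y, hy0, hy⟩ := exists_mulVec_eq_zero_iff.2 h0
    let v : W := ∑ j, y j • b j
    have hv : ∀ w ∈ W, w ⬝ᵥ A *ᵥ v = 0 := by
      intro w hw
      have hb : ∀ i, (b i : ι → ℂ) ⬝ᵥ A *ᵥ v = 0 := by
        intro i
        have := congrFun hy i
        rw [mulVec, dotProduct] at this
        simp only [G, of_apply, Pi.zero_apply] at this
        rw [← this, Submodule.coe_sum, mulVec_sum, dotProduct_sum]
        exact Finset.sum_congr rfl fun j _ => by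
          rw [Submodule.coe_smul, mulVec_smul, dotProduct_smul, smul_eq_mul, mul_comm]
      have hwb := b.sum_repr ⟨w, hw⟩
      rw [← show ((⟨w, hw⟩ : W) : ι → ℂ) = w from rfl, ← hwb, Submodule.coe_sum, sum_dotProduct]
      exact Finset.sum_eq_zero fun i _ => by
        rw [Submodule.coe_smul, smul_dotProduct, hb, smul_zero]
    have hAv : A *ᵥ (v : ι → ℂ) = 0 := by
      refine dotProduct_eq_zero _ fun w => ?_
      obtain ⟨u, hu, w', hw', rfl⟩ := Submodule.mem_sup.1
        (hW.sup_eq_top ▸ Submodule.mem_top : w ∈ LinearMap.ker A.mulVecLin ⊔ W)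
      rw [dotProduct_comm, add_dotProduct, hv w' hw', hskew, show A *ᵥ u = 0 from hu]
      simp
    have hv0 : v = 0 := by
      have := Submodule.disjoint_def.1 hW.disjoint v hAv v.2
      exact Subtype.ext this
    apply hy0
    ext i
    exact Fintype.linearIndependent_iff.1 b.linearIndependent y hv0 i
  have h1 := congrArg det hG
  rw [det_transpose, det_neg, Fintype.card_fin] at h1
  rw [← hr]
  by_contra hodd
  rw [Nat.not_even_iff_odd] at hodd
  rw [hodd.neg_one_pow] at h1
  apply hdet
  linear_combination h1 / 2

theorem even_hdim_Eblk_add {n : ℕ} {P : Pencil n n} (hP : IsSkew P) (k : ℕ) (μ : ℂ) :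
    Even (hdim (Eblk k μ) (lin P) + k * n) := by
  let c (X : Matrix (Fin k) (Fin k) ℂ) (A : Matrix (Fin n) (Fin n) ℂ) :
      Matrix (Fin k × Fin n) (Fin k × Fin n) ℂ := of fun i j => X j.1 i.1.rev * A i.2 j.2
  let K := c (Eblk k μ).2 P.1 - c (Eblk k μ).1 P.2
  have hc : ∀ X A, (∀ i j : Fin k, X j i.rev = X i j.rev) → Aᵀ = -A → (c X A)ᵀ = -c X A := by
    intro X A hX hA
    ext i j
    have h1 : A j.2 i.2 = -A i.2 j.2 := congrFun (congrFun hA i.2) j.2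
    simp only [c, transpose_apply, of_apply, Matrix.neg_apply]
    rw [h1, hX, mul_neg]
  have hK : Kᵀ = -K := by
    rw [transpose_sub, hc _ _ _ hP.1, hc _ _ _ hP.2, neg_sub_neg, neg_sub]
    · intro i j
      simp only [Eblk, Jmat, of_apply, Fin.val_rev]
      have h1 : k - (i + 1) = (j : ℕ) ↔ k - (j + 1) = (i : ℕ) := by omega
      have h2 : k - (i + 1) = (j : ℕ) + 1 ↔ k - (j + 1) = (i : ℕ) + 1 := by omega
      simp only [h1, h2]
    · intro i j
      have h1 : j = i.rev ↔ i = j.rev := by rw [eq_comm, Fin.rev_eq_iff]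
      simp only [Eblk, one_apply, h1]
  have hker : LinearMap.ker K.mulVecLin = (LinearMap.ker (testMap (Eblk k μ) (lin P))).comap
      (LinearEquiv.curry ℂ ℂ (Fin k) (Fin n)).toLinearMap := by
    have key : ∀ x j u, (K *ᵥ x) (j, u) =
        testMap (Eblk k μ) (lin P) (LinearEquiv.curry ℂ ℂ (Fin k) (Fin n) x) j.rev u := by
      intro x j u
      rw [testMap_apply, Finset.sum_apply, mulVec, dotProduct, Fintype.sum_prod_type]
      refine Finset.sum_congr rfl fun i _ => ?_
      simp only [Pi.sub_apply, Pi.smul_apply, lin_fst_apply, lin_snd_apply, mulVec, dotProduct,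
        smul_eq_mul, Finset.mul_sum, ← Finset.sum_sub_distrib]
      refine Finset.sum_congr rfl fun v _ => ?_
      simp [K, c]
      ring
    ext x
    rw [Submodule.mem_comap, LinearMap.mem_ker, LinearMap.mem_ker]
    constructor
    · intro hx
      ext j u
      have := congrFun hx (j.rev, u)
      rw [mulVecLin_apply, key, Fin.rev_rev] at this
      exact this
    · intro hx
      ext ⟨j, u⟩
      rw [mulVecLin_apply, key]
      exact congrFun (congrFun hx j.rev) u
  have h1 := K.mulVecLin.finrank_range_add_finrank_ker
  have h2 : Module.finrank ℂ (LinearMap.ker K.mulVecLin) = hdim (Eblk k μ) (lin P) := by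
    rw [hker]
    exact (LinearEquiv.ofSubmodule' (LinearEquiv.curry ℂ ℂ (Fin k) (Fin n)) _).finrank_eq
  have h3 := even_rank_of_transpose_eq_neg hK
  rw [h2, Module.finrank_pi, Fintype.card_prod, Fintype.card_fin, Fintype.card_fin] at h1
  unfold Matrix.rank at h3
  rw [← h1]
  obtain ⟨r, hr⟩ := h3
  exact ⟨hdim (Eblk k μ) (lin P) + r, by omega⟩

namespace Blk

@[simp] theorem dual_dual (b : Blk) : b.dual.dual = b := by cases b <;> rfl

theorem dual_injective : Function.Injective dual :=
  Function.LeftInverse.injective dual_dual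

open Classical in
theorem sum_hL_one (l : List Blk) : (l.map (hL 1)).sum = l.count (L 0) := by
  induction l with
  | nil => rfl
  | cons b l ih =>
    rw [List.map_cons, List.sum_cons, ih, List.count_cons]
    rcases b with (_ | m) | m | ⟨j, ν⟩ <;> simp [hL, add_comm]

open Classical in
theorem sum_hL_add (l : List Blk) (k : ℕ) :
    (l.map (hL k)).sum + (l.map (hL (k + 2))).sum =
      2 * (l.map (hL (k + 1))).sum + l.count (L (k + 1)) := by
  induction l with
  | nil => rfl
  | cons b l ih =>
    simp only [List.map_cons, List.sum_cons, List.count_cons]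
    cases b with
    | L m =>
      simp only [hL, beq_iff_eq, L.injEq]
      split_ifs <;> omega
    | T m => simp [hL]; omega
    | E j ν => simp [hL]; omega

open Classical in
theorem sum_hE_add (l : List Blk) (k : ℕ) (μ : ℂ) :
    (l.map (hE k μ)).sum + (l.map (hE (k + 2) μ)).sum + l.count (E k μ) =
      2 * (l.map (hE (k + 1) μ)).sum := by
  induction l with
  | nil => rfl
  | cons b l ih =>
    simp only [List.map_cons, List.sum_cons, List.count_cons]
    cases b with
    | L m => simp [hE]; omega
    | T m => simp [hE]; omega
    | E j ν =>
      by_cases h : μ = ν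
      · subst h
        simp only [hE, beq_iff_eq, E.injEq, and_true, if_true]
        split_ifs <;> omega
      · have h' : ν ≠ μ := fun h'' => h h''.symm
        simpa [hE, h, h'] using ih

end Blk

theorem perm_of_sum_eq {l l' : List Blk}
    (h1 : ∀ k, (l.map (Blk.hL k)).sum = (l'.map (Blk.hL k)).sum)
    (h2 : ∀ k, ((l.map Blk.dual).map (Blk.hL k)).sum = ((l'.map Blk.dual).map (Blk.hL k)).sum)
    (h3 : ∀ k μ, (l.map (Blk.hE k μ)).sum = (l'.map (Blk.hE k μ)).sum) : l.Perm l' := by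
  classical
  have hL : ∀ l l' : List Blk, (∀ k, (l.map (Blk.hL k)).sum = (l'.map (Blk.hL k)).sum) →
      ∀ m, l.count (.L m) = l'.count (.L m) := by
    intro l l' h m
    cases m with
    | zero => rw [← Blk.sum_hL_one, ← Blk.sum_hL_one, h]
    | succ m =>
      have e1 := Blk.sum_hL_add l m
      have e2 := Blk.sum_hL_add l' m
      rw [h, h, h] at e1
      omega
  rw [List.perm_iff_count]
  rintro (m | m | ⟨k, μ⟩)
  · exact hL l l' h1 m
  · have := hL _ _ h2 m
    rw [show Blk.L m = (Blk.T m).dual from rfl, List.count_map_of_injective _ _ Blk.dual_injective,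
      List.count_map_of_injective _ _ Blk.dual_injective] at this
    exact this
  · have e1 := Blk.sum_hE_add l k μ
    have e2 := Blk.sum_hE_add l' k μ
    rw [h3, h3, h3] at e1
    omega

/-- The test dimensions form a complete invariant of pencils without infinite elementary
divisors. -/
theorem lIso_of_hdim_eq {m n m' n' : ℕ} {P : Pencil m n} {Q : Pencil m' n'}
    (hP : FinReg (lin P)) (hQ : FinReg (lin Q))
    (h1 : ∀ k, hdim (Lblk k) (lin P) = hdim (Lblk k) (lin Q))
    (h2 : ∀ k, hdim (Lblk k) (lin (tr P)) = hdim (Lblk k) (lin (tr Q)))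
    (h3 : ∀ k μ, hdim (Eblk k μ) (lin P) = hdim (Eblk k μ) (lin Q)) : LIso (lin P) (lin Q) := by
  obtain ⟨l, hl⟩ := exists_kcf P hP
  obtain ⟨l', hl'⟩ := exists_kcf Q hQ
  refine hl.trans ((kcf_perm (perm_of_sum_eq (fun k => ?_) (fun k => ?_) fun k μ => ?_)).trans
    hl'.symm)
  · rw [← hdim_Lblk_kcf, ← hdim_Lblk_kcf, ← hl.hdim_eq, ← hl'.hdim_eq, h1]
  · rw [← hdim_Lblk_kcf, ← hdim_Lblk_kcf, ← (lin_tr_kcf l).hdim_eq, ← (lin_tr_kcf l').hdim_eq,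
      ← hl.tr.hdim_eq, ← hl'.tr.hdim_eq, h2]
  · rw [← hdim_Eblk_kcf, ← hdim_Eblk_kcf, ← hl.hdim_eq, ← hl'.hdim_eq, h3]

theorem lin_skewPair_kcf (l : List Blk) :
    LIso (lin (skewPair (kcf l).1, skewPair (kcf l).2)) (lin (kcf (l ++ l.map Blk.dual))) :=
  (LIso.lin_skewPair (kcf l)).trans
    (((LIso.refl _).sum_congr (lin_tr_kcf l)).trans (kcf_append l _).symm)

theorem IsSkew.lin_tr {n : ℕ} {P : Pencil n n} (h : IsSkew P) : LIso (lin (tr P)) (lin P) := by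
  refine ⟨LinearEquiv.neg ℂ, LinearEquiv.refl ℂ _, fun x => ?_, fun x => ?_⟩
  · simp [tr, h.1, neg_mulVec, mulVec_neg]
  · simp [tr, h.2, neg_mulVec, mulVec_neg]

/-- A skew-symmetric pencil is equivalent to `skewPair W`, with `W` in canonical form and free of
blocks `LTblk`. -/
theorem IsSkew.exists_skewPair {n : ℕ} {P : Pencil n n} (hP : IsSkew P) (hreg : FinReg (lin P)) :
    ∃ l : List Blk, (∀ m, Blk.T m ∉ l) ∧ LIso (lin P) (lin (kcf (l ++ l.map Blk.dual))) := by
  classical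
  obtain ⟨l, hl⟩ := exists_kcf P hreg
  have hLT : ∀ m, l.count (.L m) = l.count (.T m) := by
    have : (l.map Blk.dual).Perm l := by
      have e := (lin_tr_kcf l).symm.trans (hl.symm.tr.trans (hP.lin_tr.trans hl))
      refine perm_of_sum_eq (fun k => ?_) (fun k => ?_) fun k μ => ?_
      · rw [← hdim_Lblk_kcf, ← hdim_Lblk_kcf, e.hdim_eq]
      · rw [← hdim_Lblk_kcf, ← hdim_Lblk_kcf, ← (lin_tr_kcf _).hdim_eq, ← (lin_tr_kcf _).hdim_eq,
          e.tr.hdim_eq]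
      · rw [← hdim_Eblk_kcf, ← hdim_Eblk_kcf, e.hdim_eq]
    intro m
    rw [← this.count_eq, show Blk.L m = (Blk.T m).dual from rfl,
      List.count_map_of_injective _ _ Blk.dual_injective]
  have hE : ∀ k μ, Even (l.count (.E k μ)) := by
    intro k μ
    have h1 := Blk.sum_hE_add l k μ
    have h2 := even_hdim_Eblk_add hP k μ
    have h3 := even_hdim_Eblk_add hP (k + 2) μ
    rw [hl.hdim_eq, hdim_Eblk_kcf] at h2 h3
    rw [Nat.even_iff] at *
    rw [add_mul] at h3
    omega
  let c : Blk → ℕ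
    | .L m => l.count (.L m)
    | .T _ => 0
    | .E k μ => l.count (.E k μ) / 2
  let s : Multiset Blk := ∑ b ∈ l.toFinset, c b • {b}
  have hs : ∀ b, s.count b = c b := by
    intro b
    rw [Multiset.count_sum']
    simp only [Multiset.count_nsmul, Multiset.count_singleton, mul_ite, mul_one, mul_zero,
      Finset.sum_ite_eq]
    split_ifs with hb
    · rfl
    · rw [List.mem_toFinset, ← List.count_eq_zero] at hb
      cases b with
      | L m => exact hb.symm
      | T m => rfl
      | E k μ => exact (Nat.div_eq_of_lt (by omega)).symm
  have hs' : ∀ b, s.toList.count b = c b := fun b => by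
    rw [← Multiset.coe_count, Multiset.coe_toList, hs]
  refine ⟨s.toList, fun m hm => ?_, hl.trans (kcf_perm (List.perm_iff_count.2 fun b => ?_))⟩
  · rw [← List.count_pos_iff, hs'] at hm
    exact lt_irrefl _ hm
  · have h1 : (s.toList.map Blk.dual).count b = c b.dual := by
      have := List.count_map_of_injective s.toList _ Blk.dual_injective b.dual
      rwa [Blk.dual_dual, hs'] at this
    rw [List.count_append, hs', h1]
    cases b with
    | L m => rfl
    | T m => exact (hLT m).symm.trans (zero_add _).symm
    | E k μ =>
      have := Nat.even_iff.1 (hE k μ)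
      simp only [c, Blk.dual]
      omega

section Degen

variable {V U V' U' V'' U'' : Type}
  [AddCommGroup V] [Module ℂ V] [AddCommGroup U] [Module ℂ U]
  [AddCommGroup V'] [Module ℂ V'] [AddCommGroup U'] [Module ℂ U']
  [AddCommGroup V''] [Module ℂ V''] [AddCommGroup U''] [Module ℂ U'']

/-- `f` degenerates to `g`: matrices of `g` lie in the orbit closure of matrices of `f`. -/
def Degen (f : LPair V U) (g : LPair V' U') : Prop :=
  ∃ (m n : ℕ) (P Q : Pencil m n), LIso f (lin P) ∧ LIso (lin Q) g ∧ Q ∈ closure (orbE P)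

theorem Degen.congr_left {f : LPair V U} {g : LPair V' U'} {f' : LPair V'' U''} (h : LIso f' f)
    (hd : Degen f g) : Degen f' g := by
  obtain ⟨m, n, P, Q, h1, h2, h3⟩ := hd
  exact ⟨m, n, P, Q, h.trans h1, h2, h3⟩

theorem Degen.congr_right {f : LPair V U} {g : LPair V' U'} {g' : LPair V'' U''}
    (hd : Degen f g) (h : LIso g g') : Degen f g' := by
  obtain ⟨m, n, P, Q, h1, h2, h3⟩ := hd
  exact ⟨m, n, P, Q, h1, h2.trans h, h3⟩

theorem Degen.sum_right {f : LPair V U} {g : LPair V' U'} (hd : Degen f g) {p q : ℕ}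
    (R : Pencil p q) : Degen (f.sum (lin R)) (g.sum (lin R)) := by
  obtain ⟨m, n, P, Q, h1, h2, h3⟩ := hd
  refine ⟨_, _, dsum P R, dsum Q R, (h1.sum_congr (LIso.refl _)).trans (LIso.lin_dsum P R).symm,
    (LIso.lin_dsum Q R).trans (h2.sum_congr (LIso.refl _)), ?_⟩
  have hc : Continuous fun X : Pencil m n => dsum X R := by
    unfold dsum
    fun_prop
  refine map_mem_closure (f := fun X : Pencil m n => dsum X R) hc h3 fun X hX => ?_
  rw [orbE, Set.mem_ofPred_eq, strictEquiv_iff] at hX ⊢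
  exact (LIso.lin_dsum P R).trans ((hX.sum_congr (LIso.refl _)).trans (LIso.lin_dsum X R).symm)

/-- The pair of linear maps with blocks `a`, `c`, `0`, `b`. -/
def LPair.tri (a : LPair V U) (b : LPair V' U') (c : LPair V' U) : LPair (V × V') (U × U') :=
  ((a.1 ∘ₗ LinearMap.fst ℂ V V' + c.1 ∘ₗ LinearMap.snd ℂ V V').prod (b.1 ∘ₗ LinearMap.snd ℂ V V'),
    (a.2 ∘ₗ LinearMap.fst ℂ V V' + c.2 ∘ₗ LinearMap.snd ℂ V V').prod (b.2 ∘ₗ LinearMap.snd ℂ V V'))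

theorem LIso.tri_smul (a : LPair V U) (b : LPair V' U') (c : LPair V' U) {t : ℂ} (ht : t ≠ 0) :
    LIso (a.tri b c) (a.tri b (t • c)) := by
  refine ⟨(LinearEquiv.smulOfNeZero ℂ V t ht).prodCongr (LinearEquiv.refl ℂ V'),
    (LinearEquiv.smulOfNeZero ℂ U t ht).prodCongr (LinearEquiv.refl ℂ U'),
    fun x => ?_, fun x => ?_⟩ <;> simp [LPair.tri]

theorem LIso.tri_zero (a : LPair V U) (b : LPair V' U') : LIso (a.tri b 0) (a.sum b) := by
  refine ⟨LinearEquiv.refl ℂ _, LinearEquiv.refl ℂ _, fun x => ?_, fun x => ?_⟩ <;>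
    simp [LPair.tri, LPair.sum]

/-- An extension degenerates to the direct sum. -/
theorem Degen.tri [FiniteDimensional ℂ V] [FiniteDimensional ℂ U] [FiniteDimensional ℂ V']
    [FiniteDimensional ℂ U'] (a : LPair V U) (b : LPair V' U') (c : LPair V' U) :
    Degen (a.tri b c) (a.sum b) := by
  let v := Module.finBasis ℂ (V × V')
  let u := Module.finBasis ℂ (U × U')
  let M (f : LPair (V × V') (U × U')) : Pencil (Module.finrank ℂ (U × U'))
      (Module.finrank ℂ (V × V')) :=
    (LinearMap.toMatrix v u f.1, LinearMap.toMatrix v u f.2)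
  have hM : ∀ f, LIso f (lin (M f)) := fun f =>
    ⟨v.equivFun, u.equivFun, fun x => (LinearMap.toMatrix_mulVec_repr v u f.1 x).symm,
      fun x => (LinearMap.toMatrix_mulVec_repr v u f.2 x).symm⟩
  refine ⟨_, _, M (a.tri b c), M (a.tri b 0), hM _, (hM _).symm.trans (LIso.tri_zero a b), ?_⟩
  have hlin : ∀ t : ℂ, a.tri b (t • c) = a.tri b 0 + t • (a.tri b c - a.tri b 0) := by
    intro t
    ext x <;> simp [LPair.tri]
  have hc : Continuous fun t : ℂ => M (a.tri b (t • c)) := by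
    have : (fun t : ℂ => M (a.tri b (t • c))) = fun t =>
        M (a.tri b 0) + t • (M (a.tri b c) - M (a.tri b 0)) := by
      funext t
      rw [hlin]
      simp [M, map_add, map_sub]
    rw [this]
    fun_prop
  have h0 : (0 : ℂ) ∈ closure {t : ℂ | t ≠ 0} := by
    have := dense_compl_singleton (0 : ℂ)
    exact this 0
  have := map_mem_closure hc h0 (t := orbE (M (a.tri b c))) fun t ht =>
    strictEquiv_iff.2 ((hM _).symm.trans ((LIso.tri_smul a b c ht).trans (hM _)))
  rwa [zero_smul] at this

/-- The middle term of a short exact sequence degenerates to the sum of the outer terms. -/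
theorem Degen.of_exact [FiniteDimensional ℂ V] [FiniteDimensional ℂ U] [FiniteDimensional ℂ V']
    [FiniteDimensional ℂ U'] [FiniteDimensional ℂ V''] [FiniteDimensional ℂ U'']
    {f : LPair V U} {a : LPair V' U'} {b : LPair V'' U''}
    (φ : V' →ₗ[ℂ] V) (φ' : U' →ₗ[ℂ] U) (ψ : V →ₗ[ℂ] V'') (ψ' : U →ₗ[ℂ] U'')
    (hφ : Function.Injective φ) (hφ' : Function.Injective φ')
    (hψ : Function.Surjective ψ) (hψ' : Function.Surjective ψ')
    (hψφ : ∀ x, ψ (φ x) = 0) (hψφ' : ∀ x, ψ' (φ' x) = 0)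
    (hV : Module.finrank ℂ V = Module.finrank ℂ V' + Module.finrank ℂ V'')
    (hU : Module.finrank ℂ U = Module.finrank ℂ U' + Module.finrank ℂ U'')
    (h1 : ∀ x, f.1 (φ x) = φ' (a.1 x)) (h2 : ∀ x, f.2 (φ x) = φ' (a.2 x))
    (h3 : ∀ x, b.1 (ψ x) = ψ' (f.1 x)) (h4 : ∀ x, b.2 (ψ x) = ψ' (f.2 x)) :
    Degen f (a.sum b) := by
  obtain ⟨σ, hσ⟩ := LinearMap.exists_rightInverse_of_surjective ψ (LinearMap.range_eq_top.2 hψ)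
  obtain ⟨σ', hσ'⟩ := LinearMap.exists_rightInverse_of_surjective ψ' (LinearMap.range_eq_top.2 hψ')
  obtain ⟨ρ, hρ⟩ := LinearMap.exists_leftInverse_of_injective φ' (LinearMap.ker_eq_bot.2 hφ')
  have hσ : ∀ y, ψ (σ y) = y := fun y => LinearMap.congr_fun hσ y
  have hσ' : ∀ y, ψ' (σ' y) = y := fun y => LinearMap.congr_fun hσ' y
  have hρ : ∀ y, ρ (φ' y) = y := fun y => LinearMap.congr_fun hρ y
  have bij : ∀ {X Y Z : Type} [AddCommGroup X] [Module ℂ X] [AddCommGroup Y] [Module ℂ Y]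
      [AddCommGroup Z] [Module ℂ Z] [FiniteDimensional ℂ X] [FiniteDimensional ℂ Y]
      [FiniteDimensional ℂ Z] (α : X →ₗ[ℂ] Y) (β : Y →ₗ[ℂ] Z) (τ : Z →ₗ[ℂ] Y),
      Function.Injective α → (∀ x, β (α x) = 0) → (∀ y, β (τ y) = y) →
      Module.finrank ℂ Y = Module.finrank ℂ X + Module.finrank ℂ Z →
      ∃ e : (X × Z) ≃ₗ[ℂ] Y, ∀ x, e x = α x.1 + τ x.2 := by
    intro X Y Z _ _ _ _ _ _ _ _ _ α β τ hα hβα hβτ hdim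
    have hinj : Function.Injective (α.coprod τ) := by
      rw [← LinearMap.ker_eq_bot, LinearMap.ker_eq_bot']
      rintro ⟨x, z⟩ hxz
      rw [LinearMap.coprod_apply] at hxz
      have hz : z = 0 := by
        have := congrArg β hxz
        rwa [map_add, hβα, hβτ, zero_add, map_zero] at this
      subst hz
      have hx : x = 0 := hα (by simpa using hxz)
      rw [hx]
      rfl
    exact ⟨LinearEquiv.ofInjectiveOfFinrankEq (α.coprod τ) hinj
      (by rw [Module.finrank_prod, hdim]), fun x => LinearMap.coprod_apply _ _ _⟩
  obtain ⟨e, he⟩ := bij φ ψ σ hφ hψφ hσ hV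
  obtain ⟨e', he'⟩ := bij φ' ψ' σ' hφ' hψφ' hσ' hU
  have hrange : ∀ u, ψ' u = 0 → φ' (ρ u) = u := by
    intro u hu
    obtain ⟨⟨x, z⟩, rfl⟩ := e'.surjective u
    rw [he', map_add, hψφ', hσ', zero_add] at hu
    simp only at hu
    rw [he', hu, map_zero, add_zero, hρ]
  let c : LPair V'' U' := (ρ ∘ₗ (f.1 ∘ₗ σ - σ' ∘ₗ b.1), ρ ∘ₗ (f.2 ∘ₗ σ - σ' ∘ₗ b.2))
  refine Degen.congr_left (LIso.symm ⟨e, e', fun x => ?_, fun x => ?_⟩) (Degen.tri a b c)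
  · rw [he, he', map_add, h1]
    change φ' (a.1 x.1 + ρ (f.1 (σ x.2) - σ' (b.1 x.2))) + σ' (b.1 x.2) =
      φ' (a.1 x.1) + f.1 (σ x.2)
    rw [map_add, hrange]
    · abel
    · rw [map_sub, ← h3, hσ, hσ', sub_self]
  · rw [he, he', map_add, h2]
    change φ' (a.2 x.1 + ρ (f.2 (σ x.2) - σ' (b.2 x.2))) + σ' (b.2 x.2) =
      φ' (a.2 x.1) + f.2 (σ x.2)
    rw [map_add, hrange]
    · abel
    · rw [map_sub, ← h4, hσ, hσ', sub_self]

end Degen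

section Shift

/-- Extension of a vector by zero to all natural indices. -/
def zext {a : ℕ} (x : Fin a → ℂ) (i : ℕ) : ℂ := if h : i < a then x ⟨i, h⟩ else 0

theorem zext_of_lt {a : ℕ} (x : Fin a → ℂ) {i : ℕ} (h : i < a) : zext x i = x ⟨i, h⟩ := dif_pos h

theorem zext_of_le {a : ℕ} (x : Fin a → ℂ) {i : ℕ} (h : a ≤ i) : zext x i = 0 :=
  dif_neg (not_lt.2 h)

@[simp] theorem zext_fin {a : ℕ} (x : Fin a → ℂ) (i : Fin a) : zext x i = x i := dif_pos i.2

/-- The shift by `s`, with target `ℂ ^ a`. -/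
def shift (a : ℕ) {b : ℕ} (s : ℕ) : (Fin b → ℂ) →ₗ[ℂ] (Fin a → ℂ) where
  toFun x i := zext x (i + s)
  map_add' x y := by
    ext i
    simp only [zext, Pi.add_apply]
    split_ifs <;> simp
  map_smul' c x := by
    ext i
    simp only [zext, Pi.smul_apply, smul_eq_mul, RingHom.id_apply]
    split_ifs <;> simp

theorem shift_apply {a b s : ℕ} (x : Fin b → ℂ) (i : Fin a) : shift a s x i = zext x (i + s) := rfl

theorem zext_shift {a b s : ℕ} (x : Fin b → ℂ) (i : ℕ) :
    zext (shift a s x) i = if i < a then zext x (i + s) else 0 := by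
  by_cases h : i < a
  · rw [zext_of_lt _ h, if_pos h, shift_apply]
  · rw [zext_of_le _ (not_lt.1 h), if_neg h]

theorem Lblk_fst_mulVec (m : ℕ) (x : Fin (m + 1) → ℂ) : (Lblk m).1 *ᵥ x = shift m 1 x := by
  ext i
  rw [Lblk_fst_apply, shift_apply, zext_of_lt _ (by omega)]
  rfl

theorem Lblk_snd_mulVec (m : ℕ) (x : Fin (m + 1) → ℂ) : (Lblk m).2 *ᵥ x = shift m 0 x := by
  ext i
  rw [Lblk_snd_apply, shift_apply, zext_of_lt _ (by omega)]
  rfl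

theorem Eblk_fst_mulVec (k : ℕ) (μ : ℂ) (x : Fin k → ℂ) :
    (Eblk k μ).1 *ᵥ x = μ • x + shift k 1 x := by
  ext i
  rw [Eblk_fst_apply, Pi.add_apply, shift_apply]
  rfl

theorem shift_surjective {a b s : ℕ} (h : a + s ≤ b) :
    Function.Surjective (shift a s : (Fin b → ℂ) →ₗ[ℂ] (Fin a → ℂ)) := by
  intro y
  refine ⟨fun i => if s ≤ i then zext y (i - s) else 0, ?_⟩
  ext i
  rw [shift_apply, zext_of_lt _ (by omega)]
  simp

theorem shift_prod_injective {a a' b s s' : ℕ}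
    (h : ∀ i < b, (s ≤ i ∧ i < a + s) ∨ (s' ≤ i ∧ i < a' + s')) :
    Function.Injective ((shift a s).prod (shift a' s') : (Fin b → ℂ) →ₗ[ℂ] _) := by
  rw [← LinearMap.ker_eq_bot, LinearMap.ker_eq_bot']
  intro x hx
  obtain ⟨h1, h2⟩ := Prod.ext_iff.1 hx
  have key : ∀ {c t : ℕ} (_ : shift c t x = 0) (i : Fin b), t ≤ i ∧ (i : ℕ) < c + t → x i = 0 := by
    intro c t h0 i hi
    have := congrFun h0 ⟨i - t, by omega⟩
    rw [shift_apply] at this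
    simpa [Nat.sub_add_cancel hi.1] using this
  ext i
  exact (h i i.2).elim (key h1 i) (key h2 i)

theorem shift_comm {a b c d s t : ℕ} (h : ∀ i < d, (i + s < b ∧ i + t < c) ∨ a ≤ i + s + t)
    (x : Fin a → ℂ) : shift d s (shift b t x) = shift d t (shift c s x) := by
  ext i
  simp only [shift_apply, zext_shift]
  have e : (i : ℕ) + t + s = i + s + t := by omega
  rw [e]
  rcases h i i.2 with ⟨h1, h2⟩ | h1
  · rw [if_pos h1, if_pos h2]
  · rw [zext_of_le x h1, ite_self, ite_self]

theorem degen_Lblk_Lblk {j k : ℕ} (h : j + 1 ≤ k) :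
    Degen ((lin (Lblk (j + 1))).sum (lin (Lblk k))) ((lin (Lblk (k + 1))).sum (lin (Lblk j))) := by
  obtain ⟨s, rfl⟩ := Nat.exists_eq_add_of_le (Nat.le_of_succ_le h)
  have hsurj : ∀ d e : ℕ, Function.Surjective ((shift (j + d) 0).comp (LinearMap.fst ℂ _ _) -
      (shift (j + d) s).comp (LinearMap.snd ℂ _ _) :
        (Fin (j + 1 + d) → ℂ) × (Fin e → ℂ) →ₗ[ℂ] _) := by
    intro d e y
    obtain ⟨x, rfl⟩ := shift_surjective (b := j + 1 + d) (s := 0) (by omega) y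
    exact ⟨(x, 0), by simp⟩
  refine Degen.of_exact ((shift (j + 1 + 1) s).prod (shift (j + s + 1) 0))
    ((shift (j + 1) s).prod (shift (j + s) 0)) _ _ (shift_prod_injective fun i hi => by omega)
    (shift_prod_injective fun i hi => by omega) (hsurj 1 (j + s + 1)) (hsurj 0 (j + s)) ?_ ?_ ?_ ?_
    ?_ ?_ ?_ ?_
  · intro x
    simp [sub_eq_zero]
    exact shift_comm (fun i hi => by omega) x
  · intro x
    simp [sub_eq_zero]
    exact shift_comm (fun i hi => by omega) x
  · simp
    omega
  · simp
    omega
  · intro x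
    refine Prod.ext ?_ ?_ <;> simp [LPair.sum, Lblk_fst_mulVec] <;>
      exact shift_comm (fun i hi => by omega) x
  · intro x
    refine Prod.ext ?_ ?_ <;> simp [LPair.sum, Lblk_snd_mulVec]
    exact shift_comm (fun i hi => by omega) x
  · rintro ⟨x, y⟩
    simp [LPair.sum, Lblk_fst_mulVec]
    rw [shift_comm (s := 1) (t := 0), shift_comm (s := 1) (t := s)] <;> intros <;> omega
  · rintro ⟨x, y⟩
    simp [LPair.sum, Lblk_snd_mulVec]
    exact shift_comm (fun i hi => by omega) y

theorem degen_Eblk_Eblk (b s : ℕ) (μ : ℂ) :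
    Degen ((lin (Eblk (b + s + 1) μ)).sum (lin (Eblk b μ)))
      ((lin (Eblk (b + s) μ)).sum (lin (Eblk (b + 1) μ))) := by
  have hφ : Function.Injective ((shift (b + s + 1) 0).prod (shift b s) :
      (Fin (b + s) → ℂ) →ₗ[ℂ] _) := shift_prod_injective fun i hi => by omega
  have hψ : Function.Surjective ((shift (b + 1) s).comp (LinearMap.fst ℂ _ _) -
      (shift (b + 1) 0).comp (LinearMap.snd ℂ _ _) :
        (Fin (b + s + 1) → ℂ) × (Fin b → ℂ) →ₗ[ℂ] _) := by
    intro y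
    obtain ⟨x, rfl⟩ := shift_surjective (b := b + s + 1) (s := s) (by omega) y
    exact ⟨(x, 0), by simp⟩
  have h0 : ∀ x, ((shift (b + 1) s).comp (LinearMap.fst ℂ _ _) -
      (shift (b + 1) 0).comp (LinearMap.snd ℂ _ _) :
        (Fin (b + s + 1) → ℂ) × (Fin b → ℂ) →ₗ[ℂ] _)
        (((shift (b + s + 1) 0).prod (shift b s) : (Fin (b + s) → ℂ) →ₗ[ℂ] _) x) = 0 := by
    intro x
    simp [sub_eq_zero]
    exact shift_comm (fun i hi => by omega) x
  refine Degen.of_exact _ _ _ _ hφ hφ hψ hψ h0 h0 ?_ ?_ ?_ ?_ ?_ ?_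
  · simp; omega
  · simp; omega
  · intro x
    refine Prod.ext ?_ ?_ <;> simp [LPair.sum, Eblk_fst_mulVec] <;>
      exact shift_comm (fun i hi => by omega) x
  · intro x
    refine Prod.ext ?_ ?_ <;> simp [LPair.sum, Eblk_snd_apply]
  · rintro ⟨x, y⟩
    simp [LPair.sum, Eblk_fst_mulVec, smul_sub]
    rw [shift_comm (s := 1) (t := s) (c := b + s + 1), shift_comm (s := 1) (t := 0) (c := b)]
    · abel
    all_goals intros; omega
  · rintro ⟨x, y⟩
    simp [LPair.sum, Eblk_snd_apply]

/-- The linear map `ξ ↦ (first entry of T ^ i ξ)_i`, where `T` is the first matrix of `E_k(μ)`. -/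
def krylov (μ : ℂ) (k n : ℕ) : (Fin k → ℂ) →ₗ[ℂ] (Fin n → ℂ) :=
  LinearMap.pi fun i => LinearMap.proj 0 ∘ₗ shift 1 0 ∘ₗ (μ • LinearMap.id + shift k 1) ^ (i : ℕ)

theorem krylov_apply (μ : ℂ) {k n : ℕ} (x : Fin k → ℂ) (i : Fin n) :
    krylov μ k n x i = zext (((μ • LinearMap.id + shift k 1) ^ (i : ℕ) :
      (Fin k → ℂ) →ₗ[ℂ] (Fin k → ℂ)) x) 0 := by
  simp [krylov, shift_apply]

theorem shift_krylov_zero (μ : ℂ) {k n n' : ℕ} (h : n ≤ n') (x : Fin k → ℂ) :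
    shift n 0 (krylov μ k n' x) = krylov μ k n x := by
  ext i
  rw [shift_apply, zext_of_lt _ (by omega), krylov_apply, krylov_apply]
  rfl

theorem shift_krylov_one (μ : ℂ) {k n n' : ℕ} (h : n + 1 ≤ n') (x : Fin k → ℂ) :
    shift n 1 (krylov μ k n' x) = krylov μ k n (μ • x + shift k 1 x) := by
  ext i
  rw [shift_apply, zext_of_lt _ (by omega), krylov_apply, krylov_apply, pow_succ]
  rfl

theorem krylov_shift (μ : ℂ) (k n : ℕ) (x : Fin (k + 1) → ℂ) :
    krylov μ k n (shift k 1 x) = krylov μ (k + 1) n (shift (k + 1) 1 x) := by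
  have h : ∀ i : ℕ, ∀ x : Fin (k + 1) → ℂ,
      ((μ • LinearMap.id + shift k 1) ^ i : (Fin k → ℂ) →ₗ[ℂ] (Fin k → ℂ)) (shift k 1 x) =
        shift k 0 (((μ • LinearMap.id + shift (k + 1) 1) ^ i :
          (Fin (k + 1) → ℂ) →ₗ[ℂ] (Fin (k + 1) → ℂ)) (shift (k + 1) 1 x)) := by
    intro i
    induction i with
    | zero =>
      intro x
      ext j
      simp [shift_apply, zext_shift]
    | succ i ih =>
      intro x
      rw [pow_succ, pow_succ, Module.End.mul_apply, Module.End.mul_apply]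
      have e1 : (μ • LinearMap.id + shift k 1 : (Fin k → ℂ) →ₗ[ℂ] (Fin k → ℂ)) (shift k 1 x) =
          shift k 1 (μ • x + shift (k + 1) 1 x) := by
        simp
        exact shift_comm (fun i hi => by omega) x
      rw [e1, ih]
      simp
  ext i
  rw [krylov_apply, krylov_apply, h, zext_shift]
  split_ifs with h0
  · rfl
  · obtain rfl : k = 0 := by omega
    have : ∀ x : Fin 1 → ℂ, shift 1 1 x = 0 := fun x => by
      ext i
      rw [shift_apply, zext_of_le _ (by omega)]
      rfl
    simp [this, zext]

theorem degen_Lblk_Eblk (m e : ℕ) (μ : ℂ) :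
    Degen ((lin (Lblk (m + 1))).sum (lin (Eblk e μ)))
      ((lin (Eblk (e + 1) μ)).sum (lin (Lblk m))) := by
  have hφ : ∀ n, Function.Injective
      ((krylov μ (e + 1) (n + 1)).prod (shift e 1) : (Fin (e + 1) → ℂ) →ₗ[ℂ] _) := by
    intro n
    rw [← LinearMap.ker_eq_bot, LinearMap.ker_eq_bot']
    intro x hx
    obtain ⟨h1, h2⟩ := Prod.ext_iff.1 hx
    ext i
    refine Fin.cases ?_ (fun i => ?_) i
    · have := congrFun h1 0
      simpa [krylov_apply, zext_of_lt] using this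
    · have := congrFun h2 i
      change zext x (i + 1) = 0 at this
      rwa [zext_of_lt _ (by omega)] at this
  have hψ : ∀ n, Function.Surjective
      ((shift n 1 - μ • shift n 0) ∘ₗ LinearMap.fst ℂ _ _ - krylov μ e n ∘ₗ LinearMap.snd ℂ _ _ :
        (Fin (n + 1) → ℂ) × (Fin e → ℂ) →ₗ[ℂ] _) := by
    intro n y
    refine ⟨(fun i => Nat.rec 0 (fun i c => zext y i + μ * c) (i : ℕ), 0), ?_⟩
    ext i
    simp [shift_apply, zext_of_lt]
  have h0 : ∀ n x, ((shift n 1 - μ • shift n 0) ∘ₗ LinearMap.fst ℂ _ _ -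
      krylov μ e n ∘ₗ LinearMap.snd ℂ _ _ : (Fin (n + 1) → ℂ) × (Fin e → ℂ) →ₗ[ℂ] _)
        (((krylov μ (e + 1) (n + 1)).prod (shift e 1) : (Fin (e + 1) → ℂ) →ₗ[ℂ] _) x) = 0 := by
    intro n x
    simp [shift_krylov_one, shift_krylov_zero, krylov_shift]
  refine Degen.of_exact _ _ _ _ (hφ (m + 1)) (hφ m) (hψ (m + 1)) (hψ m) (h0 _) (h0 _)
    ?_ ?_ ?_ ?_ ?_ ?_
  · simp; omega
  · simp; omega
  · intro x
    refine Prod.ext ?_ ?_ <;> simp [LPair.sum, Eblk_fst_mulVec, Lblk_fst_mulVec, shift_krylov_one]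
    exact shift_comm (fun i hi => by omega) x
  · intro x
    refine Prod.ext ?_ ?_ <;> simp [LPair.sum, Eblk_snd_apply, Lblk_snd_mulVec, shift_krylov_zero]
  · rintro ⟨x, y⟩
    simp [LPair.sum, Eblk_fst_mulVec, Lblk_fst_mulVec, shift_krylov_one]
    rw [shift_comm (s := 1) (t := 0) (c := m + 1)]
    intros; omega
  · rintro ⟨x, y⟩
    simp [LPair.sum, Eblk_snd_apply, Lblk_snd_mulVec, shift_krylov_zero]
    rw [shift_comm (s := 0) (t := 1) (c := m + 1)]
    intros; omega

end Shift

section Cyclic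

open Polynomial

variable {V U V' U' : Type} [AddCommGroup V] [Module ℂ V] [AddCommGroup U] [Module ℂ U]
  [AddCommGroup V'] [Module ℂ V'] [AddCommGroup U'] [Module ℂ U']

/-- The second map of `f` is invertible and `f.2⁻¹ ∘ f.1` has a vector whose annihilator is
contained in the ideal generated by `p`. -/
def Cyclic (f : LPair V U) (p : ℂ[X]) : Prop :=
  Function.Bijective f.2 ∧ ∃ Z : ℂ[X] →ₗ[ℂ] V,
    (∀ g, f.1 (Z g) = f.2 (Z (X * g))) ∧ ∀ g, Z g = 0 → p ∣ g

theorem Cyclic.congr {f : LPair V U} {f' : LPair V' U'} {p : ℂ[X]} (hf : Cyclic f p)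
    (h : LIso f f') : Cyclic f' p := by
  obtain ⟨e, e', h1, h2⟩ := h
  obtain ⟨hb, Z, hZ, hp⟩ := hf
  have h3 : ⇑f'.2 = e' ∘ f.2 ∘ e.symm := by
    ext x
    simp [h2]
  refine ⟨h3 ▸ e'.bijective.comp (hb.comp e.symm.bijective), e.toLinearMap ∘ₗ Z, fun g => ?_,
    fun g hg => hp g (by simpa using hg)⟩
  simp [← h1, ← h2, hZ]

theorem Cyclic.sum {f : LPair V U} {f' : LPair V' U'} {p p' : ℂ[X]} (hf : Cyclic f p)
    (hf' : Cyclic f' p') (hp : IsCoprime p p') : Cyclic (f.sum f') (p * p') := by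
  obtain ⟨hb, Z, hZ, h⟩ := hf
  obtain ⟨hb', Z', hZ', h'⟩ := hf'
  refine ⟨hb.prodMap hb', Z.prod Z', fun g => Prod.ext (hZ g) (hZ' g), fun g hg => ?_⟩
  obtain ⟨h1, h2⟩ := Prod.ext_iff.1 hg
  exact hp.mul_dvd (h g h1) (h' g h2)

theorem cyclic_of_subsingleton [Subsingleton V] [Subsingleton U] (f : LPair V U) :
    Cyclic f 1 :=
  ⟨⟨fun _ _ _ => Subsingleton.elim _ _, fun _ => ⟨0, Subsingleton.elim _ _⟩⟩, 0,
    fun _ => Subsingleton.elim _ _, fun g _ => one_dvd g⟩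

theorem cyclic_Eblk (k : ℕ) (μ : ℂ) : Cyclic (lin (Eblk (k + 1) μ)) ((X - C μ) ^ (k + 1)) := by
  have h2 : ∀ x, (lin (Eblk (k + 1) μ)).2 x = x := fun x => by simp [Eblk_snd_apply]
  refine ⟨⟨fun x y h => by simpa [h2] using h, fun x => ⟨x, h2 x⟩⟩, ?_⟩
  set T : Module.End ℂ (Fin (k + 1) → ℂ) := (lin (Eblk (k + 1) μ)).1 with hT
  set v : Fin (k + 1) → ℂ := Pi.single (Fin.last k) 1
  have hTx : ∀ x, T x = μ • x + shift (k + 1) 1 x := fun x => by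
    rw [hT, lin_fst_apply, Eblk_fst_mulVec]
  have hlast : ∀ (h : ℂ[X]) (x), aeval T h x (Fin.last k) = h.eval μ * x (Fin.last k) := by
    intro h
    induction h using Polynomial.induction_on' with
    | add p q hp hq => intro x; simp [hp, hq, add_mul]
    | monomial n c =>
      induction n with
      | zero => intro x; simp
      | succ n ih =>
        intro x
        rw [← monomial_mul_X, map_mul, aeval_X, Module.End.mul_apply, ih, hTx]
        have : shift (k + 1) 1 x (Fin.last k) = 0 := zext_of_le _ (by simp)
        simp [this]
        ring
  have hpow : ∀ (j : ℕ) (x : Fin (k + 1) → ℂ), aeval T ((X - C μ) ^ j) x = shift (k + 1) j x := by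
    intro j
    induction j with
    | zero => intro x; ext i; simp [shift_apply]
    | succ j ih =>
      intro x
      rw [pow_succ, map_mul, Module.End.mul_apply, ih]
      have : aeval T (X - C μ) x = shift (k + 1) 1 x := by
        simp [hTx, Algebra.algebraMap_eq_smul_one]
      rw [this]
      ext i
      simp only [shift_apply, zext_shift]
      split_ifs with h
      · rw [add_assoc]
      · rw [zext_of_le _ (by omega)]
  refine ⟨(LinearMap.applyₗ v) ∘ₗ (aeval T).toLinearMap, fun g => ?_, fun g hg => ?_⟩
  · rw [h2]
    simp [T]
  · replace hg : aeval T g v = 0 := hg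
    have key : ∀ j ≤ k + 1, (X - C μ) ^ j ∣ g := by
      intro j
      induction j with
      | zero => simp
      | succ j ih =>
        intro hj
        obtain ⟨h, rfl⟩ := ih (by omega)
        have h0 : h.eval μ = 0 := by
          rw [map_mul, Module.End.mul_apply, hpow] at hg
          have := congrFun hg ⟨k - j, by omega⟩
          rw [shift_apply, zext_of_lt _ (by simp; omega)] at this
          have e : (⟨k - j + j, by omega⟩ : Fin (k + 1)) = Fin.last k := Fin.ext (by simp; omega)
          simp only [e, hlast] at this
          simpa [v] using this
        rw [pow_succ]
        exact mul_dvd_mul_left _ (dvd_iff_isRoot.2 h0)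
    exact key _ le_rfl

theorem Cyclic.degen [FiniteDimensional ℂ V] [FiniteDimensional ℂ U] {f : LPair V U} {p : ℂ[X]}
    (hf : Cyclic f p) {a b : ℕ} (hp : p.natDegree = a + b + 1)
    (hV : Module.finrank ℂ V = a + b + 1) :
    Degen f ((lin (LTblk a)).sum (lin (Lblk b))) := by
  obtain ⟨hb, Z, hZ, hd⟩ := hf
  let e := LinearEquiv.ofBijective f.2 hb
  have he : ∀ x, e x = f.2 x := fun _ => rfl
  let T : Module.End ℂ V := e.symm.toLinearMap ∘ₗ f.1
  have hT : ∀ x, T x = e.symm (f.1 x) := fun _ => rfl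
  let φ : ∀ n, (Fin n → ℂ) →ₗ[ℂ] V := fun n =>
    Fintype.linearCombination ℂ fun i : Fin n => Z (X ^ (i : ℕ))
  have hφZ : ∀ n (x : Fin n → ℂ), φ n x = Z (∑ i : Fin n, x i • X ^ (i : ℕ)) := by
    intro n x
    simp [φ, Fintype.linearCombination_apply]
  have hφ : ∀ n ≤ a + b + 1, Function.Injective (φ n) := by
    intro n hn
    rw [← LinearMap.ker_eq_bot, LinearMap.ker_eq_bot']
    intro x hx
    rw [hφZ] at hx
    have hdeg : (∑ i : Fin n, x i • X ^ (i : ℕ) : ℂ[X]).degree < p.degree := by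
      rw [degree_eq_natDegree (p := p) (by rintro rfl; simp at hp), hp]
      refine lt_of_le_of_lt (degree_sum_le _ _) ((Finset.sup_lt_iff ?_).2 fun i _ => ?_)
      · exact WithBot.bot_lt_coe _
      · refine lt_of_le_of_lt (degree_smul_le _ _) ?_
        rw [degree_X_pow]
        exact_mod_cast lt_of_lt_of_le i.2 hn
    have h0 := eq_zero_of_dvd_of_degree_lt (hd _ hx) hdeg
    ext i
    have := congrArg (fun g => coeff g (i : ℕ)) h0
    simpa [finsetSum_coeff, coeff_X_pow, Fin.val_inj, Finset.sum_ite_eq] using this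
  obtain ⟨w0, hw0⟩ := (φ (a + b + 1)).exists_leftInverse_of_injective
    (LinearMap.ker_eq_bot.2 (hφ _ le_rfl))
  let w : V →ₗ[ℂ] ℂ := LinearMap.proj (Fin.last (a + b)) ∘ₗ w0
  have hw : ∀ s ≤ a + b, w (Z (X ^ s)) = if s = a + b then 1 else 0 := by
    intro s hs
    have h1 : Z (X ^ s) = φ (a + b + 1) (Pi.single ⟨s, by omega⟩ 1) := by
      simp [φ]
    rw [h1]
    change w0 (φ _ _) _ = _
    rw [← LinearMap.comp_apply, hw0, LinearMap.id_apply, Pi.single_apply]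
    congr 1
    simp [Fin.ext_iff, eq_comm]
  have hTZ : ∀ i s : ℕ, (T ^ i) (Z (X ^ s)) = Z (X ^ (s + i)) := by
    intro i
    induction i with
    | zero => simp
    | succ i ih =>
      intro s
      rw [pow_succ, Module.End.mul_apply, hT, hZ, ← he, LinearEquiv.symm_apply_apply, ← pow_succ',
        ih]
      congr 2
      ring
  let ψ : ∀ n, V →ₗ[ℂ] (Fin n → ℂ) := fun n => LinearMap.pi fun i => w ∘ₗ T ^ (i : ℕ)
  have hψ : ∀ n ≤ a + b + 1, Function.Surjective (ψ n) := by
    intro n hn y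
    let A : Matrix (Fin n) (Fin n) ℂ := .of fun i j => w (Z (X ^ (a + b - j + i)))
    have hA : A.det = 1 := by
      rw [Matrix.det_of_isLowerTriangular, Finset.prod_eq_one]
      · intro i _
        simp only [A, Matrix.of_apply]
        rw [hw _ (by omega), if_pos (by omega)]
      · intro i j hij
        simp only [A, Matrix.of_apply]
        have : (i : ℕ) < j := hij
        rw [hw _ (by omega), if_neg (by omega)]
    obtain ⟨c, rfl⟩ := Matrix.mulVec_surjective_iff_isUnit.2
      ((Matrix.isUnit_iff_isUnit_det A).2 (hA ▸ isUnit_one)) y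
    refine ⟨∑ j, c j • Z (X ^ (a + b - j)), ?_⟩
    ext i
    simp [ψ, A, Matrix.mulVec, dotProduct, hTZ, mul_comm]
  have hψφ : ∀ m n, m + n = a + b + 1 → ∀ x, ψ n (φ m x) = 0 := by
    intro m n h x
    ext i
    simp only [ψ, φ, Fintype.linearCombination_apply, LinearMap.pi_apply, LinearMap.comp_apply,
      map_sum, map_smul, hTZ, Pi.zero_apply]
    refine Finset.sum_eq_zero fun j _ => ?_
    rw [hw _ (by omega), if_neg (by omega), smul_zero]
  have hU : Module.finrank ℂ U = a + b + 1 := e.finrank_eq ▸ hV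
  refine Degen.of_exact (φ a) (e.toLinearMap ∘ₗ φ (a + 1)) (ψ (b + 1)) (ψ b ∘ₗ e.symm.toLinearMap)
    (hφ _ (by omega)) (e.injective.comp (hφ _ (by omega))) (hψ _ (by omega))
    ((hψ _ (by omega)).comp e.symm.surjective) (hψφ _ _ (by omega))
    (fun x => by simpa using hψφ (a + 1) b (by omega) x) (by simp [hV]; omega) (by simp [hU]; omega)
    (fun x => ?_) (fun x => ?_) (fun x => ?_) (fun x => ?_)
  · rw [hφZ, hZ, ← he]
    simp only [LinearMap.comp_apply, LinearEquiv.coe_coe, hφZ]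
    rw [Fin.sum_univ_succ]
    simp [LTblk_fst_apply_succ, LTblk_fst_apply_zero, Finset.mul_sum, pow_succ']
  · rw [hφZ, ← he]
    simp only [LinearMap.comp_apply, LinearEquiv.coe_coe, hφZ]
    rw [Fin.sum_univ_castSucc]
    simp [LTblk_snd_apply_castSucc, LTblk_snd_apply_last]
  · ext i
    simp [ψ, Lblk_fst_apply, pow_succ, hT]
  · ext i
    simp [ψ, Lblk_snd_apply, ← he]

end Cyclic

/-- Sum of a numerical function over a list of blocks. -/
def tot (f : Blk → ℕ) (l : List Blk) : ℕ := (l.map f).sum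

section Tot

variable (f g : Blk → ℕ) (l l' : List Blk)

@[simp] theorem tot_nil : tot f [] = 0 := rfl

@[simp] theorem tot_cons (b : Blk) : tot f (b :: l) = f b + tot f l := rfl

@[simp] theorem tot_append : tot f (l ++ l') = tot f l + tot f l' := by simp [tot]

variable {f g l l'}

theorem tot_perm (h : l.Perm l') : tot f l = tot f l' := (h.map f).sum_eq

theorem tot_congr (h : ∀ b ∈ l, f b = g b) : tot f l = tot g l := by
  unfold tot
  rw [List.map_congr_left h]

theorem tot_le (h : ∀ b ∈ l, f b ≤ g b) : tot f l ≤ tot g l := List.sum_le_sum h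

theorem tot_add : tot (fun b => f b + g b) l = tot f l + tot g l := List.sum_map_add

theorem tot_mul (c : ℕ) : tot (fun b => c * f b) l = c * tot f l := List.sum_map_mul_left ..

theorem exists_of_tot_lt (h : tot f l < tot g l) : ∃ b ∈ l, f b < g b := by
  by_contra! hc
  exact absurd (tot_le hc) (not_le.2 h)

theorem exists_bound (f : Blk → ℕ) (l : List Blk) :
    ∃ a, (∀ b ∈ l, f b ≤ a) ∧ (a = 0 ∨ ∃ b ∈ l, f b = a) := by
  induction l with
  | nil => exact ⟨0, by simp, .inl rfl⟩
  | cons b l ih =>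
    obtain ⟨a, h1, h2⟩ := ih
    by_cases h : f b ≤ a
    · refine ⟨a, ?_, h2.imp id fun ⟨b, hb, e⟩ => ⟨b, .tail _ hb, e⟩⟩
      simpa [h] using h1
    · refine ⟨f b, ?_, .inr ⟨b, .head _, rfl⟩⟩
      simp only [List.mem_cons, forall_eq_or_imp, le_refl, true_and]
      exact fun c hc => (h1 c hc).trans (by omega)

end Tot

namespace Blk

/-- Indicator of the blocks `L m`. -/
def rL : Blk → ℕ
  | L _ => 1
  | _ => 0

/-- The index of a block `L m`, zero on other blocks. -/
def mL : Blk → ℕ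
  | L m => m
  | _ => 0

/-- The size of a block `E k ν`, zero on other blocks. -/
def sE : Blk → ℕ
  | E k _ => k + 1
  | _ => 0

open Classical in
/-- The size of a block with eigenvalue `μ`, zero on other blocks. -/
def sz (μ : ℂ) : Blk → ℕ
  | E k ν => if μ = ν then k + 1 else 0
  | _ => 0

@[simp] theorem hL_L (K m : ℕ) : hL K (L m) = K - m := rfl

@[simp] theorem rL_L (m : ℕ) : rL (L m) = 1 := rfl

@[simp] theorem mL_L (m : ℕ) : mL (L m) = m := rfl

@[simp] theorem sE_L (m : ℕ) : sE (L m) = 0 := rfl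

@[simp] theorem sz_L (μ : ℂ) (m : ℕ) : sz μ (L m) = 0 := rfl

theorem exists_of_sz_eq {b : Blk} {μ : ℂ} {a : ℕ} (h : b.sz μ = a + 1) : b = E a μ := by
  cases b with
  | E k ν =>
    simp only [sz] at h
    split_ifs at h with h0
    rw [h0, show k = a by omega]
  | _ => simp [sz] at h

end Blk

/-- The list consisting of a Jordan block of size `j`, empty if `j = 0`. -/
def eb : ℕ → ℂ → List Blk
  | 0, _ => []
  | k + 1, μ => [.E k μ]

theorem tot_eb {f : Blk → ℕ} (hf : ∀ k ν, f (.E k ν) = 0) (j : ℕ) (μ : ℂ) : tot f (eb j μ) = 0 := by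
  cases j <;> simp [eb, hf]

@[simp] theorem tot_hL_eb (K j : ℕ) (μ : ℂ) : tot (Blk.hL K) (eb j μ) = 0 :=
  tot_eb (fun _ _ => rfl) j μ

@[simp] theorem tot_rL_eb (j : ℕ) (μ : ℂ) : tot Blk.rL (eb j μ) = 0 := tot_eb (fun _ _ => rfl) j μ

@[simp] theorem tot_mL_eb (j : ℕ) (μ : ℂ) : tot Blk.mL (eb j μ) = 0 := tot_eb (fun _ _ => rfl) j μ

@[simp] theorem tot_sE_eb (j : ℕ) (μ : ℂ) : tot Blk.sE (eb j μ) = j := by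
  cases j <;> simp [eb, Blk.sE]

@[simp] theorem tot_sE_sq_eb (j : ℕ) (μ : ℂ) : tot (fun b => b.sE ^ 2) (eb j μ) = j ^ 2 := by
  cases j <;> simp [eb, Blk.sE]

open Classical in
@[simp] theorem tot_sz_eb (K j : ℕ) (μ ν : ℂ) :
    tot (fun b => min (b.sz ν) K) (eb j μ) = if ν = μ then min j K else 0 := by
  cases j
  · simp [eb]
  · simp only [eb, tot_cons, tot_nil, Blk.sz]
    split_ifs <;> simp

theorem kcf_singleton (b : Blk) : LIso (lin (kcf [b])) (lin b.pencil) := by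
  have : Subsingleton (Fin (colsSum []) → ℂ) := inferInstanceAs (Subsingleton (Fin 0 → ℂ))
  have : Subsingleton (Fin (rowsSum []) → ℂ) := inferInstanceAs (Subsingleton (Fin 0 → ℂ))
  exact (kcf_cons b []).trans (.sum_zero _ _)

theorem lIso_kcf_eb (j : ℕ) (μ : ℂ) : LIso (lin (kcf (eb j μ))) (lin (Eblk j μ)) := by
  cases j with
  | zero =>
    have : Subsingleton (Fin (colsSum (eb 0 μ)) → ℂ) := inferInstanceAs (Subsingleton (Fin 0 → ℂ))
    have : Subsingleton (Fin (rowsSum (eb 0 μ)) → ℂ) := inferInstanceAs (Subsingleton (Fin 0 → ℂ))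
    exact .of_subsingleton _ _
  | succ k => exact kcf_singleton _

/-- `l'` describes a skew-symmetric pencil whose off-diagonal part is a degeneration of that
described by `l`. -/
def Step (l l' : List Blk) : Prop :=
  ∃ k, Degen (lin (kcf l)) (lin (kcf k)) ∧ (k ++ k.map Blk.dual).Perm (l' ++ l'.map Blk.dual)

theorem Step.of_degen {l a a' k c : List Blk} (h : l.Perm (a ++ c))
    (hd : Degen (lin (kcf a)) (lin (kcf k)))
    (hk : (k ++ k.map Blk.dual).Perm (a' ++ a'.map Blk.dual)) : Step l (a' ++ c) := by
  refine ⟨k ++ c, ((hd.sum_right (kcf c)).congr_left ((kcf_perm h).trans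
    (kcf_append a c))).congr_right (kcf_append k c).symm, ?_⟩
  simp only [List.map_append]
  have e : ∀ x y : List Blk, ((x ++ c) ++ (y ++ c.map Blk.dual)).Perm
      ((x ++ y) ++ (c ++ c.map Blk.dual)) := by
    intro x y
    rw [List.append_assoc, List.append_assoc]
    refine List.Perm.append_left _ ?_
    rw [← List.append_assoc, ← List.append_assoc]
    exact List.perm_append_comm.append_right _
  exact (e _ _).trans ((hk.append_right _).trans (e _ _).symm)

theorem kcf_L_cons (m : ℕ) (l : List Blk) :
    LIso (lin (kcf (.L m :: l))) ((lin (Lblk m)).sum (lin (kcf l))) := kcf_cons (.L m) l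

theorem kcf_T_cons (m : ℕ) (l : List Blk) :
    LIso (lin (kcf (.T m :: l))) ((lin (LTblk m)).sum (lin (kcf l))) := kcf_cons (.T m) l

theorem kcf_E_cons (k : ℕ) (μ : ℂ) (l : List Blk) :
    LIso (lin (kcf (.E k μ :: l))) ((lin (Eblk (k + 1) μ)).sum (lin (kcf l))) :=
  kcf_cons (.E k μ) l

theorem kcf_L (m : ℕ) : LIso (lin (kcf [.L m])) (lin (Lblk m)) := kcf_singleton (.L m)

theorem step_L_L {l c : List Blk} {j k : ℕ} (hjk : j + 1 ≤ k)
    (h : l.Perm ([.L (j + 1), .L k] ++ c)) : Step l ([.L (k + 1), .L j] ++ c) :=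
  .of_degen h (((degen_Lblk_Lblk hjk).congr_left ((kcf_L_cons _ _).trans
    ((LIso.refl _).sum_congr (kcf_L _)))).congr_right ((kcf_L_cons _ _).trans
      ((LIso.refl _).sum_congr (kcf_L _))).symm) (.refl _)

theorem step_L_E {l c : List Blk} {m e : ℕ} {μ : ℂ}
    (h : l.Perm ((.L (m + 1) :: eb e μ) ++ c)) : Step l ((eb (e + 1) μ ++ [.L m]) ++ c) :=
  .of_degen h (((degen_Lblk_Eblk m e μ).congr_left ((kcf_L_cons _ _).trans
    ((LIso.refl _).sum_congr (lIso_kcf_eb _ _)))).congr_right ((kcf_append _ _).trans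
      ((lIso_kcf_eb _ _).sum_congr (kcf_L _))).symm) (.refl _)

theorem step_E_E {l c : List Blk} {b s : ℕ} {μ : ℂ}
    (h : l.Perm ((eb (b + s + 1) μ ++ eb b μ) ++ c)) :
    Step l ((eb (b + s) μ ++ eb (b + 1) μ) ++ c) :=
  .of_degen h (((degen_Eblk_Eblk b s μ).congr_left ((kcf_append _ _).trans
    ((lIso_kcf_eb _ _).sum_congr (lIso_kcf_eb _ _)))).congr_right ((kcf_append _ _).trans
      ((lIso_kcf_eb _ _).sum_congr (lIso_kcf_eb _ _))).symm) (.refl _)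

open Polynomial in
theorem cyclic_kcf (a : ℂ → ℕ) {s : List ℂ} (hs : s.Nodup) :
    Cyclic (lin (kcf (s.map fun μ => .E (a μ) μ)))
      (s.map fun μ => (X - C μ) ^ (a μ + 1)).prod := by
  induction s with
  | nil =>
    have : Subsingleton (Fin (colsSum []) → ℂ) := inferInstanceAs (Subsingleton (Fin 0 → ℂ))
    have : Subsingleton (Fin (rowsSum []) → ℂ) := inferInstanceAs (Subsingleton (Fin 0 → ℂ))
    rw [List.map_nil, List.map_nil, List.prod_nil]
    exact cyclic_of_subsingleton _
  | cons μ s ih =>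
    rw [List.nodup_cons] at hs
    rw [List.map_cons, List.map_cons, List.prod_cons]
    refine ((cyclic_Eblk (a μ) μ).sum (ih hs.2) ?_).congr (kcf_E_cons _ _ _).symm
    rw [← List.prod_toFinset _ hs.2]
    refine IsCoprime.prod_right fun ν hν => IsCoprime.pow (isCoprime_X_sub_C_of_isUnit_sub ?_)
    rw [isUnit_iff_ne_zero, sub_ne_zero]
    rintro rfl
    exact hs.1 (List.mem_toFinset.1 hν)

open Polynomial in
theorem step_E_LL {l c : List Blk} (a : ℂ → ℕ) {s : List ℂ} (hs : s.Nodup) {p q : ℕ}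
    (hpq : (s.map fun μ => a μ + 1).sum = p + q + 1)
    (h : l.Perm ((s.map fun μ => .E (a μ) μ) ++ c)) : Step l ([.L p, .L q] ++ c) := by
  refine .of_degen (k := [.T p, .L q]) h ?_ ((List.reverse_perm [Blk.L p, .L q, .T p]).append_right
    [Blk.T q])
  · refine ((cyclic_kcf a hs).degen (a := p) (b := q) ?_ ?_).congr_right ((kcf_T_cons _ _).trans
      ((LIso.refl _).sum_congr (kcf_L _))).symm
    · rw [← hpq]
      clear h hpq
      induction s with
      | nil => simp
      | cons μ s ih =>
        have h0 : ∀ t : List ℂ, (t.map fun μ => (X - C μ) ^ (a μ + 1)).prod ≠ 0 := by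
          intro t
          refine List.prod_ne_zero ?_
          simp [X_sub_C_ne_zero]
        rw [List.map_cons, List.prod_cons, natDegree_mul (by simp [X_sub_C_ne_zero]) (h0 s),
          ih (List.nodup_cons.1 hs).2]
        simp
    · rw [← hpq, Module.finrank_fin_fun]
      clear h hpq hs
      induction s with
      | nil => rfl
      | cons μ s ih => simp [colsSum, ih, Blk.cols]

namespace Blk

theorem exists_of_mL_eq {b : Blk} {m : ℕ} (h : b.mL = m + 1) : b = L (m + 1) := by
  cases b with
  | L k => exact congrArg L h
  | _ => simp [mL] at h

end Blk

/-- Size of the skew-symmetric pencil with off-diagonal part described by `l`. -/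
def skewSize (l : List Blk) : ℕ := 2 * tot Blk.mL l + tot Blk.rL l + 2 * tot Blk.sE l

/-- The dominance order on lists of blocks, governing the closure relation between
the associated skew-symmetric pencils. -/
structure Dom (l l' : List Blk) : Prop where
  le_hL : ∀ K, tot (Blk.hL K) l ≤ tot (Blk.hL K) l'
  le_hE : ∀ K μ, tot Blk.rL l * K + 2 * tot (fun b => min (b.sz μ) K) l ≤
    tot Blk.rL l' * K + 2 * tot (fun b => min (b.sz μ) K) l'
  size_eq : skewSize l = skewSize l'

theorem T_notMem_eb (m j : ℕ) (μ : ℂ) : Blk.T m ∉ eb j μ := by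
  cases j <;> simp [eb]

/-- There is a step from `l` that stays below `l'` and decreases the natural measure. -/
def Prog (l l' : List Blk) : Prop :=
  ∃ k, (∀ m, Blk.T m ∉ k) ∧ Step l k ∧ Dom k l' ∧
    (∀ K, tot (Blk.hL K) l ≤ tot (Blk.hL K) k) ∧
      ((∃ K ≤ skewSize l, tot (Blk.hL K) l < tot (Blk.hL K) k) ∨
        tot (fun b => b.sE ^ 2) k < tot (fun b => b.sE ^ 2) l)

section Tot

variable {l : List Blk}

theorem le_tot_of_mem {f : Blk → ℕ} {b : Blk} (h : b ∈ l) : f b ≤ tot f l :=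
  List.le_sum_of_mem (List.mem_map_of_mem h)

theorem tot_rL_mul_le (K : ℕ) (l : List Blk) :
    tot Blk.rL l * K ≤ tot (Blk.hL K) l + tot Blk.mL l := by
  rw [mul_comm, ← tot_mul, ← tot_add]
  refine tot_le fun b _ => ?_
  cases b <;> simp [Blk.rL, Blk.hL, Blk.mL]
  omega

theorem tot_rL_mul_eq {K : ℕ} (h : ∀ b ∈ l, b.mL ≤ K) :
    tot Blk.rL l * K = tot (Blk.hL K) l + tot Blk.mL l := by
  rw [mul_comm, ← tot_mul, ← tot_add]
  refine tot_congr fun b hb => ?_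
  have := h b hb
  cases b <;> simp_all [Blk.rL, Blk.hL, Blk.mL]

theorem tot_min_le_tot (μ : ℂ) (K : ℕ) : tot (fun b => min (b.sz μ) K) l ≤ tot (Blk.sz μ) l :=
  tot_le fun _ _ => min_le_left _ _

theorem tot_min_mono (μ : ℂ) {K K' : ℕ} (h : K ≤ K') :
    tot (fun b => min (b.sz μ) K) l ≤ tot (fun b => min (b.sz μ) K') l :=
  tot_le fun _ _ => min_le_min_left _ h

theorem tot_min_eq_tot {μ : ℂ} {K : ℕ} (h : ∀ b ∈ l, b.sz μ ≤ K) :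
    tot (fun b => min (b.sz μ) K) l = tot (Blk.sz μ) l :=
  tot_congr fun b hb => min_eq_left (h b hb)

theorem sz_le_sE (μ : ℂ) (b : Blk) : b.sz μ ≤ b.sE := by
  cases b with
  | E k ν =>
    simp only [Blk.sz, Blk.sE]
    split_ifs <;> simp
  | _ => exact le_rfl

theorem tot_min_eq_of_sE_le {μ : ℂ} {K : ℕ} (h : tot Blk.sE l ≤ K) :
    tot (fun b => min (b.sz μ) K) l = tot (Blk.sz μ) l :=
  tot_min_eq_tot fun b hb => (sz_le_sE μ b).trans ((le_tot_of_mem hb).trans h)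

open Classical in
/-- The eigenvalues occurring in a list of blocks. -/
def evs : List Blk → Finset ℂ
  | [] => ∅
  | .E _ μ :: l => insert μ (evs l)
  | .L _ :: l => evs l
  | .T _ :: l => evs l

theorem tot_sE_eq_sum {S : Finset ℂ} (h : evs l ⊆ S) :
    tot Blk.sE l = ∑ μ ∈ S, tot (Blk.sz μ) l := by
  classical
  induction l with
  | nil => simp
  | cons b l ih =>
    simp only [tot_cons, Finset.sum_add_distrib]
    cases b with
    | E k ν =>
      rw [evs, Finset.insert_subset_iff] at h
      rw [ih h.2]
      simp only [Blk.sz, Blk.sE, Finset.sum_ite_eq', if_pos h.1]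
    | _ => rw [ih h]; simp [Blk.sz, Blk.sE]

end Tot

theorem exists_perm_cons {l : List Blk} {b : Blk} (h : b ∈ l) : ∃ c, l.Perm (b :: c) := by
  classical
  exact ⟨l.erase b, List.perm_cons_erase h⟩

theorem exists_perm_eb {l : List Blk} {e : ℕ} {μ : ℂ} (h : e = 0 ∨ ∃ b ∈ l, b.sz μ = e) :
    ∃ c, l.Perm (eb e μ ++ c) := by
  cases e with
  | zero => exact ⟨l, .refl _⟩
  | succ k =>
    obtain ⟨b, hb, e⟩ := h.resolve_left (by omega)
    rw [Blk.exists_of_sz_eq e] at hb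
    exact exists_perm_cons hb

theorem Prog.of_L_E {l l' : List Blk} (hl : ∀ m, Blk.T m ∉ l) (hd : Dom l l') {m e : ℕ} {μ : ℂ}
    (hm : Blk.L (m + 1) ∈ l) (he : e = 0 ∨ ∃ b ∈ l, b.sz μ = e)
    (h1 : ∀ K ≥ m + 1, tot (Blk.hL K) l < tot (Blk.hL K) l')
    (h2 : ∀ K ≥ e + 1, tot Blk.rL l * K + 2 * tot (fun b => min (b.sz μ) K) l + 2 ≤
      tot Blk.rL l' * K + 2 * tot (fun b => min (b.sz μ) K) l') : Prog l l' := by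
  obtain ⟨c', hc'⟩ := exists_perm_cons hm
  obtain ⟨c, hc⟩ : ∃ c, c'.Perm (eb e μ ++ c) := by
    refine exists_perm_eb ?_
    rcases he with rfl | ⟨b, hb, h⟩
    · exact .inl rfl
    · rcases List.mem_cons.1 (hc'.mem_iff.1 hb) with rfl | hb
      · exact .inl h.symm
      · exact .inr ⟨b, hb, h⟩
  have hp : l.Perm ((.L (m + 1) :: eb e μ) ++ c) := hc'.trans (hc.cons _)
  have hf : ∀ f, tot f l = f (.L (m + 1)) + tot f (eb e μ) + tot f c := fun f => by
    rw [tot_perm hp]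
    simp [add_assoc]
  refine ⟨_, ?_, step_L_E hp, ⟨fun K => ?_, fun K ν => ?_, ?_⟩, fun K => ?_, .inl ⟨m + 1, ?_, ?_⟩⟩
  · have : ∀ m, Blk.T m ∉ c := fun k hk => hl k (hp.mem_iff.2 (by simp [hk]))
    simp [T_notMem_eb, this]
  · have e1 := hf (Blk.hL K)
    have e2 := hd.le_hL K
    have e3 := h1 K
    simp at e1 ⊢
    omega
  · have e1 := hf fun b => min (b.sz ν) K
    have e2 := hd.le_hE K ν
    have e3 := h2 K
    have e4 : tot Blk.rL ((eb (e + 1) μ ++ [.L m]) ++ c) = tot Blk.rL l := by simp [hf]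
    rw [e4]
    simp at e1 ⊢
    rcases eq_or_ne ν μ with rfl | h
    · simp at e1 ⊢
      omega
    · simp [h] at e1 ⊢
      omega
  · have e1 := hf Blk.rL
    have e2 := hf Blk.mL
    have e3 := hf Blk.sE
    have e4 := hd.size_eq
    simp [skewSize] at *
    omega
  · have e1 := hf (Blk.hL K)
    simp at e1 ⊢
    omega
  · have := le_tot_of_mem (f := Blk.mL) hm
    simp [skewSize] at *
    omega
  · have e1 := hf (Blk.hL (m + 1))
    simp at e1 ⊢
    omega

theorem Prog.of_L_L {l l' c : List Blk} (hl : ∀ m, Blk.T m ∉ l) (hd : Dom l l') {j k : ℕ}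
    (hjk : j + 1 ≤ k) (hp : l.Perm ([.L (j + 1), .L k] ++ c))
    (h1 : ∀ K, j + 1 ≤ K → K ≤ k → tot (Blk.hL K) l < tot (Blk.hL K) l') : Prog l l' := by
  have hf : ∀ f, tot f l = f (.L (j + 1)) + f (.L k) + tot f c := fun f => by
    rw [tot_perm hp]
    simp [add_assoc]
  have hr : tot Blk.rL ([.L (k + 1), .L j] ++ c) = tot Blk.rL l := by
    simp [hf]
    omega
  refine ⟨_, ?_, step_L_L hjk hp, ⟨fun K => ?_, fun K ν => ?_, ?_⟩, fun K => ?_, .inl ⟨k, ?_, ?_⟩⟩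
  · have : ∀ m, Blk.T m ∉ c := fun k hk => hl k (hp.mem_iff.2 (by simp [hk]))
    simp [this]
  · have e1 := hf (Blk.hL K)
    have e2 := hd.le_hL K
    have e3 := h1 K
    simp at e1 ⊢
    omega
  · have e1 := hf fun b => min (b.sz ν) K
    have e2 := hd.le_hE K ν
    rw [hr]
    simp at e1 ⊢
    omega
  · have e1 := hf Blk.rL
    have e2 := hf Blk.mL
    have e3 := hf Blk.sE
    have e4 := hd.size_eq
    simp [skewSize] at *
    omega
  · have e1 := hf (Blk.hL K)
    simp at e1 ⊢
    omega
  · have := hf Blk.mL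
    simp [skewSize] at *
    omega
  · have e1 := hf (Blk.hL k)
    simp at e1 ⊢
    omega

theorem Prog.of_E_E {l l' c : List Blk} (hl : ∀ m, Blk.T m ∉ l) (hd : Dom l l') {b s : ℕ} {μ : ℂ}
    (hs : 0 < s) (hp : l.Perm ((eb (b + s + 1) μ ++ eb b μ) ++ c))
    (h2 : ∀ K, b < K → K < b + s + 1 →
      tot Blk.rL l * K + 2 * tot (fun b => min (b.sz μ) K) l + 2 ≤
        tot Blk.rL l' * K + 2 * tot (fun b => min (b.sz μ) K) l') : Prog l l' := by
  have hf : ∀ f, tot f l = tot f (eb (b + s + 1) μ) + tot f (eb b μ) + tot f c := fun f => by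
    rw [tot_perm hp]
    simp [add_assoc]
  have hr : tot Blk.rL ((eb (b + s) μ ++ eb (b + 1) μ) ++ c) = tot Blk.rL l := by simp [hf]
  refine ⟨_, ?_, step_E_E hp, ⟨fun K => ?_, fun K ν => ?_, ?_⟩, fun K => ?_, .inr ?_⟩
  · have : ∀ m, Blk.T m ∉ c := fun k hk => hl k (hp.mem_iff.2 (by simp [hk]))
    simp [T_notMem_eb, this]
  · have e1 := hf (Blk.hL K)
    have e2 := hd.le_hL K
    simp at e1 ⊢
    omega
  · have e1 := hf fun b => min (b.sz ν) K
    have e2 := hd.le_hE K ν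
    have e3 := h2 K
    rw [hr]
    simp at e1 ⊢
    rcases eq_or_ne ν μ with rfl | h
    · simp at e1 ⊢
      omega
    · simp [h] at e1 ⊢
      omega
  · have e1 := hf Blk.rL
    have e2 := hf Blk.mL
    have e3 := hf Blk.sE
    have e4 := hd.size_eq
    simp [skewSize] at *
    omega
  · have e1 := hf (Blk.hL K)
    simp at e1 ⊢
    omega
  · rw [hf]
    simp
    nlinarith

theorem tot_sz_map_E (a : ℂ → ℕ) {s : List ℂ} (hs : s.Nodup) (K : ℕ) (μ : ℂ) :
    tot (fun b => min (b.sz μ) K) (s.map fun μ => .E (a μ) μ) =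
      open Classical in if μ ∈ s then min (a μ + 1) K else 0 := by
  induction s with
  | nil => simp
  | cons ν s ih =>
    rw [List.nodup_cons] at hs
    rw [List.map_cons, tot_cons, ih hs.2]
    rcases eq_or_ne μ ν with rfl | h
    · simp [hs.1, Blk.sz]
    · simp [h, Blk.sz]

theorem tot_map_E_eq_zero {f : Blk → ℕ} (hf : ∀ k ν, f (.E k ν) = 0) (a : ℂ → ℕ) (s : List ℂ) :
    tot f (s.map fun μ => .E (a μ) μ) = 0 := by
  induction s with
  | nil => rfl
  | cons ν s ih => simp [ih, hf]

theorem tot_sE_map_E (a : ℂ → ℕ) (s : List ℂ) :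
    tot Blk.sE (s.map fun μ => .E (a μ) μ) = (s.map fun μ => a μ + 1).sum := by
  induction s with
  | nil => rfl
  | cons ν s ih => simp [ih, Blk.sE]

open Classical in
theorem Prog.of_E_LL {l l' c : List Blk} (hl : ∀ m, Blk.T m ∉ l) (hd : Dom l l') (a : ℂ → ℕ)
    {s : List ℂ} (hs : s.Nodup) {p q : ℕ} (hpq : (s.map fun μ => a μ + 1).sum = p + q + 1)
    (hp : l.Perm ((s.map fun μ => .E (a μ) μ) ++ c))
    (h1 : ∀ K, tot (Blk.hL K) l + (K - p) + (K - q) ≤ tot (Blk.hL K) l')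
    (h2 : ∀ K μ, tot Blk.rL l * K + 2 * K + 2 * tot (fun b => min (b.sz μ) K) l ≤
      tot Blk.rL l' * K + 2 * tot (fun b => min (b.sz μ) K) l' +
        2 * if μ ∈ s then min (a μ + 1) K else 0) : Prog l l' := by
  have hf : ∀ f, tot f l = tot f (s.map fun μ => .E (a μ) μ) + tot f c := fun f => by
    rw [tot_perm hp]
    simp
  have hN : ∀ K, tot (Blk.hL K) l = tot (Blk.hL K) c := fun K => by
    rw [hf, tot_map_E_eq_zero fun _ _ => rfl, zero_add]
  have hr : tot Blk.rL l = tot Blk.rL c := by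
    rw [hf, tot_map_E_eq_zero fun _ _ => rfl, zero_add]
  have hm : tot Blk.mL l = tot Blk.mL c := by
    rw [hf, tot_map_E_eq_zero fun _ _ => rfl, zero_add]
  have hE : tot Blk.sE l = p + q + 1 + tot Blk.sE c := by
    rw [hf, tot_sE_map_E, hpq]
  refine ⟨_, ?_, step_E_LL a hs hpq hp, ⟨fun K => ?_, fun K ν => ?_, ?_⟩, fun K => ?_,
    .inl ⟨p + 1, ?_, ?_⟩⟩
  · have : ∀ m, Blk.T m ∉ c := fun k hk => hl k (hp.mem_iff.2 (by simp [hk]))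
    simp [this]
  · have e1 := h1 K
    have e2 := hN K
    simp
    omega
  · have e1 := hf fun b => min (b.sz ν) K
    rw [tot_sz_map_E a hs] at e1
    have e3 := h2 K ν
    have e4 : tot Blk.rL ([.L p, .L q] ++ c) * K = tot Blk.rL l * K + 2 * K := by
      simp [hr]
      ring
    rw [e4]
    simp at e1 ⊢
    omega
  · rw [← hd.size_eq]
    simp [skewSize]
    omega
  · have := hN K
    simp
    omega
  · simp only [skewSize]
    omega
  · have := hN (p + 1)
    simp
    omega

theorem tot_lt {f g : Blk → ℕ} {l : List Blk} (h : ∀ b ∈ l, f b ≤ g b)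
    (h' : ∃ b ∈ l, f b < g b) : tot f l < tot g l := List.sum_lt_sum f g h h'

theorem mem_evs {l : List Blk} {b : Blk} {μ : ℂ} (hb : b ∈ l) (h : b.sz μ ≠ 0) : μ ∈ evs l := by
  classical
  obtain ⟨a, ha⟩ := Nat.exists_eq_succ_of_ne_zero h
  rw [Blk.exists_of_sz_eq ha] at hb
  clear h ha
  induction l with
  | nil => simp at hb
  | cons c l ih =>
    obtain rfl | hb' := List.mem_cons.1 hb
    · simp [evs]
    · have := ih hb'
      cases c <;> simp [evs, this]

/-- A maximal interval on which `f < g`, around a given point. -/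
theorem exists_strict_interval {f g : ℕ → ℕ} (hle : ∀ k, f k ≤ g k) (h0 : f 0 = g 0) {B : ℕ}
    (hB : ∀ k ≥ B, f k = g k) {i : ℕ} (hi : f i ≠ g i) :
    ∃ s t, s < i ∧ i < t ∧ f s = g s ∧ f t = g t ∧ ∀ k, s < k → k < t → f k < g k := by
  classical
  have hex : ∃ t, i < t ∧ f t = g t := ⟨B + i + 1, by omega, hB _ (by omega)⟩
  have hs := Nat.findGreatest_spec (P := fun s => f s = g s) (Nat.zero_le i) h0
  refine ⟨Nat.findGreatest (fun s => f s = g s) i, Nat.find hex, ?_, (Nat.find_spec hex).1, hs,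
    (Nat.find_spec hex).2, fun k hk1 hk2 => lt_of_le_of_ne (hle k) fun he => ?_⟩
  · refine lt_of_le_of_ne (Nat.findGreatest_le i) fun h => hi ?_
    rwa [h] at hs
  · rcases le_or_gt k i with h | h
    · exact absurd (Nat.le_findGreatest (P := fun s => f s = g s) h he) (by omega)
    · exact Nat.find_min hex hk2 ⟨h, he⟩

section Concave

variable {l : List Blk}

theorem tot_min_concave (l : List Blk) (μ : ℂ) (u : ℕ) :
    tot (fun b => min (b.sz μ) u) l + tot (fun b => min (b.sz μ) (u + 2)) l ≤
      2 * tot (fun b => min (b.sz μ) (u + 1)) l := by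
  rw [← tot_add, ← tot_mul]
  exact tot_le fun b _ => by omega

theorem exists_of_tot_min_lt {μ : ℂ} {u : ℕ}
    (h : tot (fun b => min (b.sz μ) u) l + tot (fun b => min (b.sz μ) (u + 2)) l <
      2 * tot (fun b => min (b.sz μ) (u + 1)) l) : ∃ b ∈ l, b.sz μ = u + 1 := by
  rw [← tot_add, ← tot_mul] at h
  obtain ⟨b, hb, h⟩ := exists_of_tot_lt h
  exact ⟨b, hb, by omega⟩

theorem tot_hL_convex (l : List Blk) (s d : ℕ) :
    tot (Blk.hL (s + 1)) l + tot (Blk.hL (s + d + 1)) l ≤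
      tot (Blk.hL s) l + tot (Blk.hL (s + d + 2)) l := by
  rw [← tot_add, ← tot_add]
  refine tot_le fun b _ => ?_
  cases b <;> simp [Blk.hL]
  omega

theorem exists_of_tot_hL_lt {s d : ℕ}
    (h : tot (Blk.hL (s + 1)) l + tot (Blk.hL (s + d + 1)) l <
      tot (Blk.hL s) l + tot (Blk.hL (s + d + 2)) l) :
    ∃ k, s < k ∧ k < s + d + 2 ∧ Blk.L k ∈ l := by
  rw [← tot_add, ← tot_add] at h
  obtain ⟨b, hb, h⟩ := exists_of_tot_lt h
  cases b with
  | L k =>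
    simp at h
    exact ⟨k, by omega, by omega, hb⟩
  | _ => simp [Blk.hL] at h

end Concave

section Step

variable {l l' : List Blk}

theorem tot_hL_zero (l : List Blk) : tot (Blk.hL 0) l = 0 := by
  have : tot (Blk.hL 0) l = tot (fun _ => 0) l := tot_congr fun b _ => by cases b <;> simp [Blk.hL]
  rw [this]
  simp [tot]

theorem tot_min_zero (l : List Blk) (μ : ℂ) : tot (fun b => min (b.sz μ) 0) l = 0 := by
  simp [tot]

theorem Dom.rL_le (hd : Dom l l') : tot Blk.rL l ≤ tot Blk.rL l' := by
  have h1 := tot_rL_mul_le (tot Blk.mL l + 1) l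
  have h2 := hd.le_hL (tot Blk.mL l + 1)
  have h3 : tot (Blk.hL (tot Blk.mL l + 1)) l' ≤ (tot Blk.mL l + 1) * tot Blk.rL l' := by
    rw [← tot_mul]
    refine tot_le fun b _ => ?_
    cases b <;> simp [Blk.hL, Blk.rL]
  by_contra! h
  nlinarith

theorem Dom.prog_of_rL_lt_of_ne (hl : ∀ m, Blk.T m ∉ l) (hd : Dom l l')
    (hr : tot Blk.rL l < tot Blk.rL l') {m : ℕ} (hm : ∀ b ∈ l, b.mL ≤ m)
    (hm' : m = 0 ∨ ∃ b ∈ l, b.mL = m) (h : ∀ K ≥ m, tot (Blk.hL K) l ≠ tot (Blk.hL K) l') :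
    Prog l l' := by
  have h0 : m ≠ 0 := by
    rintro rfl
    exact h 0 le_rfl (by rw [tot_hL_zero, tot_hL_zero])
  obtain ⟨b, hb, hbm⟩ := hm'.resolve_left h0
  obtain ⟨k, rfl⟩ := Nat.exists_eq_succ_of_ne_zero h0
  rw [Blk.exists_of_mL_eq hbm] at hb
  obtain ⟨e, he, he'⟩ := exists_bound (Blk.sz 0) l
  refine .of_L_E (μ := 0) hl hd hb he' (fun K hK => lt_of_le_of_ne (hd.le_hL K) (h K hK))
    fun K hK => ?_
  obtain ⟨d, hd'⟩ : ∃ d, tot Blk.rL l' = tot Blk.rL l + 2 + d := by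
    have := hd.size_eq
    simp only [skewSize] at this
    exact ⟨tot Blk.rL l' - tot Blk.rL l - 2, by omega⟩
  have h1 := hd.le_hE e 0
  have h2 := tot_min_mono (l := l') 0 (show e ≤ K by omega)
  rw [tot_min_eq_tot he, hd'] at h1
  rw [tot_min_eq_tot fun b hb => (he b hb).trans (by omega), hd']
  have h3 : d * e ≤ d * K := Nat.mul_le_mul_left _ (by omega)
  nlinarith

theorem Dom.prog_of_rL_lt_of_eq (hl : ∀ m, Blk.T m ∉ l) (hd : Dom l l')
    (hr : tot Blk.rL l < tot Blk.rL l') {m : ℕ} (hm : ∀ b ∈ l, b.mL ≤ m) {K₀ : ℕ} (hK₀ : m ≤ K₀)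
    (h : tot (Blk.hL K₀) l = tot (Blk.hL K₀) l') : Prog l l' := by
  classical
  obtain ⟨c, hc, hc0⟩ : ∃ c, tot Blk.rL l' = tot Blk.rL l + 2 * c ∧ 0 < c := by
    have := hd.size_eq
    simp only [skewSize] at this
    exact ⟨(tot Blk.rL l' - tot Blk.rL l) / 2, by omega, by omega⟩
  choose A hA hA' using fun μ => exists_bound (Blk.sz μ) l
  have hAevs : ∀ μ, A μ ≠ 0 → μ ∈ evs l := fun μ hμ => by
    obtain ⟨b, hb, e⟩ := (hA' μ).resolve_left hμ
    exact mem_evs hb (e ▸ hμ)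
  set S := evs l ∪ evs l'
  set s := (S.filter fun μ => A μ ≠ 0).toList with hs
  have hmem : ∀ μ, μ ∈ s ↔ A μ ≠ 0 := fun μ => by
    simp only [hs, Finset.mem_toList, Finset.mem_filter, S, Finset.mem_union]
    exact ⟨fun h => h.2, fun h => ⟨.inl (hAevs μ h), h⟩⟩
  have hsum : (s.map fun μ => A μ - 1 + 1).sum = ∑ μ ∈ S, A μ := by
    rw [hs, Finset.sum_map_toList, ← Finset.sum_filter_ne_zero S]
    refine Finset.sum_congr rfl fun μ hμ => ?_
    have := (Finset.mem_filter.1 hμ).2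
    omega
  set k := ∑ μ ∈ S, A μ with hk
  have hlam : ∀ μ, tot (Blk.sz μ) l ≤ c * A μ + tot (Blk.sz μ) l' := fun μ => by
    have h1 := hd.le_hE (A μ) μ
    rw [tot_min_eq_tot (hA μ), hc] at h1
    have h2 := tot_min_le_tot (l := l') μ (A μ)
    nlinarith
  have hE : tot Blk.sE l ≤ c * k + tot Blk.sE l' := by
    rw [tot_sE_eq_sum (S := S) Finset.subset_union_left,
      tot_sE_eq_sum (S := S) Finset.subset_union_right, hk, Finset.mul_sum,
      ← Finset.sum_add_distrib]
    exact Finset.sum_le_sum fun μ _ => hlam μ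
  have hsize := hd.size_eq
  simp only [skewSize] at hsize
  have h1 := tot_rL_mul_eq (l := l) (K := K₀) fun b hb => (hm b hb).trans hK₀
  have h2 := tot_rL_mul_le K₀ l'
  rw [hc] at h2
  have hS : tot Blk.mL l + 2 * (c * K₀) ≤ tot Blk.mL l' := by nlinarith
  obtain ⟨w, hw⟩ : ∃ w, k = w + 1 := Nat.exists_eq_succ_of_ne_zero <| by
    intro h0
    rw [h0, mul_zero] at hE
    omega
  rw [hw] at hE hsum
  have hS' : tot Blk.mL l' ≤ tot Blk.mL l + c * w := by nlinarith
  have hw0 : 2 * K₀ ≤ w := by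
    by_contra! h0
    nlinarith
  have hperm : ∃ x, l.Perm ((s.map fun μ => .E (A μ - 1) μ) ++ x) := by
    have hsub : (s.map fun μ => Blk.E (A μ - 1) μ).Subperm l := by
      refine List.subperm_of_subset ((Finset.nodup_toList _).map fun μ ν h => ?_) fun b hb => ?_
      · injection h
      · obtain ⟨μ, hμ, rfl⟩ := List.mem_map.1 hb
        rw [hmem] at hμ
        obtain ⟨b, hb, e⟩ := (hA' μ).resolve_left hμ
        rwa [Blk.exists_of_sz_eq (a := A μ - 1) (b := b) (μ := μ) (by omega)] at hb
    obtain ⟨y, hy, hyl⟩ := hsub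
    obtain ⟨x, hx⟩ := hyl.exists_perm_append
    exact ⟨x, hx.trans (hy.append_right x)⟩
  obtain ⟨x, hx⟩ := hperm
  refine .of_E_LL (p := w / 2) (q := w - w / 2) hl hd (fun μ => A μ - 1) (Finset.nodup_toList _)
    (hsum.trans (by omega)) hx (fun K => ?_) fun K μ => ?_
  · rcases le_or_gt K (w / 2) with hK | hK
    · have := hd.le_hL K
      omega
    · have h3 := tot_rL_mul_eq (l := l) (K := K) fun b hb => (hm b hb).trans (by omega)
      have h4 := tot_rL_mul_le K l'
      rw [hc] at h4
      obtain ⟨v, hv⟩ := Nat.exists_eq_add_of_le (show w ≤ 2 * K by omega)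
      have h5 : v ≤ c * v := Nat.le_mul_of_pos_left _ hc0
      have h6 : 2 * (c * K) = c * w + c * v := by rw [← mul_add, ← hv]; ring
      have h7 : (K - w / 2) + (K - (w - w / 2)) = v := by omega
      nlinarith
  · have hif : (if μ ∈ s then min (A μ - 1 + 1) K else 0) = min (A μ) K := by
      by_cases h0 : μ ∈ s
      · rw [if_pos h0, Nat.sub_add_cancel (Nat.pos_of_ne_zero ((hmem μ).1 h0))]
      · rw [if_neg h0, not_not.1 (mt (hmem μ).2 h0), Nat.zero_min]
    rw [hif]
    rcases le_total K (A μ) with hK | hK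
    · have := hd.le_hE K μ
      rw [min_eq_right hK]
      omega
    · have h3 := hd.le_hE (A μ) μ
      have h4 := tot_min_mono (l := l') μ hK
      rw [tot_min_eq_tot (hA μ), hc] at h3
      rw [tot_min_eq_tot fun b hb => (hA μ b hb).trans hK, hc, min_eq_left hK]
      obtain ⟨v, rfl⟩ := Nat.exists_eq_add_of_le hK
      have h5 : v ≤ c * v := Nat.le_mul_of_pos_left _ hc0
      nlinarith

theorem Dom.prog_of_sz_lt (hl : ∀ m, Blk.T m ∉ l) (hd : Dom l l')
    (hr : tot Blk.rL l = tot Blk.rL l')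
    (hle : ∀ K μ, tot (fun b => min (b.sz μ) K) l ≤ tot (fun b => min (b.sz μ) K) l')
    (hsz : ∀ μ, tot (Blk.sz μ) l ≤ tot (Blk.sz μ) l') {μ : ℂ}
    (hμ : tot (Blk.sz μ) l < tot (Blk.sz μ) l') : Prog l l' := by
  classical
  have hS : tot Blk.mL l' < tot Blk.mL l := by
    have h1 : tot Blk.sE l < tot Blk.sE l' := by
      rw [tot_sE_eq_sum (S := insert μ (evs l ∪ evs l')) (by grind),
        tot_sE_eq_sum (S := insert μ (evs l ∪ evs l')) (by grind)]
      exact Finset.sum_lt_sum (fun ν _ => hsz ν) ⟨μ, Finset.mem_insert_self _ _, hμ⟩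
    have := hd.size_eq
    simp only [skewSize] at this
    omega
  obtain ⟨m, hm, hm'⟩ := exists_bound Blk.mL l
  have h0 : m ≠ 0 := by
    rintro rfl
    have := tot_rL_mul_eq hm
    rw [tot_hL_zero] at this
    omega
  obtain ⟨b, hb, hbm⟩ := hm'.resolve_left h0
  obtain ⟨k, rfl⟩ := Nat.exists_eq_succ_of_ne_zero h0
  rw [Blk.exists_of_mL_eq hbm] at hb
  obtain ⟨e, he, he'⟩ := exists_bound (Blk.sz μ) l
  refine .of_L_E (μ := μ) hl hd hb he' (fun K hK => ?_) fun K hK => ?_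
  · have h1 := tot_rL_mul_eq (l := l) fun b hb => (hm b hb).trans hK
    have h2 := tot_rL_mul_le K l'
    rw [← hr] at h2
    omega
  · rw [← hr]
    suffices tot (fun b => min (b.sz μ) K) l < tot (fun b => min (b.sz μ) K) l' by omega
    have h1 := hle e μ
    rw [tot_min_eq_tot he] at h1
    rw [tot_min_eq_tot fun b hb => (he b hb).trans (by omega)]
    by_contra! h2
    by_cases h3 : ∀ b ∈ l', b.sz μ ≤ K
    · rw [tot_min_eq_tot h3] at h2
      omega
    · push Not at h3
      obtain ⟨b, hb, hbK⟩ := h3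
      have := tot_lt (l := l') (f := fun b => min (b.sz μ) e) (g := fun b => min (b.sz μ) K)
        (fun b _ => by omega) ⟨b, hb, by omega⟩
      omega

theorem Dom.prog_of_min_ne (hl : ∀ m, Blk.T m ∉ l) (hd : Dom l l')
    (hr : tot Blk.rL l = tot Blk.rL l')
    (hle : ∀ K μ, tot (fun b => min (b.sz μ) K) l ≤ tot (fun b => min (b.sz μ) K) l') {μ : ℂ}
    (hsz : tot (Blk.sz μ) l = tot (Blk.sz μ) l') {i : ℕ}
    (hi : tot (fun b => min (b.sz μ) i) l ≠ tot (fun b => min (b.sz μ) i) l') : Prog l l' := by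
  obtain ⟨s, t, hs, ht, es, et, hst⟩ := exists_strict_interval (fun K => hle K μ)
    (by rw [tot_min_zero, tot_min_zero]) (B := tot Blk.sE l + tot Blk.sE l')
    (fun K hK => by rw [tot_min_eq_of_sE_le (by omega), tot_min_eq_of_sE_le (by omega), hsz]) hi
  obtain ⟨d, rfl⟩ : ∃ d, t = s + (d + 1) + 1 := ⟨t - s - 2, by omega⟩
  obtain ⟨b, hb, hbt⟩ : ∃ b ∈ l, b.sz μ = s + (d + 1) + 1 := by
    refine exists_of_tot_min_lt ?_
    have h1 := tot_min_concave l' μ (s + (d + 1))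
    have h2 := hst (s + (d + 1)) (by omega) (by omega)
    have h3 := hle (s + (d + 1) + 2) μ
    omega
  obtain ⟨c', hc'⟩ := exists_perm_cons hb
  obtain ⟨c, hc⟩ : ∃ c, c'.Perm (eb s μ ++ c) := by
    refine exists_perm_eb ?_
    rcases Nat.eq_zero_or_pos s with h0 | h0
    · exact .inl h0
    obtain ⟨u, rfl⟩ := Nat.exists_eq_succ_of_ne_zero h0.ne'
    obtain ⟨b', hb', h⟩ : ∃ b ∈ l, b.sz μ = u + 1 := by
      refine exists_of_tot_min_lt ?_
      have h1 := tot_min_concave l' μ u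
      have h2 := hst (u + 2) (by omega) (by omega)
      have h3 := hle u μ
      simp only [Nat.succ_eq_add_one] at *
      omega
    rcases List.mem_cons.1 (hc'.mem_iff.1 hb') with rfl | hb'
    · omega
    · exact .inr ⟨b', hb', h⟩
  refine .of_E_E (b := s) (s := d + 1) (μ := μ) (c := c) hl hd (by omega) ?_ fun K h1 h2 => ?_
  · rw [Blk.exists_of_sz_eq hbt] at hc'
    exact hc'.trans (hc.cons _)
  · have := hst K h1 h2
    rw [← hr]
    omega

theorem Dom.prog_of_hL_ne (hl : ∀ m, Blk.T m ∉ l) (hd : Dom l l')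
    (hr : tot Blk.rL l = tot Blk.rL l') (hS : tot Blk.mL l = tot Blk.mL l') {i : ℕ}
    (hi : tot (Blk.hL i) l ≠ tot (Blk.hL i) l') : Prog l l' := by
  obtain ⟨s, t, hs, ht, es, et, hst⟩ := exists_strict_interval hd.le_hL
    (by rw [tot_hL_zero, tot_hL_zero]) (B := tot Blk.mL l + tot Blk.mL l')
    (fun K hK => by
      have h1 := tot_rL_mul_eq (l := l) (K := K) fun b hb =>
        (le_tot_of_mem (f := Blk.mL) hb).trans (by omega)
      have h2 := tot_rL_mul_eq (l := l') (K := K) fun b hb =>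
        (le_tot_of_mem (f := Blk.mL) hb).trans (by omega)
      rw [← hr] at h2
      omega) hi
  obtain ⟨d, rfl⟩ : ∃ d, t = s + d + 2 := ⟨t - s - 2, by omega⟩
  have h1 := tot_hL_convex l' s d
  have h2 := hst (s + 1) (by omega) (by omega)
  have h3 := hst (s + d + 1) (by omega) (by omega)
  obtain ⟨k, hk1, hk2, hk⟩ := exists_of_tot_hL_lt (l := l) (s := s) (d := d) (by omega)
  obtain ⟨c', hc'⟩ := exists_perm_cons hk
  have hf : ∀ K, tot (Blk.hL K) l = (K - k) + tot (Blk.hL K) c' := fun K => by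
    rw [tot_perm hc']
    rfl
  have e1 := hf s
  have e2 := hf (s + 1)
  have e3 := hf (s + d + 1)
  have e4 := hf (s + d + 2)
  obtain ⟨j, hj1, hj2, hj⟩ := exists_of_tot_hL_lt (l := c') (s := s) (d := d) (by omega)
  obtain ⟨c, hc⟩ := exists_perm_cons hj
  have hp := hc'.trans (hc.cons _)
  rcases le_total j k with h | h
  · obtain ⟨v, rfl⟩ : ∃ v, j = v + 1 := ⟨j - 1, by omega⟩
    exact .of_L_L (c := c) hl hd h (hp.trans (.swap _ _ _)) fun K _ _ =>
      hst K (by omega) (by omega)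
  · obtain ⟨v, rfl⟩ : ∃ v, k = v + 1 := ⟨k - 1, by omega⟩
    exact .of_L_L (c := c) hl hd h hp fun K _ _ => hst K (by omega) (by omega)

theorem tot_hE_eq (hl : ∀ m, Blk.T m ∉ l) (K : ℕ) (μ : ℂ) :
    tot (Blk.hE K μ) l = K * tot Blk.rL l + tot (fun b => min (b.sz μ) K) l := by
  rw [← tot_mul, ← tot_add]
  refine tot_congr fun b hb => ?_
  cases b with
  | T m => exact absurd hb (hl m)
  | L m => simp [Blk.hE]
  | E k ν =>
    simp only [Blk.hE, Blk.rL, Blk.sz]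
    split_ifs <;> simp

theorem tot_hL_dual (hl : ∀ m, Blk.T m ∉ l) (K : ℕ) : tot (Blk.hL K) (l.map Blk.dual) = 0 := by
  induction l with
  | nil => rfl
  | cons b l ih =>
    rw [List.map_cons, tot_cons, ih fun m hm => hl m (.tail _ hm)]
    cases b with
    | T m => exact absurd (.head _) (hl m)
    | _ => rfl

theorem Dom.prog (hl : ∀ m, Blk.T m ∉ l) (hl' : ∀ m, Blk.T m ∉ l') (hd : Dom l l')
    (hne : ¬ l.Perm l') : Prog l l' := by
  rcases hd.rL_le.lt_or_eq with hr | hr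
  · obtain ⟨m, hm, hm'⟩ := exists_bound Blk.mL l
    by_cases h : ∃ K ≥ m, tot (Blk.hL K) l = tot (Blk.hL K) l'
    · obtain ⟨K, hK, h⟩ := h
      exact hd.prog_of_rL_lt_of_eq hl hr hm hK h
    · push Not at h
      exact hd.prog_of_rL_lt_of_ne hl hr hm hm' h
  have hle : ∀ K μ, tot (fun b => min (b.sz μ) K) l ≤ tot (fun b => min (b.sz μ) K) l' :=
    fun K μ => by
      have := hd.le_hE K μ
      rw [← hr] at this
      omega
  have hsz : ∀ μ, tot (Blk.sz μ) l ≤ tot (Blk.sz μ) l' := fun μ => by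
    rw [← tot_min_eq_of_sE_le (K := tot Blk.sE l + tot Blk.sE l') (by omega),
      ← tot_min_eq_of_sE_le (l := l') (K := tot Blk.sE l + tot Blk.sE l') (by omega)]
    exact hle _ _
  by_cases hA : ∀ μ, tot (Blk.sz μ) l = tot (Blk.sz μ) l'
  swap
  · push Not at hA
    obtain ⟨μ, hμ⟩ := hA
    exact hd.prog_of_sz_lt hl hr hle hsz ((hsz μ).lt_of_ne hμ)
  by_cases hB : ∀ K μ, tot (fun b => min (b.sz μ) K) l = tot (fun b => min (b.sz μ) K) l'
  swap
  · push Not at hB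
    obtain ⟨K, μ, h⟩ := hB
    exact hd.prog_of_min_ne hl hr hle (hA μ) h
  have hS : tot Blk.mL l = tot Blk.mL l' := by
    classical
    have h1 : tot Blk.sE l = tot Blk.sE l' := by
      rw [tot_sE_eq_sum (S := evs l ∪ evs l') Finset.subset_union_left,
        tot_sE_eq_sum (S := evs l ∪ evs l') Finset.subset_union_right]
      exact Finset.sum_congr rfl fun μ _ => hA μ
    have := hd.size_eq
    simp only [skewSize] at this
    omega
  by_cases hC : ∀ K, tot (Blk.hL K) l = tot (Blk.hL K) l'
  · refine absurd (perm_of_sum_eq hC (fun K => ?_) fun K μ => ?_) hne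
    · exact (tot_hL_dual hl K).trans (tot_hL_dual hl' K).symm
    · exact (tot_hE_eq hl K μ).trans (.trans (by rw [hr, hB]) (tot_hE_eq hl' K μ).symm)
  · push Not at hC
    obtain ⟨K, h⟩ := hC
    exact hd.prog_of_hL_ne hl hr hS h

end Step

section Orbits

variable {m n p q : ℕ}

theorem StrictEquiv.trans {P Q R : Pencil m n} (h : StrictEquiv P Q) (h' : StrictEquiv Q R) :
    StrictEquiv P R :=
  strictEquiv_iff.2 ((strictEquiv_iff.1 h).trans (strictEquiv_iff.1 h'))

theorem StrictEquiv.refl (P : Pencil m n) : StrictEquiv P P := strictEquiv_iff.2 (.refl _)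

theorem Congruent.refl (P : Pencil n n) : Congruent P P := ⟨1, isUnit_one, by simp, by simp⟩

theorem Congruent.trans {P Q R : Pencil n n} (h : Congruent P Q) (h' : Congruent Q R) :
    Congruent P R := by
  obtain ⟨S, hS, h1, h2⟩ := h
  obtain ⟨T, hT, k1, k2⟩ := h'
  refine ⟨S * T, hS.mul hT, ?_, ?_⟩
  · rw [← k1, ← h1, transpose_mul]
    simp only [Matrix.mul_assoc]
  · rw [← k2, ← h2, transpose_mul]
    simp only [Matrix.mul_assoc]

theorem orbC_subset_closure {P Q : Pencil n n} (h : Q ∈ closure (orbC P)) :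
    orbC Q ⊆ closure (orbC P) := by
  rintro R ⟨S, hS, h1, h2⟩
  have hc : Continuous fun X : Pencil n n => ((Sᵀ * X.1 * S, Sᵀ * X.2 * S) : Pencil n n) := by
    fun_prop
  have hR := map_mem_closure (t := orbC P) hc h fun X hX => Congruent.trans hX ⟨S, hS, rfl, rfl⟩
  rwa [h1, h2] at hR

theorem orbE_subset_closure {P Q : Pencil m n} (h : Q ∈ closure (orbE P)) :
    orbE Q ⊆ closure (orbE P) := by
  rintro R ⟨S, T, hS, hT, h1, h2⟩
  have hc : Continuous fun X : Pencil m n => ((S⁻¹ * X.1 * T, S⁻¹ * X.2 * T) : Pencil m n) := by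
    fun_prop
  have hR := map_mem_closure (t := orbE P) hc h fun X hX =>
    StrictEquiv.trans hX ⟨S, T, hS, hT, rfl, rfl⟩
  rwa [h1, h2] at hR

theorem mem_closure_orbC_trans {P Q R : Pencil n n} (h : Q ∈ closure (orbC P))
    (h' : R ∈ closure (orbC Q)) : R ∈ closure (orbC P) :=
  closure_minimal (orbC_subset_closure h) isClosed_closure h'

theorem hdim_le_of_mem_closure_orbE {P Q : Pencil m n} (h : Q ∈ closure (orbE P)) {a b : ℕ}
    (X : Pencil a b) : hdim X (lin P) ≤ hdim X (lin Q) :=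
  closure_minimal (fun _ hR => ((strictEquiv_iff.1 hR).hdim_eq X).le)
    (isClosed_le_hdim X (hdim X (lin P))) h

theorem hdim_le_of_mem_closure_orbC {P Q : Pencil n n} (h : Q ∈ closure (orbC P)) {a b : ℕ}
    (X : Pencil a b) : hdim X (lin P) ≤ hdim X (lin Q) :=
  closure_minimal (fun _ hR => ((Congruent.lIso hR).hdim_eq X).le)
    (isClosed_le_hdim X (hdim X (lin P))) h

theorem tr_mem_closure_orbE {P Q : Pencil m n} (h : Q ∈ closure (orbE P)) :
    (tr Q : Pencil n m) ∈ closure (orbE (tr P : Pencil n m)) := by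
  have hc : Continuous fun X : Pencil m n => (tr X : Pencil n m) := by
    unfold tr
    fun_prop
  exact map_mem_closure hc h fun X hX => strictEquiv_iff.2 (strictEquiv_iff.1 hX).tr

/-- The skew-symmetric pencil with off-diagonal part `W`. -/
def offdiag (W : Pencil p q) : Pencil (p + q) (p + q) := (skewPair W.1, skewPair W.2)

theorem isSkew_offdiag (W : Pencil p q) : IsSkew (offdiag W) := by
  have h : ∀ A : Matrix (Fin p) (Fin q) ℂ, (skewPair A)ᵀ = -skewPair A := fun A => by
    unfold skewPair
    rw [transpose_submatrix, fromBlocks_transpose]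
    change _ = (-fromBlocks 0 A (-Aᵀ) 0).submatrix _ _
    simp [fromBlocks_neg]
  exact ⟨h _, h _⟩

theorem continuous_offdiag : Continuous (offdiag : Pencil p q → _) := by
  have h : Continuous (skewPair : Matrix (Fin p) (Fin q) ℂ → _) :=
    (continuous_const.matrix_fromBlocks continuous_id continuous_id.matrix_transpose.neg
      continuous_const).matrix_submatrix _ _
  exact (h.comp continuous_fst).prodMk (h.comp continuous_snd)

theorem LIso.offdiag_congr {p' q' : ℕ} {W : Pencil p q} {W' : Pencil p' q'}
    (h : LIso (lin W) (lin W')) : LIso (lin (offdiag W)) (lin (offdiag W')) :=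
  (LIso.lin_skewPair W).trans ((h.sum_congr h.tr).trans (LIso.lin_skewPair W').symm)

theorem offdiag_mem_closure {W W' : Pencil p q} (h : W' ∈ closure (orbE W)) :
    offdiag W' ∈ closure (orbC (offdiag W)) :=
  map_mem_closure continuous_offdiag h fun _ hX =>
    congruent_of_lIso (isSkew_offdiag _) (isSkew_offdiag _) (strictEquiv_iff.1 hX).offdiag_congr

theorem FinReg.of_offdiag {W : Pencil p q} (h : FinReg (lin (offdiag W))) : FinReg (lin W) := by
  have key : ∀ X : Pencil 1 1, hdim X (lin (Pencil.tr W)) + q = hdim X (lin W) + p := by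
    intro X
    have h1 := hdim_add_rank X W
    have h2 := hdim_add_rank X (Pencil.tr W)
    rw [← rank_transpose] at h1
    simp only [transpose_sub, transpose_smul] at h1
    simp only [Pencil.tr] at h2 ⊢
    omega
  have h := (LIso.lin_skewPair W).finReg h
  unfold FinReg at *
  filter_upwards [h] with μ hμ
  rw [hdim_sum, hdim_sum] at hμ
  have h1 := key (EInfblk 1)
  have h2 := key (Eblk 1 μ)
  omega

theorem lIso_of_mem_closure {W W' : Pencil p q} (hW : FinReg (lin (offdiag W)))
    (hc : W' ∈ closure (orbE W)) (h : LIso (lin (offdiag W)) (lin (offdiag W'))) :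
    LIso (lin W) (lin W') := by
  have key : ∀ {a b : ℕ} (X : Pencil a b), hdim X (lin W) = hdim X (lin W') ∧
      hdim X (lin (tr W)) = hdim X (lin (tr W')) := fun X => by
    have h1 := hdim_le_of_mem_closure_orbE hc X
    have h2 := hdim_le_of_mem_closure_orbE (tr_mem_closure_orbE hc) X
    have h3 := ((LIso.lin_skewPair W).symm.trans (h.trans (LIso.lin_skewPair W'))).hdim_eq X
    rw [hdim_sum, hdim_sum] at h3
    omega
  exact lIso_of_hdim_eq hW.of_offdiag (h.finReg hW).of_offdiag (fun _ => (key _).1)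
    (fun _ => (key _).2) fun _ _ => (key _).1

theorem LIso.dim_eq {m' n' : ℕ} {P : Pencil m n} {Q : Pencil m' n'} (h : LIso (lin P) (lin Q)) :
    n = n' := by
  obtain ⟨e, -⟩ := h
  simpa using e.finrank_eq

end Orbits

section Lists

variable {l l' : List Blk} {n : ℕ}

theorem colsSum_eq_tot (l : List Blk) : colsSum l = tot Blk.cols l := by
  induction l with
  | nil => rfl
  | cons b l ih => rw [colsSum, ih, tot_cons]

theorem tot_map_dual (f : Blk → ℕ) (l : List Blk) :
    tot f (l.map Blk.dual) = tot (fun b => f b.dual) l := by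
  simp [tot, Function.comp_def]

theorem skewSize_eq (hl : ∀ m, Blk.T m ∉ l) {P : Pencil n n}
    (h : LIso (lin P) (lin (kcf (l ++ l.map Blk.dual)))) : skewSize l = n := by
  obtain ⟨e, -⟩ := h
  have h1 := e.finrank_eq
  rw [Module.finrank_fin_fun, Module.finrank_fin_fun, colsSum_eq_tot, tot_append, tot_map_dual,
    ← tot_add] at h1
  rw [h1, skewSize, ← tot_mul, ← tot_mul, ← tot_add, ← tot_add]
  refine tot_congr fun b hb => ?_
  cases b with
  | T m => exact absurd hb (hl m)
  | L m => simp [Blk.cols, Blk.dual]; omega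
  | E k ν => simp [Blk.cols, Blk.dual, Blk.sE, Blk.mL, Blk.rL]; omega

theorem hdim_Lblk_eq (hl : ∀ m, Blk.T m ∉ l) {P : Pencil n n}
    (h : LIso (lin P) (lin (kcf (l ++ l.map Blk.dual)))) (K : ℕ) :
    hdim (Lblk K) (lin P) = tot (Blk.hL K) l := by
  rw [h.hdim_eq, hdim_Lblk_kcf]
  change tot _ _ = _
  rw [tot_append, tot_hL_dual hl, add_zero]

theorem hdim_Eblk_eq (hl : ∀ m, Blk.T m ∉ l) {P : Pencil n n}
    (h : LIso (lin P) (lin (kcf (l ++ l.map Blk.dual)))) (K : ℕ) (μ : ℂ) :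
    hdim (Eblk K μ) (lin P) =
      tot Blk.rL l * K + 2 * tot (fun b => min (b.sz μ) K) l := by
  have h1 : tot (Blk.hE K μ) (l.map Blk.dual) = tot (fun b => min (b.sz μ) K) l := by
    rw [tot_map_dual]
    refine tot_congr fun b hb => ?_
    cases b with
    | T m => exact absurd hb (hl m)
    | L m => simp [Blk.dual, Blk.hE]
    | E k ν =>
      simp only [Blk.dual, Blk.hE, Blk.sz]
      split_ifs <;> simp
  rw [h.hdim_eq, hdim_Eblk_kcf]
  change tot _ _ = _
  rw [tot_append, h1, tot_hE_eq hl]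
  ring

theorem Dom.of_hdim_le (hl : ∀ m, Blk.T m ∉ l) (hl' : ∀ m, Blk.T m ∉ l') {P Q : Pencil n n}
    (hP : LIso (lin P) (lin (kcf (l ++ l.map Blk.dual))))
    (hQ : LIso (lin Q) (lin (kcf (l' ++ l'.map Blk.dual))))
    (h : ∀ {a b : ℕ} (X : Pencil a b), hdim X (lin P) ≤ hdim X (lin Q)) : Dom l l' where
  le_hL K := by
    rw [← hdim_Lblk_eq hl hP, ← hdim_Lblk_eq hl' hQ]
    exact h _
  le_hE K μ := by
    rw [← hdim_Eblk_eq hl hP, ← hdim_Eblk_eq hl' hQ]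
    exact h _
  size_eq := by rw [skewSize_eq hl hP, skewSize_eq hl' hQ]

theorem Dom.antisymm (hl : ∀ m, Blk.T m ∉ l) (hl' : ∀ m, Blk.T m ∉ l') (h : Dom l l')
    (h' : Dom l' l) : l.Perm l' := by
  have hr := le_antisymm h.rL_le h'.rL_le
  refine perm_of_sum_eq (fun K => le_antisymm (h.le_hL K) (h'.le_hL K)) (fun K => ?_) fun K μ => ?_
  · exact (tot_hL_dual hl K).trans (tot_hL_dual hl' K).symm
  · refine (tot_hE_eq hl K μ).trans (.trans ?_ (tot_hE_eq hl' K μ).symm)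
    have h1 := h.le_hE K μ
    have h2 := h'.le_hE K μ
    rw [hr] at h1 h2 ⊢
    omega

theorem Step.exists_offdiag {k : List Blk} (h : Step l k) {P : Pencil n n}
    (hP : LIso (lin P) (lin (kcf (l ++ l.map Blk.dual)))) :
    ∃ (p q : ℕ) (_ : p + q = n) (W W' : Pencil p q), W' ∈ closure (orbE W) ∧
      LIso (lin P) (lin (offdiag W)) ∧
        LIso (lin (offdiag W')) (lin (kcf (k ++ k.map Blk.dual))) := by
  obtain ⟨k', ⟨p, q, W, W', h1, h2, h3⟩, hk⟩ := h
  have hPW := hP.trans ((lin_skewPair_kcf l).symm.trans h1.offdiag_congr)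
  exact ⟨p, q, hPW.dim_eq.symm, W, W', h3, hPW,
    h2.offdiag_congr.trans ((lin_skewPair_kcf k').trans (kcf_perm hk))⟩

theorem Step.exists_isSkew {k : List Blk} (h : Step l k) {P : Pencil n n} (hs : IsSkew P)
    (hP : LIso (lin P) (lin (kcf (l ++ l.map Blk.dual)))) :
    ∃ Q : Pencil n n, IsSkew Q ∧ Q ∈ closure (orbC P) ∧
      LIso (lin Q) (lin (kcf (k ++ k.map Blk.dual))) := by
  obtain ⟨p, q, rfl, W, W', h1, h2, h3⟩ := h.exists_offdiag hP
  refine ⟨offdiag W', isSkew_offdiag _, ?_, h3⟩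
  exact mem_closure_orbC_trans
    (subset_closure (congruent_of_lIso hs (isSkew_offdiag _) h2)) (offdiag_mem_closure h1)

theorem Dom.mem_closure (hl' : ∀ m, Blk.T m ∉ l') {Q : Pencil n n} (hQs : IsSkew Q)
    (hQ : LIso (lin Q) (lin (kcf (l' ++ l'.map Blk.dual)))) (l : List Blk)
    (hl : ∀ m, Blk.T m ∉ l) (hd : Dom l l') (P : Pencil n n) (hPs : IsSkew P)
    (hP : LIso (lin P) (lin (kcf (l ++ l.map Blk.dual)))) : Q ∈ closure (orbC P) := by
  generalize ha : ∑ K ∈ Finset.range (skewSize l' + 1),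
    (tot (Blk.hL K) l' - tot (Blk.hL K) l) = a
  generalize hb : tot (fun b => b.sE ^ 2) l = b
  induction a using Nat.strong_induction_on generalizing b l P with
  | _ a iha =>
  induction b using Nat.strong_induction_on generalizing l P with
  | _ b ihb =>
  by_cases hne : l.Perm l'
  · refine subset_closure (congruent_of_lIso hPs hQs (hP.trans (.trans (kcf_perm ?_) hQ.symm)))
    exact hne.append (hne.map _)
  obtain ⟨k, hk, hstep, hdk, hle, hdec⟩ := hd.prog hl hl' hne
  obtain ⟨R, hRs, hRc, hR⟩ := hstep.exists_isSkew hPs hP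
  refine mem_closure_orbC_trans hRc ?_
  have hle' : ∀ K ∈ Finset.range (skewSize l' + 1), tot (Blk.hL K) l' - tot (Blk.hL K) k ≤
      tot (Blk.hL K) l' - tot (Blk.hL K) l := fun K _ => Nat.sub_le_sub_left (hle K) _
  rcases (Finset.sum_le_sum hle').lt_or_eq with hlt | heq
  · exact iha _ (ha ▸ hlt) k hk hdk R hRs hR rfl _ rfl
  · rcases hdec with ⟨K, hK, hlt⟩ | hlt
    · refine absurd heq (Finset.sum_lt_sum hle' ⟨K, ?_, ?_⟩).ne
      · rw [Finset.mem_range, ← hd.size_eq]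
        omega
      · have := hdk.le_hL K
        omega
    · exact ihb _ (hb ▸ hlt) k hk hdk R hRs hR (heq.trans ha) rfl

end Lists

variable {m n p q : ℕ}

theorem Congruent.symm {P Q : Pencil n n} (h : Congruent P Q) : Congruent Q P := by
  obtain ⟨S, hS, h1, h2⟩ := h
  have hd := (isUnit_iff_isUnit_det S).1 hS
  have hd' : IsUnit (Sᵀ).det := by rwa [det_transpose]
  have key : ∀ A B : Matrix (Fin n) (Fin n) ℂ, Sᵀ * A * S = B → (S⁻¹)ᵀ * B * S⁻¹ = A := by
    rintro A _ rfl
    rw [transpose_nonsing_inv, Matrix.mul_assoc Sᵀ, nonsing_inv_mul_cancel_left _ _ hd',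
      mul_nonsing_inv_cancel_right _ _ hd]
  exact ⟨S⁻¹, (isUnit_nonsing_inv_iff).2 hS, key _ _ h1, key _ _ h2⟩

theorem coversE_of_coversC {P1 P2 : Pencil (p + q) (p + q)} (h1 : IsSkew P1) (h2 : IsSkew P2)
    (hreg : FinReg (lin P1)) (hreg2 : FinReg (lin P2)) (hcov : CoversC P1 P2) {W1 W2 : Pencil p q}
    (hc : W2 ∈ closure (orbE W1)) (hW1 : LIso (lin P1) (lin (offdiag W1)))
    (hW2 : LIso (lin P2) (lin (offdiag W2))) : CoversE W1 W2 := by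
  obtain ⟨hne, -, hno⟩ := hcov
  have hP1 := congruent_of_lIso h1 (isSkew_offdiag _) hW1
  have hP2 := congruent_of_lIso (isSkew_offdiag _) h2 hW2.symm
  refine ⟨fun h => hne (congruent_of_lIso h1 h2 (hW1.trans
    ((strictEquiv_iff.1 h).offdiag_congr.trans hW2.symm))), orbE_subset_closure hc, ?_⟩
  rintro ⟨W, hn1, hn2, hc1, hc2⟩
  have hc1' : W ∈ closure (orbE W1) := hc1 (.refl W)
  have hc2' : W2 ∈ closure (orbE W) := hc2 (.refl W2)
  refine hno ⟨offdiag W, isSkew_offdiag W, fun h => hn1 ?_, fun h => hn2 ?_, ?_, ?_⟩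
  · exact strictEquiv_iff.2 (lIso_of_mem_closure (hW1.finReg hreg) hc1'
      (hW1.symm.trans h.lIso.symm)).symm
  · exact strictEquiv_iff.2 (lIso_of_mem_closure (h.lIso.symm.finReg hreg2) hc2'
      (h.lIso.trans hW2))
  · exact orbC_subset_closure (mem_closure_orbC_trans (subset_closure hP1)
      (offdiag_mem_closure hc1'))
  · exact orbC_subset_closure (mem_closure_orbC_trans (offdiag_mem_closure hc2')
      (subset_closure hP2))

theorem exists_coversE_of_finReg {P1 P2 : Pencil n n} (h1 : IsSkew P1) (h2 : IsSkew P2)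
    (hreg : FinReg (lin P1)) (hreg2 : FinReg (lin P2)) (hcov : CoversC P1 P2) :
    ∃ (p q : ℕ) (hpq : p + q = n) (W1 W2 : Pencil p q),
      Congruent P1 (Pencil.cast hpq hpq (offdiag W1)) ∧
        Congruent P2 (Pencil.cast hpq hpq (offdiag W2)) ∧ CoversE W1 W2 := by
  obtain ⟨l1, hl1, e1⟩ := h1.exists_skewPair hreg
  obtain ⟨l2, hl2, e2⟩ := h2.exists_skewPair hreg2
  have hd : Dom l1 l2 := .of_hdim_le hl1 hl2 e1 e2
    (hdim_le_of_mem_closure_orbC (hcov.2.1 (.refl P2)))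
  have hne : ¬ l1.Perm l2 := fun h => hcov.1 (congruent_of_lIso h1 h2
    (e1.trans ((kcf_perm (h.append (h.map _))).trans e2.symm)))
  obtain ⟨k, hk, hstep, hdk, -, hdec⟩ := hd.prog hl1 hl2 hne
  obtain ⟨p, q, rfl, W1, W2, hc, hW1, hW2⟩ := hstep.exists_offdiag e1
  have hP1 := congruent_of_lIso h1 (isSkew_offdiag _) hW1
  have hc1 : offdiag W2 ∈ closure (orbC P1) :=
    mem_closure_orbC_trans (subset_closure hP1) (offdiag_mem_closure hc)
  have hc2 : P2 ∈ closure (orbC (offdiag W2)) :=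
    hdk.mem_closure hl2 h2 e2 k hk _ (isSkew_offdiag _) hW2
  have hn1 : ¬ Congruent (offdiag W2) P1 := fun h => by
    have hperm : l1.Perm k := by
      have h' := h.lIso
      refine Dom.antisymm hl1 hk (.of_hdim_le hl1 hk e1 hW2 fun X => (h'.hdim_eq X).ge)
        (.of_hdim_le hk hl1 hW2 e1 fun X => (h'.hdim_eq X).le)
    rcases hdec with ⟨K, -, h⟩ | h
    · exact h.ne (tot_perm hperm)
    · exact h.ne (tot_perm hperm).symm
  have hP2 : Congruent (offdiag W2) P2 := by
    by_contra hn2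
    exact hcov.2.2 ⟨offdiag W2, isSkew_offdiag W2, hn1, hn2, orbC_subset_closure hc1,
      orbC_subset_closure hc2⟩
  exact ⟨p, q, rfl, W1, W2, hP1, hP2.symm,
    coversE_of_coversC h1 h2 hreg hreg2 hcov hc hW1 hP2.symm.lIso⟩

/-- The pencil obtained from `A - λB` by replacing `B` with `B + cA`. -/
def shear (c : ℂ) (P : Pencil m n) : Pencil m n := (P.1, P.2 + c • P.1)

theorem shear_shear (c d : ℂ) (P : Pencil m n) : shear c (shear d P) = shear (d + c) P := by
  simp [shear, add_smul, add_assoc]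

theorem shear_zero (P : Pencil m n) : shear 0 P = P := by simp [shear]

theorem shear_neg_shear (c : ℂ) (P : Pencil m n) : shear (-c) (shear c P) = P := by
  rw [shear_shear, add_neg_cancel, shear_zero]

theorem shear_shear_neg (c : ℂ) (P : Pencil m n) : shear c (shear (-c) P) = P := by
  rw [shear_shear, neg_add_cancel, shear_zero]

theorem continuous_shear (c : ℂ) : Continuous (shear c : Pencil m n → Pencil m n) := by
  unfold shear
  fun_prop

theorem StrictEquiv.shear {P Q : Pencil m n} (h : StrictEquiv P Q) (c : ℂ) :
    StrictEquiv (shear c P) (shear c Q) := by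
  obtain ⟨S, R, hS, hR, h1, h2⟩ := h
  exact ⟨S, R, hS, hR, h1, by simp [Pencil.shear, ← h1, ← h2, Matrix.mul_add, Matrix.add_mul]⟩

theorem Congruent.shear {P Q : Pencil n n} (h : Congruent P Q) (c : ℂ) :
    Congruent (shear c P) (shear c Q) := by
  obtain ⟨S, hS, h1, h2⟩ := h
  exact ⟨S, hS, h1, by simp [Pencil.shear, ← h1, ← h2, Matrix.mul_add, Matrix.add_mul]⟩

theorem strictEquiv_shear_iff {P Q : Pencil m n} (c : ℂ) :
    StrictEquiv (shear c P) (shear c Q) ↔ StrictEquiv P Q :=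
  ⟨fun h => by simpa only [shear_neg_shear] using h.shear (-c), fun h => h.shear c⟩

theorem congruent_shear_iff {P Q : Pencil n n} (c : ℂ) :
    Congruent (shear c P) (shear c Q) ↔ Congruent P Q :=
  ⟨fun h => by simpa only [shear_neg_shear] using h.shear (-c), fun h => h.shear c⟩

theorem IsSkew.shear {P : Pencil n n} (h : IsSkew P) (c : ℂ) : IsSkew (shear c P) :=
  ⟨h.1, by simp [Pencil.shear, h.1, h.2, add_comm]⟩

theorem orbE_subset_shear {P Q : Pencil m n} (h : orbE Q ⊆ closure (orbE P)) (c : ℂ) :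
    orbE (shear c Q) ⊆ closure (orbE (shear c P)) :=
  orbE_subset_closure (map_mem_closure (continuous_shear c) (h (.refl Q)) fun _ hX => hX.shear c)

theorem orbC_subset_shear {P Q : Pencil n n} (h : orbC Q ⊆ closure (orbC P)) (c : ℂ) :
    orbC (shear c Q) ⊆ closure (orbC (shear c P)) :=
  orbC_subset_closure (map_mem_closure (continuous_shear c) (h (.refl Q)) fun _ hX => hX.shear c)

theorem CoversC.shear {P Q : Pencil n n} (h : CoversC P Q) (c : ℂ) :
    CoversC (shear c P) (shear c Q) := by
  obtain ⟨h1, h2, h3⟩ := h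
  refine ⟨mt (congruent_shear_iff c).1 h1, orbC_subset_shear h2 c, ?_⟩
  rintro ⟨X, hX, k1, k2, k3, k4⟩
  refine h3 ⟨Pencil.shear (-c) X, hX.shear _, fun h => k1 ?_, fun h => k2 ?_, ?_, ?_⟩
  · simpa only [shear_shear_neg] using h.shear c
  · simpa only [shear_shear_neg] using h.shear c
  · simpa only [shear_neg_shear] using orbC_subset_shear k3 (-c)
  · simpa only [shear_neg_shear] using orbC_subset_shear k4 (-c)

theorem CoversE.shear {P Q : Pencil m n} (h : CoversE P Q) (c : ℂ) :
    CoversE (shear c P) (shear c Q) := by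
  obtain ⟨h1, h2, h3⟩ := h
  refine ⟨mt (strictEquiv_shear_iff c).1 h1, orbE_subset_shear h2 c, ?_⟩
  rintro ⟨X, k1, k2, k3, k4⟩
  refine h3 ⟨Pencil.shear (-c) X, fun h => k1 ?_, fun h => k2 ?_, ?_, ?_⟩
  · simpa only [shear_shear_neg] using h.shear c
  · simpa only [shear_shear_neg] using h.shear c
  · simpa only [shear_neg_shear] using orbE_subset_shear k3 (-c)
  · simpa only [shear_neg_shear] using orbE_subset_shear k4 (-c)

theorem shear_cast_offdiag (hpq : p + q = n) (W : Pencil p q) (c : ℂ) :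
    shear c (Pencil.cast hpq hpq (offdiag W)) = Pencil.cast hpq hpq (offdiag (shear c W)) := by
  subst hpq
  refine Prod.ext rfl ?_
  ext i j
  simp only [shear, Pencil.cast, offdiag, skewPair, submatrix_apply, Matrix.add_apply,
    Matrix.smul_apply]
  rcases finSumFinEquiv.symm (finCongr (Eq.symm rfl) i) with a | a <;>
    rcases finSumFinEquiv.symm (finCongr (Eq.symm rfl) j) with b | b <;> simp [add_comm]

theorem eventually_rank_le (A B : Matrix (Fin n) (Fin n) ℂ) (c₀ : ℂ) :
    ∀ᶠ c : ℂ in Filter.cofinite, (B + c₀ • A).rank ≤ (B + c • A).rank := by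
  obtain ⟨V, U, e, -, -, h⟩ := exists_rank_normal_form (B + c₀ • A)
  let f := e.symm ∘ Sum.inl
  let D : Matrix (Fin (B + c₀ • A).rank) (Fin (B + c₀ • A).rank) (Polynomial ℂ) :=
    ((V * B * U).submatrix f f).map Polynomial.C +
      (Polynomial.X : Polynomial ℂ) • ((V * A * U).submatrix f f).map Polynomial.C
  have hD : ∀ c, D.det.eval c = ((V * (B + c • A) * U).submatrix f f).det := fun c => by
    rw [← Polynomial.coe_evalRingHom, RingHom.map_det]
    congr 1
    ext i j
    simp [D, Matrix.mul_add, Matrix.add_mul]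
    ring
  have h0 : D.det ≠ 0 := by
    intro h0
    have := hD c₀
    rw [h0, h, submatrix_submatrix] at this
    have hf : e ∘ f = Sum.inl := by ext; simp [f]
    rw [hf] at this
    change _ = det (1 : Matrix (Fin (B + c₀ • A).rank) (Fin (B + c₀ • A).rank) ℂ) at this
    simp at this
  rw [Filter.eventually_cofinite]
  refine (Polynomial.finite_setOfPred_isRoot h0).subset fun c hc => ?_
  by_contra hr
  refine hc ?_
  have hdet : ((V * (B + c • A) * U).submatrix f f).det ≠ 0 := fun h => hr ((hD c).trans h)
  have h1 := rank_of_det_ne_zero hdet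
  rw [Fintype.card_fin] at h1
  calc _ = _ := h1.symm
    _ ≤ _ := rank_submatrix_le _ _ _
    _ ≤ _ := rank_mul_le_left _ _
    _ ≤ _ := rank_mul_le_right _ _

theorem eventually_finReg_shear (P : Pencil n n) :
    ∀ᶠ c in Filter.cofinite, FinReg (lin (shear c P)) := by
  obtain ⟨c₀, hc₀⟩ : ∃ c₀ : ℂ, ∀ c : ℂ, (P.2 + c • P.1).rank ≤ (P.2 + c₀ • P.1).rank := by
    have hfin : (Set.range fun c : ℂ => (P.2 + c • P.1).rank).Finite :=
      (Set.finite_le_nat n).subset (by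
        rintro _ ⟨c, rfl⟩
        exact (rank_le_width _))
    obtain ⟨_, ⟨c₀, rfl⟩, h⟩ := hfin.exists_maximal (Set.range_nonempty _)
    exact ⟨c₀, fun c => (le_total _ _).elim id fun hle => h ⟨c, rfl⟩ hle⟩
  filter_upwards [eventually_rank_le P.1 P.2 c₀] with c hc
  filter_upwards [(Set.finite_singleton (0 : ℂ)).compl_mem_cofinite] with μ hμ
  have hμ : μ ≠ 0 := hμ
  have h1 := hdim_add_rank (Eblk 1 μ) (shear c P)
  have h2 := hdim_add_rank (EInfblk 1) (shear c P)
  have hrank : ∀ {a : ℂ} (M : Matrix (Fin n) (Fin n) ℂ), a ≠ 0 → (a • M).rank = M.rank :=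
    fun M ha => rank_smul_of_mem_nonZeroDivisors M (mem_nonZeroDivisors_of_ne_zero ha)
  have h4 : (-(P.2 + c • P.1)).rank = (P.2 + c • P.1).rank := by
    rw [← neg_one_smul ℂ, hrank _ (neg_ne_zero.2 one_ne_zero)]
  have h3 : (P.1 - μ • (P.2 + c • P.1)).rank ≤ (P.2 + c₀ • P.1).rank := by
    have : P.1 - μ • (P.2 + c • P.1) = (-μ) • (P.2 + (c - μ⁻¹) • P.1) := by
      rw [smul_add, smul_smul, smul_add, smul_smul, mul_sub, neg_mul, neg_mul, mul_inv_cancel₀ hμ]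
      module
    rw [this, hrank _ (neg_ne_zero.2 hμ)]
    exact hc₀ _
  simp only [Eblk, EInfblk, Jmat, of_apply, one_apply_eq, one_smul, if_true, zero_smul, shear,
    zero_sub, h4] at h1 h2 ⊢
  omega

theorem exists_coversE {P1 P2 : Pencil n n} (h1 : IsSkew P1) (h2 : IsSkew P2)
    (hcov : CoversC P1 P2) :
    ∃ (p q : ℕ) (hpq : p + q = n) (W1 W2 : Pencil p q),
      Congruent P1 (Pencil.cast hpq hpq (offdiag W1)) ∧
        Congruent P2 (Pencil.cast hpq hpq (offdiag W2)) ∧ CoversE W1 W2 := by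
  obtain ⟨c, hc1, hc2⟩ := ((eventually_finReg_shear P1).and (eventually_finReg_shear P2)).exists
  obtain ⟨p, q, hpq, W1, W2, k1, k2, k3⟩ :=
    exists_coversE_of_finReg (h1.shear c) (h2.shear c) hc1 hc2 (hcov.shear c)
  refine ⟨p, q, hpq, shear (-c) W1, shear (-c) W2, ?_, ?_, k3.shear _⟩
  · have := k1.shear (-c)
    rwa [shear_neg_shear, shear_cast_offdiag] at this
  · have := k2.shear (-c)
    rwa [shear_neg_shear, shear_cast_offdiag] at this

theorem isSkew_cast_offdiag (hpq : p + q = n) (W : Pencil p q) :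
    IsSkew (Pencil.cast hpq hpq (offdiag W)) := by
  subst hpq
  exact isSkew_offdiag W

theorem permMatrix_one_congr (P : Pencil n n) :
    ((permMatrix (1 : Equiv.Perm (Fin n)))ᵀ * P.1 * permMatrix 1,
      (permMatrix (1 : Equiv.Perm (Fin n)))ᵀ * P.2 * permMatrix 1) = P := by
  have h : permMatrix (1 : Equiv.Perm (Fin n)) = 1 := by
    ext i j
    by_cases h : i = j <;> simp [permMatrix, one_apply, h]
  simp [h]

end Pencil

/-- **Lemma 3.1**: if `orbᶜ P1` covers `orbᶜ P2` for skew-symmetric pencils,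
then (after replacing each `Pᵢ` by a congruent pencil `Pᵢ'`) the rows and
columns of `Pᵢ'` can be simultaneously permuted to the form
`[[0, Wᵢ], [-Wᵢᵀ, 0]]` with `p × q` pencils `Wᵢ` such that `orbᵉ W1` covers
`orbᵉ W2`. -/
theorem coversC_implies_coversE_of_offdiag_parts {n : ℕ} (P1 P2 : Pencil n n)
    (h1 : Pencil.IsSkew P1) (h2 : Pencil.IsSkew P2)
    (hcov : Pencil.CoversC P1 P2) :
    ∃ (p q : ℕ) (hpq : p + q = n) (W1 W2 : Pencil p q)
      (σ1 σ2 : Equiv.Perm (Fin n)) (P1' P2' : Pencil n n),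
      Pencil.IsSkew P1' ∧ Pencil.IsSkew P2' ∧
      Pencil.Congruent P1 P1' ∧ Pencil.Congruent P2 P2' ∧
      ((permMatrix σ1)ᵀ * P1'.1 * permMatrix σ1,
        (permMatrix σ1)ᵀ * P1'.2 * permMatrix σ1) =
        Pencil.cast hpq hpq (skewPair W1.1, skewPair W1.2) ∧
      ((permMatrix σ2)ᵀ * P2'.1 * permMatrix σ2,
        (permMatrix σ2)ᵀ * P2'.2 * permMatrix σ2) =
        Pencil.cast hpq hpq (skewPair W2.1, skewPair W2.2) ∧
      Pencil.CoversE W1 W2 := by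
  obtain ⟨p, q, hpq, W1, W2, k1, k2, k3⟩ := Pencil.exists_coversE h1 h2 hcov
  exact ⟨p, q, hpq, W1, W2, 1, 1, _, _, Pencil.isSkew_cast_offdiag hpq W1,
    Pencil.isSkew_cast_offdiag hpq W2, k1, k2, Pencil.permMatrix_one_congr _,
    Pencil.permMatrix_one_congr _, k3⟩
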